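/- arXiv:1707.02916 — 7 statements merged into one kernel-verified Lean document; each statement's English description precedes it below -/
import Mathlib

section
/- Let δ > 0, let ℓ ≥ 1, and let r₁,…,r_ℓ and s₁,…,s_ℓ be non-negative integers with r_i ≥ s_i for each i. Let r = |E(K(r₁,…,r_ℓ))| and s = |E(K(s₁,…,s_ℓ))|. Then there exists ρ > 0 and n₀ such that for every d ∈ (0,1] and every (ρ,d)-dense graph G with at least n₀ vertices, t_{K(r₁,…,r_ℓ)}(G) ≥ (d^{r−s} − δ) · t_{K(s₁,…,s_ℓ)}(G). -/
open MeasureTheory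

/-- The homomorphism density `t_H(G)`. -/
noncomputable def homDensity {α β : Type*} [Fintype α] [Fintype β]
    (H : SimpleGraph α) (G : SimpleGraph β) : ℝ :=
  (Nat.card (H →g G) : ℝ) / (Fintype.card β : ℝ) ^ (Fintype.card α)

/-- The number of edges of a graph. -/
noncomputable def edgeCount {α : Type*} (H : SimpleGraph α) : ℕ :=
  Nat.card H.edgeSet

/-- `G` is `(ρ,d)`-dense: every vertex subset `X` with `|X| ≥ ρ|V(G)|`
spans at least `(d/2)|X|²` edges. -/
def LocallyDense {β : Type*} [Fintype β] (G : SimpleGraph β) (ρ d : ℝ) : Prop :=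
  ∀ X : Finset β, ρ * (Fintype.card β : ℝ) ≤ (X.card : ℝ) →
    d / 2 * (X.card : ℝ) ^ 2 ≤
      (Nat.card {e : Sym2 β // e ∈ G.edgeSet ∧ ∀ v ∈ e, v ∈ X} : ℝ)


open Classical in
/-- number of homs of the complete multipartite graph with list of sizes into `G[X]`. -/
noncomputable def cnt {β : Type} [Fintype β] (G : SimpleGraph β) : List ℕ → Finset β → ℝ
  | [], _ => 1
  | a :: L, X => ∑ f : Fin a → β,
      if (∀ x, f x ∈ X) then cnt G L (X.filter (fun v => ∀ x, G.Adj (f x) v)) else 0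

def ecnt : List ℕ → ℕ
  | [] => 0
  | a :: L => a * L.sum + ecnt L

section
variable {β : Type} [Fintype β] (G : SimpleGraph β)

open Classical in
theorem cnt_swap (a b : ℕ) (L : List ℕ) (X : Finset β) :
    cnt G (a :: b :: L) X = cnt G (b :: a :: L) X := by
  simp only [cnt]
  have h : ∀ (p : Prop) [Decidable p] (α : Type) [Fintype α] (F : α → ℝ),
      (if p then ∑ g, F g else 0) = ∑ g, if p then F g else 0 := by
    intro p _ α _ F; split_ifs <;> simp
  simp only [h]
  rw [Finset.sum_comm]
  refine Finset.sum_congr rfl fun g _ => Finset.sum_congr rfl fun f _ => ?_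
  simp only [← ite_and, Finset.mem_filter, Finset.filter_filter]
  have e : ((∀ x, f x ∈ X) ∧ ∀ y, g y ∈ X ∧ ∀ x, G.Adj (f x) (g y)) ↔
      ((∀ x, g x ∈ X) ∧ ∀ y, f y ∈ X ∧ ∀ x, G.Adj (g x) (f y)) := by
    constructor
    · rintro ⟨h1, h2⟩
      exact ⟨fun x => (h2 x).1, fun y => ⟨h1 y, fun x => ((h2 x).2 y).symm⟩⟩
    · rintro ⟨h1, h2⟩
      exact ⟨fun x => (h2 x).1, fun y => ⟨h1 y, fun x => ((h2 x).2 y).symm⟩⟩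
  have e2 : (X.filter fun v => (∀ x, G.Adj (f x) v) ∧ ∀ x, G.Adj (g x) v) =
      (X.filter fun v => (∀ x, G.Adj (g x) v) ∧ ∀ x, G.Adj (f x) v) := by
    ext v; simp [and_comm]
  rw [e2]
  exact if_congr e rfl rfl

theorem cnt_perm {L M : List ℕ} (h : L.Perm M) : ∀ X : Finset β, cnt G L X = cnt G M X := by
  induction h with
  | nil => intro X; rfl
  | cons a _ ih => intro X; simp only [cnt, ih]
  | swap a b L => intro X; exact cnt_swap G b a L X
  | trans _ _ h1 h2 => intro X; rw [h1, h2]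

theorem ecnt_perm {L M : List ℕ} (h : L.Perm M) : ecnt L = ecnt M := by
  induction h with
  | nil => rfl
  | cons a h ih => simp only [ecnt, ih, h.sum_eq]
  | swap a b L => simp only [ecnt, List.sum_cons]; ring
  | trans _ _ h1 h2 => rw [h1, h2]

open Classical in
theorem cnt_split (L : List ℕ) : ∀ X : Finset β, ∃ μ : Finset β → ℝ, (∀ Y, 0 ≤ μ Y) ∧
    ∀ M, cnt G (L ++ M) X = ∑ Y, μ Y * cnt G M Y := by
  induction L with
  | nil =>
    intro X
    refine ⟨fun Y => if Y = X then 1 else 0, fun Y => by dsimp only; split_ifs <;> simp, fun M => by simp⟩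
  | cons a L ih =>
    intro X
    choose μ h0 h1 using ih
    refine ⟨fun Y => ∑ f : Fin a → β, if (∀ x, f x ∈ X) then
      μ (X.filter (fun v => ∀ x, G.Adj (f x) v)) Y else 0, ?_, ?_⟩
    · intro Y
      refine Finset.sum_nonneg fun f _ => ?_
      split_ifs
      · exact h0 _ _
      · exact le_rfl
    · intro M
      simp only [List.cons_append, cnt, h1, Finset.sum_mul]
      rw [Finset.sum_comm]
      refine Finset.sum_congr rfl fun f _ => ?_
      split_ifs <;> simp

theorem cnt_single (k : ℕ) (X : Finset β) : cnt G [k] X = (X.card : ℝ) ^ k := by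
  classical
  simp only [cnt]
  rw [← Finset.sum_filter, Finset.sum_const, nsmul_eq_mul, mul_one]
  have : (Finset.univ.filter fun f : Fin k → β => ∀ x, f x ∈ X) =
      Fintype.piFinset (fun _ => X) := by ext f; simp
  rw [this, Fintype.card_piFinset]; simp

theorem cnt_nonneg (L : List ℕ) : ∀ X : Finset β, 0 ≤ cnt G L X := by
  induction L with
  | nil => intro X; simp [cnt]
  | cons a L ih =>
    intro X; simp only [cnt]
    refine Finset.sum_nonneg fun f _ => ?_
    split_ifs
    · exact ih _
    · exact le_rfl

open Classical in
theorem cnt_star (k : ℕ) (X : Finset β) :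
    cnt G [k, 1] X = ∑ v ∈ X, ((X.filter (fun w => G.Adj v w)).card : ℝ) ^ k := by
  rw [cnt_swap]
  rw [cnt]
  simp only [cnt_single]
  rw [← (Equiv.funUnique (Fin 1) β).symm.sum_comp]
  simp [Finset.sum_ite_mem]

theorem dense_sum {ρ d : ℝ} (hG : LocallyDense G ρ d) (X : Finset β)
    (hX : ρ * (Fintype.card β : ℝ) ≤ X.card) :
    d * (X.card : ℝ) ^ 2 ≤ cnt G [1, 1] X := by
  classical
  rw [cnt_star]
  simp only [pow_one]
  let G' : SimpleGraph β :=
    { Adj := fun u v => G.Adj u v ∧ u ∈ X ∧ v ∈ X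
      symm := ⟨fun u v h => ⟨h.1.symm, h.2.2, h.2.1⟩⟩
      loopless := ⟨fun u h => G.loopless.irrefl u h.1⟩ }
  have h := G'.sum_degrees_eq_twice_card_edges
  have h1 : ∀ v, G'.degree v = if v ∈ X then (X.filter (fun w => G.Adj v w)).card else 0 := by
    intro v
    rw [← SimpleGraph.card_neighborFinset_eq_degree]
    split_ifs with hv
    · congr 1; ext w; simp [G', hv, and_comm]
    · rw [Finset.card_eq_zero]; ext w; simp [G', hv]
  have h2 : Nat.card {e : Sym2 β // e ∈ G.edgeSet ∧ ∀ v ∈ e, v ∈ X} = G'.edgeFinset.card := by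
    rw [SimpleGraph.edgeFinset_card, ← Nat.card_eq_fintype_card]
    refine Nat.card_congr (Equiv.subtypeEquivRight ?_)
    intro e
    induction e using Sym2.ind with
    | _ u v => simp [G']
  have h3 := hG X hX
  rw [h2] at h3
  simp only [h1, Finset.sum_ite_mem, Finset.univ_inter] at h
  have h4 : (∑ v ∈ X, ((X.filter (fun w => G.Adj v w)).card : ℝ)) = 2 * (G'.edgeFinset.card : ℝ) := by
    exact_mod_cast h
  rw [h4]; linarith

theorem dense_star {ρ d : ℝ} (hρ : 0 ≤ ρ) (hd : 0 < d) (hG : LocallyDense G ρ d) (k : ℕ) (X : Finset β) :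
    d ^ k * ((X.card : ℝ) ^ (k+1) - ρ * (Fintype.card β : ℝ) * (X.card : ℝ) ^ k) ≤
      cnt G [k, 1] X := by
  classical
  rcases lt_or_ge (X.card : ℝ) (ρ * (Fintype.card β : ℝ)) with h | h
  · refine le_trans ?_ (cnt_nonneg G _ X)
    refine mul_nonpos_of_nonneg_of_nonpos (by positivity) ?_
    rw [pow_succ']
    have : (0:ℝ) ≤ (X.card : ℝ) ^ k := by positivity
    nlinarith
  · have h1 := dense_sum G hG X h
    suffices d ^ k * (X.card : ℝ) ^ (k+1) ≤ cnt G [k, 1] X by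
      have h5 : 0 ≤ d ^ k * (ρ * (Fintype.card β : ℝ) * (X.card : ℝ) ^ k) := by positivity
      linarith
    rw [cnt_star] at h1 ⊢
    simp only [pow_one] at h1
    rcases k with _ | k
    · simp
    rcases Nat.eq_zero_or_pos X.card with h0 | h0
    · have := Finset.card_eq_zero.1 h0
      subst this; simp
    have h0' : (0:ℝ) < X.card := by exact_mod_cast h0
    have h2 := pow_sum_div_card_le_sum_pow (s := X)
      (f := fun v => ((X.filter (fun w => G.Adj v w)).card : ℝ)) (fun _ _ => by positivity) k
    refine le_trans ?_ h2
    rw [le_div_iff₀ (by positivity)]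
    calc d ^ (k+1) * (X.card : ℝ) ^ (k+1+1) * (X.card : ℝ) ^ k
        = (d * (X.card : ℝ)^2) ^ (k+1) := by ring
      _ ≤ _ := by gcongr

theorem cheb {α : Type} [Fintype α] (μ y : α → ℝ) (hμ : ∀ i, 0 ≤ μ i) (hy : ∀ i, 0 ≤ y i) (k : ℕ) :
    (∑ i, μ i * y i ^ k) * (∑ i, μ i * y i ^ 1) ≤
      (∑ i, μ i * y i ^ (k+1)) * (∑ i, μ i * y i ^ 0) := by
  have h : 0 ≤ ∑ i, ∑ j, μ i * μ j * ((y i ^ k - y j ^ k) * (y i - y j)) := by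
    refine Finset.sum_nonneg fun i _ => Finset.sum_nonneg fun j _ => ?_
    refine mul_nonneg (mul_nonneg (hμ i) (hμ j)) ?_
    rcases le_total (y i) (y j) with h | h
    · have := pow_le_pow_left₀ (hy i) h k
      nlinarith
    · have := pow_le_pow_left₀ (hy j) h k
      nlinarith
  have e : ∑ i, ∑ j, μ i * μ j * ((y i ^ k - y j ^ k) * (y i - y j)) =
      ∑ i, ∑ j, ((μ i * y i ^ (k+1)) * (μ j * y j ^ 0) + (μ i * y i ^ 0) * (μ j * y j ^ (k+1))
        - (μ i * y i ^ k) * (μ j * y j ^ 1) - (μ i * y i ^ 1) * (μ j * y j ^ k)) := by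
    refine Finset.sum_congr rfl fun i _ => Finset.sum_congr rfl fun j _ => ?_
    ring
  rw [e] at h
  simp only [Finset.sum_add_distrib, Finset.sum_sub_distrib, ← Finset.mul_sum, ← Finset.sum_mul] at h
  linarith

theorem cnt_zero (L : List ℕ) (X : Finset β) : cnt G (L ++ [0]) X = cnt G L X := by
  obtain ⟨μ, h0, h1⟩ := cnt_split G L X
  have := h1 []
  rw [List.append_nil] at this
  rw [this, h1]; simp [cnt_single, cnt]

/-- log-convexity -/
theorem cnt_logconv (L : List ℕ) (X : Finset β) (k : ℕ) (c : ℝ)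
    (hc : c * cnt G L X ≤ cnt G (L ++ [1]) X) :
    c * cnt G (L ++ [k]) X ≤ cnt G (L ++ [k+1]) X := by
  rw [← cnt_zero] at hc
  obtain ⟨μ, h0, h1⟩ := cnt_split G L X
  rcases (cnt_nonneg G (L ++ [0]) X).eq_or_lt with h | h
  · have hz : ∀ Y, μ Y = 0 := by
      rw [h1] at h
      have := (Finset.sum_eq_zero_iff_of_nonneg (fun Y _ => by
        have := h0 Y; rw [cnt_single]; positivity)).1 h.symm
      intro Y
      simpa [cnt_single] using this Y (Finset.mem_univ _)
    simp [h1, hz]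
  · have hch := cheb μ (fun Y => (Y.card : ℝ)) h0 (fun _ => by positivity) k
    simp only [← cnt_single G, ← h1] at hch
    have hk := cnt_nonneg G (L ++ [k]) X
    refine le_of_mul_le_mul_right ?_ h
    nlinarith

theorem cnt_add_one {ρ d : ℝ} (hρ : 0 < ρ) (hd : 0 < d) (hd1 : d ≤ 1) (hG : LocallyDense G ρ d)
    (L : List ℕ) :
    ((d ^ L.sum - L.length * ρ) * Fintype.card β) * cnt G L Finset.univ ≤
      cnt G (L ++ [1]) Finset.univ := by
  induction L using List.reverseRecOn with
  | nil => simp [cnt_single, cnt]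
  | append_singleton L k ih =>
    have h := cnt_logconv G L Finset.univ k _ ih
    obtain ⟨μ, h0, h1⟩ := cnt_split G L Finset.univ
    have h2 : d ^ k * (cnt G (L ++ [k+1]) Finset.univ -
        ρ * (Fintype.card β : ℝ) * cnt G (L ++ [k]) Finset.univ) ≤
        cnt G (L ++ [k] ++ [1]) Finset.univ := by
      rw [List.append_assoc, h1, h1, h1, Finset.mul_sum, ← Finset.sum_sub_distrib, Finset.mul_sum]
      refine Finset.sum_le_sum fun Y _ => ?_
      have := mul_le_mul_of_nonneg_left (dense_star G hρ.le hd hG k Y) (h0 Y)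
      simp only [cnt_single, List.cons_append, List.nil_append]
      refine le_trans (le_of_eq ?_) this
      ring
    refine le_trans ?_ h2
    have hk := cnt_nonneg G (L ++ [k]) Finset.univ
    have hdk : d ^ k ≤ 1 := pow_le_one₀ hd.le hd1
    have hdk0 : 0 ≤ d ^ k := by positivity
    have h3 : d ^ k * (((d ^ L.sum - L.length * ρ) * Fintype.card β) * cnt G (L ++ [k]) Finset.univ -
        ρ * (Fintype.card β : ℝ) * cnt G (L ++ [k]) Finset.univ) ≤ d ^ k * (cnt G (L ++ [k+1]) Finset.univ -
        ρ * (Fintype.card β : ℝ) * cnt G (L ++ [k]) Finset.univ) := by gcongr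
    refine le_trans ?_ h3
    have h4 : 0 ≤ (1 - d ^ k) * (((L.length + 1) * ρ) * (Fintype.card β * cnt G (L ++ [k]) Finset.univ)) :=
      mul_nonneg (by linarith) (by positivity)
    simp only [List.sum_append, List.length_append, List.sum_singleton, List.length_singleton, pow_add]
    push_cast
    linarith

end

def Claim (S R : List ℕ) : Prop := ∃ (p m : ℕ) (C : ℝ), 0 ≤ C ∧ R.sum = S.sum + p ∧
  ecnt R = ecnt S + m ∧ ∀ (β : Type) [Fintype β] (G : SimpleGraph β) (ρ d : ℝ),
    0 < ρ → 0 < d → d ≤ 1 → LocallyDense G ρ d →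
    cnt G R Finset.univ ≤ (Fintype.card β : ℝ) ^ p * cnt G S Finset.univ ∧
    (d ^ m - C * ρ) * ((Fintype.card β : ℝ) ^ p * cnt G S Finset.univ) ≤ cnt G R Finset.univ

theorem Claim.perm {S R : List ℕ} (h : S.Perm R) : Claim S R := by
  refine ⟨0, 0, 0, le_rfl, h.sum_eq.symm, (ecnt_perm h).symm, ?_⟩
  intro β _ G ρ d _ _ _ _
  rw [cnt_perm G h]; simp

theorem Claim.trans {S M R : List ℕ} (h1 : Claim S M) (h2 : Claim M R) : Claim S R := by
  obtain ⟨p, m, C, hC, hp, hm, H⟩ := h1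
  obtain ⟨p', m', C', hC', hp', hm', H'⟩ := h2
  refine ⟨p + p', m + m', C + C', by positivity, by omega, by omega, ?_⟩
  intro β _ G ρ d hρ hd hd1 hG
  obtain ⟨a, b⟩ := H β G ρ d hρ hd hd1 hG
  obtain ⟨a', b'⟩ := H' β G ρ d hρ hd hd1 hG
  have hN : (0:ℝ) ≤ (Fintype.card β : ℝ) ^ p' := by positivity
  have hS := cnt_nonneg G S Finset.univ
  have a2 := mul_le_mul_of_nonneg_left a hN
  have b2 := mul_le_mul_of_nonneg_left b hN
  refine ⟨a'.trans (a2.trans (le_of_eq (by ring))), le_trans ?_ b'⟩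
  have hdk : d ^ m' ≤ 1 := pow_le_one₀ hd.le hd1
  have hdk0 : 0 ≤ d ^ m' := by positivity
  have b3 := mul_le_mul_of_nonneg_left b2 hdk0
  have a3 := mul_le_mul_of_nonneg_left a2 (show 0 ≤ C' * ρ by positivity)
  have h4 : 0 ≤ (1 - d ^ m') * (C * ρ * ((Fintype.card β : ℝ) ^ (p + p') * cnt G S Finset.univ)) :=
    mul_nonneg (by linarith) (by positivity)
  rw [pow_add] at h4 ⊢
  rw [pow_add]
  linarith

theorem Claim.step (L : List ℕ) (k : ℕ) : Claim (L ++ [k]) (L ++ [k+1]) := by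
  refine ⟨1, L.sum, L.length, by positivity, by simp; omega, ?_, ?_⟩
  · rw [ecnt_perm (List.perm_append_comm (l₁ := L) (l₂ := [k+1])),
      ecnt_perm (List.perm_append_comm (l₁ := L) (l₂ := [k]))]
    simp only [List.cons_append, List.nil_append, ecnt]; ring
  intro β _ G ρ d hρ hd hd1 hG
  constructor
  · obtain ⟨μ, h0, h1⟩ := cnt_split G L Finset.univ
    rw [h1, h1, Finset.mul_sum]
    refine Finset.sum_le_sum fun Y _ => ?_
    simp only [cnt_single]
    have : (Y.card : ℝ) ≤ Fintype.card β := by exact_mod_cast Finset.card_le_univ Y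
    have h2 := h0 Y
    calc μ Y * (Y.card : ℝ) ^ (k+1) = (Y.card : ℝ) * (μ Y * (Y.card : ℝ) ^ k) := by ring
      _ ≤ _ := by rw [pow_one]; gcongr
  · have := cnt_logconv G L Finset.univ k _ (cnt_add_one G hρ hd hd1 hG L)
    rw [pow_one, ← mul_assoc]; exact this

theorem Claim.steps (L : List ℕ) (k p : ℕ) : Claim (L ++ [k]) (L ++ [k+p]) := by
  induction p with
  | zero => exact Claim.perm (List.Perm.refl _)
  | succ p ih => exact ih.trans (Claim.step L (k+p))

theorem Claim.forall₂ {S R : List ℕ} (h : List.Forall₂ (· ≤ ·) S R) :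
    ∀ A : List ℕ, Claim (A ++ S) (A ++ R) := by
  induction h with
  | nil => intro A; exact Claim.perm (List.Perm.refl _)
  | @cons s r S R hsr _ ih =>
    intro A
    obtain ⟨p, rfl⟩ := Nat.exists_eq_add_of_le hsr
    have e : ∀ k, (A ++ k :: S).Perm ((A ++ S) ++ [k]) := fun k =>
      List.perm_middle.trans (List.perm_append_singleton k (A ++ S)).symm
    have h2 := ih (A ++ [s+p])
    simp only [List.append_assoc, List.cons_append, List.nil_append] at h2
    exact ((Claim.perm (e s)).trans (Claim.steps (A ++ S) s p)).trans
      ((Claim.perm (e (s+p)).symm).trans h2)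

open Classical in
theorem cnt_ofFn {β : Type} [Fintype β] (G : SimpleGraph β) (ℓ : ℕ) : ∀ (r : Fin ℓ → ℕ)
    (X : Finset β), cnt G (List.ofFn r) X = ∑ f : (i : Fin ℓ) → Fin (r i) → β,
      if (∀ i x, f i x ∈ X) ∧ (∀ i j, i ≠ j → ∀ x y, G.Adj (f i x) (f j y)) then (1:ℝ) else 0 := by
  induction ℓ with
  | zero => intro r X; simp [cnt]
  | succ ℓ ih =>
    intro r X
    rw [List.ofFn_succ, cnt]
    simp only [ih]
    rw [← (Fin.consEquiv (fun i => Fin (r i) → β)).sum_comp, Fintype.sum_prod_type]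
    refine Finset.sum_congr rfl fun f _ => ?_
    split_ifs with hf
    · refine Finset.sum_congr rfl fun g _ => if_congr ?_ rfl rfl
      simp only [Fin.forall_fin_succ, Fin.consEquiv_apply, Fin.cons_zero, Fin.cons_succ,
        Finset.mem_filter]
      constructor
      · rintro ⟨h1, h2⟩
        refine ⟨⟨hf, fun i x => (h1 i x).1⟩, ⟨fun h => absurd rfl h,
          fun j _ x y => (h1 j y).2 x⟩, fun i => ⟨fun _ x y => ((h1 i x).2 y).symm,
          fun j hij => h2 i j fun h => hij (by rw [h])⟩⟩
      · rintro ⟨⟨_, h1⟩, ⟨_, h2⟩, h3⟩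
        exact ⟨fun i x => ⟨h1 i x, fun y => h2 i (Fin.succ_ne_zero i).symm y x⟩,
          fun i j hij => (h3 i).2 j fun h => hij (Fin.succ_injective _ h)⟩
    · symm
      refine Finset.sum_eq_zero fun g _ => if_neg ?_
      rintro ⟨h, _⟩
      exact hf (h 0)

theorem hom_card {β : Type} [Fintype β] (G : SimpleGraph β) (ℓ : ℕ) (r : Fin ℓ → ℕ) :
    (Nat.card (SimpleGraph.completeMultipartiteGraph (fun i : Fin ℓ => Fin (r i)) →g G) : ℝ) =
      cnt G (List.ofFn r) Finset.univ := by
  classical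
  rw [cnt_ofFn]
  simp only [Finset.mem_univ, implies_true, true_and]
  rw [← Finset.sum_filter, Finset.sum_const, nsmul_eq_mul, mul_one]
  norm_cast
  rw [← Fintype.card_subtype, ← Nat.card_eq_fintype_card]
  refine Nat.card_congr
    { toFun := fun φ => ⟨fun i x => φ ⟨i, x⟩, fun i j hij x y => φ.map_rel (by simpa using hij)⟩
      invFun := fun f => ⟨fun v => f.1 v.1 v.2, fun {u v} h => f.2 u.1 v.1 (by simpa using h) _ _⟩
      left_inv := fun φ => by ext v; rfl
      right_inv := fun f => rfl }

theorem ecnt_sq (L : List ℕ) : 2 * ecnt L + (L.map (· ^ 2)).sum = L.sum ^ 2 := by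
  induction L with
  | nil => rfl
  | cons a L ih => simp only [ecnt, List.map_cons, List.sum_cons]; nlinarith

theorem edge_card (ℓ : ℕ) (r : Fin ℓ → ℕ) :
    edgeCount (SimpleGraph.completeMultipartiteGraph (fun i : Fin ℓ => Fin (r i))) =
      ecnt (List.ofFn r) := by
  classical
  have h1 := ecnt_sq (List.ofFn r)
  rw [List.map_ofFn, List.sum_ofFn, List.sum_ofFn] at h1
  have h := (SimpleGraph.completeMultipartiteGraph
    (fun i : Fin ℓ => Fin (r i))).sum_degrees_eq_twice_card_edges
  have hdeg : ∀ v, (SimpleGraph.completeMultipartiteGraph (fun i : Fin ℓ => Fin (r i))).degree v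
      + r v.1 = ∑ i, r i := by
    intro v
    have e1 : r v.1 = (Finset.univ.filter fun w : (i : Fin ℓ) × Fin (r i) => v.1 = w.1).card := by
      rw [← Fintype.card_subtype]
      conv_lhs => rw [← Fintype.card_fin (r v.1)]
      refine Fintype.card_congr
        { toFun := fun x => ⟨⟨v.1, x⟩, rfl⟩
          invFun := fun w => w.2 ▸ w.1.2
          left_inv := fun x => rfl
          right_inv := ?_ }
      rintro ⟨⟨i, x⟩, h⟩
      dsimp only at h
      subst h
      rfl
    have e2 : (SimpleGraph.completeMultipartiteGraph (fun i : Fin ℓ => Fin (r i))).degree v =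
      (Finset.univ.filter fun w : (i : Fin ℓ) × Fin (r i) => ¬ v.1 = w.1).card := by
      rw [← SimpleGraph.card_neighborFinset_eq_degree]
      congr 1; ext w; simp
    rw [e2]
    nth_rw 1 [e1]
    rw [add_comm, Finset.card_filter_add_card_filter_not]
    simp
  have h3 : ∑ v : (i : Fin ℓ) × Fin (r i), ((SimpleGraph.completeMultipartiteGraph
      (fun i : Fin ℓ => Fin (r i))).degree v + r v.1) = (∑ i, r i) ^ 2 := by
    simp only [hdeg]; simp; ring
  rw [Finset.sum_add_distrib, h, Fintype.sum_sigma] at h3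
  rw [edgeCount, Nat.card_eq_fintype_card, ← SimpleGraph.edgeFinset_card]
  simp at h1 h3
  simp only [pow_two] at *
  omega

theorem stmt12 (δ : ℝ) (hδ : 0 < δ) (ℓ : ℕ) (hℓ : 0 < ℓ) (r s : Fin ℓ → ℕ)
    (hrs : ∀ i, s i ≤ r i) :
    ∃ (ρ : ℝ) (n₀ : ℕ), 0 < ρ ∧
      ∀ (d : ℝ), 0 < d → d ≤ 1 →
        ∀ (β : Type) [Fintype β] (G : SimpleGraph β),
          n₀ ≤ Fintype.card β → LocallyDense G ρ d →
            homDensity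
                (SimpleGraph.completeMultipartiteGraph (fun i : Fin ℓ => Fin (r i))) G
              ≥ (d ^ (edgeCount
                    (SimpleGraph.completeMultipartiteGraph (fun i : Fin ℓ => Fin (r i))) -
                  edgeCount
                    (SimpleGraph.completeMultipartiteGraph (fun i : Fin ℓ => Fin (s i)))) - δ) *
                homDensity
                  (SimpleGraph.completeMultipartiteGraph (fun i : Fin ℓ => Fin (s i))) G := by
  have hf : List.Forall₂ (· ≤ ·) (List.ofFn s) (List.ofFn r) := by
    rw [List.forall₂_iff_get]
    simp [hrs]
  obtain ⟨p, m, C, hC, hp, hm, H⟩ := Claim.forall₂ hf []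
  simp only [List.nil_append] at hp hm H
  refine ⟨δ / (C + 1), 1, by positivity, ?_⟩
  intro d hd hd1 β _ G hn hG
  obtain ⟨-, h⟩ := H β G _ d (by positivity) hd hd1 hG
  rw [edge_card, edge_card, hm, Nat.add_sub_cancel_left, homDensity, homDensity, hom_card, hom_card]
  rw [List.sum_ofFn, List.sum_ofFn] at hp
  simp only [Fintype.card_sigma, Fintype.card_fin]
  rw [hp, pow_add, ge_iff_le]
  have hn' : (0:ℝ) < Fintype.card β := by exact_mod_cast hn
  have hS := cnt_nonneg G (List.ofFn s) Finset.univ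
  have hCδ : C * (δ / (C + 1)) ≤ δ := by
    rw [mul_div_assoc', div_le_iff₀ (by positivity)]; nlinarith
  rw [mul_div_assoc', div_le_div_iff₀ (by positivity) (by positivity)]
  have h5 : (d ^ m - δ) * ((Fintype.card β : ℝ) ^ p * cnt G (List.ofFn s) Finset.univ) ≤
      cnt G (List.ofFn r) Finset.univ := by
    refine le_trans ?_ h
    gcongr
  have h6 := mul_le_mul_of_nonneg_right h5
    (show (0:ℝ) ≤ (Fintype.card β : ℝ) ^ (∑ i, s i) by positivity)
  linarith
end

section
/- Let δ > 0 and let ℓ and r be positive integers with ℓ ≤ 2r. Then there exists ρ > 0 and n₀ such that for every d ∈ (0,1] and every (ρ,d)-dense graph G with at least n₀ vertices, t_{C_{2r+1}}(G) ≥ (d − δ) · t_{P_ℓ}(G)^{2r/ℓ}. -/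
open MeasureTheory

open Finset

lemma spec_aux {β : Type} [Fintype β] [DecidableEq β] (A : Matrix β β ℝ) (hA : A.IsHermitian) :
    ∃ c lam : β → ℝ, (∀ i, 0 ≤ c i) ∧ ∀ k : ℕ, ∑ i, ∑ j, (A ^ k) i j = ∑ i, c i * lam i ^ k := by
  obtain ⟨U, D, hUU, h⟩ : ∃ (U : Matrix β β ℝ) (D : β → ℝ), U.transpose * U = 1 ∧
      A = U * Matrix.diagonal D * U.transpose := by
    refine ⟨hA.eigenvectorUnitary, hA.eigenvalues, ?_, ?_⟩
    · have := Unitary.coe_star_mul_self hA.eigenvectorUnitary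
      simpa [Matrix.star_eq_conjTranspose] using this
    · have := hA.spectral_theorem
      simpa [Unitary.conjStarAlgAut_apply, Matrix.star_eq_conjTranspose, Function.comp_def] using this
  have hUU' : U * U.transpose = 1 := mul_eq_one_comm.mp hUU
  have hpow : ∀ k : ℕ, A ^ k = U * Matrix.diagonal (fun i => D i ^ k) * U.transpose := by
    intro k
    induction k with
    | zero => simp [hUU']
    | succ k ih =>
      rw [pow_succ, ih, h]
      calc U * Matrix.diagonal (fun i => D i ^ k) * U.transpose * (U * Matrix.diagonal D * U.transpose)
          = U * Matrix.diagonal (fun i => D i ^ k) * (U.transpose * U) * Matrix.diagonal D * U.transpose := by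
            simp only [Matrix.mul_assoc]
        _ = _ := by
            rw [hUU, Matrix.mul_one, Matrix.mul_assoc U, Matrix.diagonal_mul_diagonal]
            simp [pow_succ]
  refine ⟨fun m => (∑ i, U i m) ^ 2, D, fun i => sq_nonneg _, fun k => ?_⟩
  rw [hpow]
  have hent : ∀ i j, (U * Matrix.diagonal (fun i => D i ^ k) * U.transpose) i j =
      ∑ m, U i m * D m ^ k * U j m := by
    intro i j
    rw [Matrix.mul_apply]
    simp only [Matrix.mul_diagonal, Matrix.transpose_apply]
  simp only [hent]
  calc ∑ i, ∑ j, ∑ m, U i m * D m ^ k * U j m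
      = ∑ i, ∑ m, ∑ j, U i m * D m ^ k * U j m := by
        refine sum_congr rfl fun i _ => sum_comm
    _ = ∑ m, ∑ i, ∑ j, U i m * D m ^ k * U j m := sum_comm
    _ = _ := by
        refine sum_congr rfl fun m _ => ?_
        rw [sq, sum_mul_sum, sum_mul]
        refine sum_congr rfl fun i _ => ?_
        rw [sum_mul]
        refine sum_congr rfl fun j _ => ?_
        ring

lemma powermean_aux {β : Type} [Fintype β] [DecidableEq β] (A : Matrix β β ℝ) (hA : A.IsHermitian)
    (h0 : ∀ i j, 0 ≤ A i j) (hn : 0 < Fintype.card β) (ℓ r : ℕ) (hℓ : 0 < ℓ) (hℓr : ℓ ≤ 2 * r) :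
    ((∑ i, ∑ j, (A ^ ℓ) i j) / (Fintype.card β : ℝ) ^ (ℓ + 1)) ^ ((2 * r : ℝ) / (ℓ : ℝ)) ≤
      (∑ i, ∑ j, (A ^ (2 * r)) i j) / (Fintype.card β : ℝ) ^ (2 * r + 1) := by
  obtain ⟨c, lam, hc, hk⟩ := spec_aux A hA
  have hpos : ∀ k : ℕ, ∀ i j, 0 ≤ (A ^ k) i j := by
    intro k
    induction k with
    | zero => intro i j; simp only [pow_zero, Matrix.one_apply]; split_ifs <;> norm_num
    | succ k ih =>
      intro i j
      rw [pow_succ, Matrix.mul_apply]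
      exact sum_nonneg fun m _ => mul_nonneg (ih _ _) (h0 _ _)
  have hw : 0 ≤ ∑ i, ∑ j, (A ^ ℓ) i j := sum_nonneg fun i _ => sum_nonneg fun j _ => hpos _ _ _
  set n : ℝ := (Fintype.card β : ℝ) with hndef
  have hn' : 0 < n := by rw [hndef]; exact_mod_cast hn
  have hsum : ∑ i, c i = n := by
    have := hk 0
    simp only [pow_zero, Matrix.one_apply, mul_one] at this
    rw [← this]; simp [hndef]
  have hp : (1 : ℝ) ≤ (2 * r : ℝ) / (ℓ : ℝ) := by
    rw [le_div_iff₀ (by exact_mod_cast hℓ)]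
    rw [one_mul]; exact_mod_cast hℓr
  have key := Real.rpow_arith_mean_le_arith_mean_rpow univ (fun i => c i / n)
    (fun i => (|lam i| / n) ^ ℓ) (fun i _ => div_nonneg (hc i) hn'.le)
    (by rw [← sum_div, hsum, div_self hn'.ne']) (fun i _ => by positivity) hp
  refine le_trans (Real.rpow_le_rpow (by positivity) ?_ (by positivity)) (key.trans (le_of_eq ?_))
  · rw [hk, sum_div]
    refine sum_le_sum fun i _ => ?_
    rw [div_pow, div_mul_div_comm, pow_succ']
    refine div_le_div_of_nonneg_right (mul_le_mul_of_nonneg_left ?_ (hc i)) (by positivity)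
    rw [← abs_pow]; exact le_abs_self _
  · rw [hk, sum_div]
    refine sum_congr rfl fun i _ => ?_
    have : ((|lam i| / n) ^ ℓ) ^ ((2 * r : ℝ) / (ℓ : ℝ)) = (|lam i| / n) ^ (2 * r) := by
      rw [← Real.rpow_natCast, ← Real.rpow_natCast, ← Real.rpow_mul (by positivity)]
      congr 1
      have : (ℓ : ℝ) ≠ 0 := by exact_mod_cast hℓ.ne'
      push_cast; field_simp
    rw [this, div_pow, div_mul_div_comm, pow_succ' n, pow_mul |lam i|, sq_abs, ← pow_mul]

/-- counting paths -/
lemma path_sum {β : Type} [Fintype β] [DecidableEq β] (A : Matrix β β ℝ) (k : ℕ) :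
    ∀ F : β → β → ℝ,
    ∑ p : Fin (k + 1) → β, (∏ s : Fin k, A (p s.castSucc) (p s.succ)) * F (p 0) (p (Fin.last k)) =
      ∑ i, ∑ j, (A ^ k) i j * F i j := by
  induction k with
  | zero =>
    intro F
    rw [← (Equiv.funUnique (Fin 1) β).symm.sum_comp]
    simp [Matrix.one_apply]
  | succ k ih =>
    intro F
    rw [← (Fin.snocEquiv (fun _ : Fin (k+2) => β)).sum_comp, Fintype.sum_prod_type]
    have := fun x : β => ih (fun i j => A j x * F i x)
    simp only [Fin.snocEquiv, Equiv.coe_fn_mk, Fin.prod_univ_castSucc, Fin.snoc_last, Fin.succ_last,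
      Fin.snoc_castSucc, Fin.succ_castSucc]
    have h0 : ∀ (x : β) (q : Fin (k+1) → β), (Fin.snoc q x : Fin (k+2) → β) 0 = q 0 := by
      intro x q
      exact Fin.snoc_castSucc (α := fun _ => β) x q 0
    simp only [h0, mul_assoc]
    calc _ = ∑ x : β, ∑ i, ∑ j, (A ^ k) i j * (A j x * F i x) := by
            refine sum_congr rfl fun x _ => ?_
            rw [← this x]
      _ = ∑ i, ∑ x, ∑ j, (A ^ k) i j * (A j x * F i x) := sum_comm
      _ = _ := by
            refine sum_congr rfl fun i _ => sum_congr rfl fun x _ => ?_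
            rw [pow_succ, Matrix.mul_apply, sum_mul]
            refine sum_congr rfl fun j _ => ?_
            ring

lemma card_hom {α β : Type} [Fintype α] [Fintype β] (H : SimpleGraph α) (G : SimpleGraph β)
    (w : (α → β) → ℝ) (h1 : ∀ p, (∀ a b, H.Adj a b → G.Adj (p a) (p b)) → w p = 1)
    (h2 : ∀ p, ¬ (∀ a b, H.Adj a b → G.Adj (p a) (p b)) → w p = 0) [DecidableEq α] :
    (Nat.card (H →g G) : ℝ) = ∑ p, w p := by
  classical
  let e : (H →g G) ≃ {p : α → β // ∀ a b, H.Adj a b → G.Adj (p a) (p b)} :=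
    { toFun := fun f => ⟨f, fun a b h => f.map_adj h⟩
      invFun := fun p => ⟨p.1, fun {a b} h => p.2 a b h⟩
      left_inv := fun f => rfl
      right_inv := fun p => rfl }
  rw [Nat.card_congr e, Nat.card_eq_fintype_card, Fintype.card_subtype, card_eq_sum_ones,
    sum_filter]
  push_cast
  refine sum_congr rfl fun p _ => ?_
  split_ifs with h
  · rw [h1 p h]
  · rw [h2 p h]

lemma prod_adj {β ι : Type} [Fintype ι] [Fintype β] [DecidableEq β] (G : SimpleGraph β) [DecidableRel G.Adj]
    (x y : ι → β) : ((∀ s, G.Adj (x s) (y s)) → ∏ s, G.adjMatrix ℝ (x s) (y s) = 1) ∧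
     (¬ (∀ s, G.Adj (x s) (y s)) → ∏ s, G.adjMatrix ℝ (x s) (y s) = 0) := by
  constructor
  · intro h; exact prod_eq_one fun s _ => by simp [h s]
  · intro h; push Not at h
    obtain ⟨s, hs⟩ := h
    exact prod_eq_zero (mem_univ s) (by simp [hs])

lemma path_count {β : Type} [Fintype β] [DecidableEq β] (G : SimpleGraph β) [DecidableRel G.Adj] (k : ℕ) :
    (Nat.card (SimpleGraph.pathGraph (k + 1) →g G) : ℝ) = ∑ i, ∑ j, (G.adjMatrix ℝ ^ k) i j := by
  have := path_sum (G.adjMatrix ℝ) k (fun _ _ => 1)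
  simp only [mul_one] at this
  rw [← this]
  have key : ∀ p : Fin (k+1) → β, (∀ a b, (SimpleGraph.pathGraph (k+1)).Adj a b → G.Adj (p a) (p b)) ↔
      ∀ s : Fin k, G.Adj (p s.castSucc) (p s.succ) := by
    intro p
    constructor
    · intro h s
      exact h _ _ (by rw [SimpleGraph.pathGraph_adj]; simp)
    · have aux : (∀ s : Fin k, G.Adj (p s.castSucc) (p s.succ)) → ∀ a b : Fin (k+1), a.val + 1 = b.val →
          G.Adj (p a) (p b) := by
        intro h a b hab
        have ha : a.val < k := by have := b.2; omega
        have := h ⟨a.val, ha⟩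
        have hb : b = (⟨a.val, ha⟩ : Fin k).succ := by ext; simp [hab]
        rw [hb]
        exact this
      intro h a b hab
      rw [SimpleGraph.pathGraph_adj] at hab
      rcases hab with hab | hab
      · exact aux h a b hab
      · exact (aux h b a hab).symm
  apply card_hom
  · intro p hp
    exact (prod_adj G _ _).1 ((key p).1 hp)
  · intro p hp
    exact (prod_adj G _ _).2 (fun h => hp ((key p).2 h))

lemma cycle_count {β : Type} [Fintype β] [DecidableEq β] (G : SimpleGraph β) [DecidableRel G.Adj] (k : ℕ)
    (hk : 1 ≤ k) :
    (Nat.card (SimpleGraph.cycleGraph (k + 1) →g G) : ℝ) =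
      ∑ i, ∑ j, (G.adjMatrix ℝ ^ k) i j * G.adjMatrix ℝ j i := by
  rw [← path_sum (G.adjMatrix ℝ) k (fun i j => G.adjMatrix ℝ j i)]
  obtain ⟨m, rfl⟩ : ∃ m, k = m + 1 := ⟨k - 1, by omega⟩
  have key : ∀ p : Fin (m+1+1) → β, (∀ a b, (SimpleGraph.cycleGraph (m+1+1)).Adj a b → G.Adj (p a) (p b)) ↔
      ∀ s : Fin (m+1+1), G.Adj (p s) (p (s + 1)) := by
    intro p
    constructor
    · intro h s
      exact h _ _ (by rw [SimpleGraph.cycleGraph_adj]; simp)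
    · intro h a b hab
      rw [SimpleGraph.cycleGraph_adj] at hab
      rcases hab with hab | hab
      · have := h b
        rw [← hab, add_sub_cancel] at this
        exact this.symm
      · have := h a
        rw [← hab, add_sub_cancel] at this
        exact this
  have hw : ∀ p : Fin (m+1+1) → β, (∏ s : Fin (m+1), G.adjMatrix ℝ (p s.castSucc) (p s.succ)) *
      G.adjMatrix ℝ (p (Fin.last (m+1))) (p 0) = ∏ s : Fin (m+1+1), G.adjMatrix ℝ (p s) (p (s+1)) := by
    intro p
    rw [Fin.prod_univ_castSucc (n := m+1)]
    simp
  simp only [hw]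
  apply card_hom
  · intro p hp
    exact (prod_adj G _ _).1 ((key p).1 hp)
  · intro p hp
    exact (prod_adj G _ _).2 (fun h => hp ((key p).2 h))

lemma dense_set {β : Type} [Fintype β] [DecidableEq β] (G : SimpleGraph β) [DecidableRel G.Adj] (ρ d : ℝ)
    (h : LocallyDense G ρ d) (X : Finset β) (hX : ρ * (Fintype.card β : ℝ) ≤ (X.card : ℝ)) :
    d * (X.card : ℝ) ^ 2 ≤ ∑ x ∈ X, ∑ y ∈ X, G.adjMatrix ℝ x y := by
  classical
  let G' : SimpleGraph β :=
    { Adj := fun x y => G.Adj x y ∧ x ∈ X ∧ y ∈ X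
      symm := ⟨fun x y h => ⟨h.1.symm, h.2.2, h.2.1⟩⟩
      loopless := ⟨fun x h => G.loopless.irrefl x h.1⟩ }
  have h1 := h X hX
  have h2 : Nat.card {e : Sym2 β // e ∈ G.edgeSet ∧ ∀ v ∈ e, v ∈ X} = G'.edgeFinset.card := by
    rw [← SimpleGraph.coe_edgeFinset] 
    rw [Nat.card_eq_fintype_card, Fintype.card_subtype]
    congr 1
    ext e
    induction e with | h x y => simp [G']
  have h3 := G'.sum_degrees_eq_twice_card_edges
  have h4 : ∑ x ∈ X, ∑ y ∈ X, G.adjMatrix ℝ x y = ∑ x, (G'.degree x : ℝ) := by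
    rw [← sum_filter_add_sum_filter_not univ (· ∈ X)]
    have : ∀ x, (G'.degree x : ℝ) = ∑ y, if G'.Adj x y then 1 else 0 := by
      intro x
      rw [← SimpleGraph.card_neighborFinset_eq_degree, card_eq_sum_ones, SimpleGraph.neighborFinset_eq_filter, sum_filter]
      push_cast; rfl
    simp only [this]
    rw [sum_eq_zero (s := filter (· ∉ X) univ), add_zero, filter_mem_eq_inter, univ_inter]
    · refine sum_congr rfl fun x hx => ?_
      rw [← sum_filter_add_sum_filter_not univ (· ∈ X)]
      rw [sum_eq_zero (s := filter (· ∉ X) univ), add_zero, filter_mem_eq_inter, univ_inter]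
      · refine sum_congr rfl fun y hy => ?_
        simp [G', SimpleGraph.adjMatrix_apply, hx, hy]
      · intro y hy; simp at hy; simp [G', hy]
    · intro x hx; simp at hx; simp [G', hx]
  rw [h4]
  rw [h2] at h1
  have h5 : ∑ x, (G'.degree x : ℝ) = 2 * (G'.edgeFinset.card : ℝ) := by exact_mod_cast h3
  rw [h5]; linarith

lemma concave_aux {β : Type} [Fintype β] [DecidableEq β] (B : β → β → ℝ) (hB : ∀ a, B a a ≤ 0) (C : ℝ)
    (hC : ∀ X : Finset β, C ≤ ∑ x ∈ X, ∑ y ∈ X, B x y) (S : Finset β) :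
    ∀ f : β → ℝ, (∀ x, 0 ≤ f x ∧ f x ≤ 1) → (∀ x ∉ S, f x = 0 ∨ f x = 1) →
      C ≤ ∑ x, ∑ y, f x * f y * B x y := by
  classical
  induction S using Finset.induction_on with
  | empty =>
    intro f _ hf
    refine (hC (univ.filter fun x => f x = 1)).trans (le_of_eq ?_)
    rw [sum_filter]
    refine sum_congr rfl fun x _ => ?_
    rcases hf x (by simp) with hx | hx
    · simp [hx]
    · simp only [hx, if_true, sum_filter]
      refine sum_congr rfl fun y _ => ?_
      rcases hf y (by simp) with hy | hy <;> simp [hy]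
  | insert a S ha ih =>
    intro f hf hfS
    set u : β → ℝ := Function.update f a 0 with hu
    have hform : ∀ t : ℝ, ∑ x, ∑ y, (Function.update f a t) x * (Function.update f a t) y * B x y =
        ∑ x, ∑ y, u x * u y * B x y + t * (∑ y, u y * B a y + ∑ x, u x * B x a) + t ^ 2 * B a a := by
      intro t
      have hup : ∀ x, Function.update f a t x = u x + if x = a then t else 0 := by
        intro x
        by_cases hx : x = a
        · subst hx; simp [hu]
        · simp [hu, hx]
      simp only [hup]
      have : ∀ x y, (u x + if x = a then t else 0) * (u y + if y = a then t else 0) * B x y =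
         u x * u y * B x y + (if y = a then t * (u x * B x y) else 0) + (if x = a then t * (u y * B x y) else 0)
          + (if x = a then (if y = a then t ^ 2 * B x y else 0) else 0) := by
        intro x y; split_ifs <;> ring
      simp only [this, sum_add_distrib]
      have e1 : ∑ x, ∑ y, (if x = a then t * (u y * B x y) else 0) = ∑ y, t * (u y * B a y) := by
        rw [sum_comm]; simp
      have e2 : ∑ x, ∑ y, (if x = a then (if y = a then t ^ 2 * B x y else 0) else 0) = t ^ 2 * B a a := by
        rw [sum_comm]; simp
      rw [e1, e2]
      simp only [sum_ite_eq', mem_univ, if_true, mul_add, mul_sum]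
      ring
    have hcase : ∀ t : ℝ, t = 0 ∨ t = 1 → C ≤ ∑ x, ∑ y, (Function.update f a t) x * (Function.update f a t) y * B x y := by
      intro t ht
      apply ih
      · intro x
        by_cases hx : x = a
        · subst hx; rcases ht with rfl | rfl <;> simp
        · simp [hx, hf x]
      · intro x hx
        by_cases hxa : x = a
        · subst hxa; simpa using ht
        · simp only [Function.update_of_ne hxa]
          exact hfS x (by simp [hxa, hx])
    have c0 := hcase 0 (Or.inl rfl)
    have c1 := hcase 1 (Or.inr rfl)
    have cf := hform (f a)
    rw [Function.update_eq_self] at cf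
    rw [hform] at c0 c1
    rw [cf]
    obtain ⟨f0, f1⟩ := hf a
    generalize ∑ x, ∑ y, u x * u y * B x y = P at *
    generalize ∑ y, u y * B a y + ∑ x, u x * B x a = Q at *
    have hb := hB a
    nlinarith [mul_nonneg f0 (sub_nonneg.2 c1), mul_nonneg (sub_nonneg.2 f1) (sub_nonneg.2 c0),
      mul_nonneg (mul_nonneg f0 (sub_nonneg.2 f1)) (neg_nonneg.2 hb)]

lemma dense_fun {β : Type} [Fintype β] [DecidableEq β] (G : SimpleGraph β) [DecidableRel G.Adj] (ρ d : ℝ)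
    (hd0 : 0 ≤ d) (hd1 : d ≤ 1) (h : LocallyDense G ρ d) (f : β → ℝ)
    (hf : ∀ x, 0 ≤ f x ∧ f x ≤ 1) :
    d * (∑ x, f x) ^ 2 - (ρ * Fintype.card β) ^ 2 ≤ ∑ x, ∑ y, f x * f y * G.adjMatrix ℝ x y := by
  have := concave_aux (fun x y => G.adjMatrix ℝ x y - d) (by intro a; simp [hd0])
    (-(ρ * Fintype.card β) ^ 2) (by
      intro X
      simp only [sum_sub_distrib, sum_const, nsmul_eq_mul]
      by_cases hX : ρ * (Fintype.card β : ℝ) ≤ (X.card : ℝ)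
      · have := dense_set G ρ d h X hX
        nlinarith [sq_nonneg (ρ * (Fintype.card β : ℝ))]
      · have h1 : 0 ≤ ∑ x ∈ X, ∑ y ∈ X, G.adjMatrix ℝ x y :=
          sum_nonneg fun x _ => sum_nonneg fun y _ => by
            rw [SimpleGraph.adjMatrix_apply]; split_ifs <;> norm_num
        have h2 : (X.card : ℝ) ^ 2 ≤ (ρ * Fintype.card β) ^ 2 :=
          pow_le_pow_left₀ (by positivity) (not_le.1 hX).le 2
        nlinarith [sq_nonneg (X.card : ℝ)])
    univ f hf (by simp)
  simp only [mul_sub, sum_sub_distrib] at this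
  have e : ∑ x, ∑ y, f x * f y * d = d * (∑ x, f x) ^ 2 := by
    rw [sq, sum_mul_sum, mul_sum]
    refine sum_congr rfl fun x _ => ?_
    rw [mul_sum]
    refine sum_congr rfl fun y _ => ?_
    ring
  rw [e] at this
  linarith

lemma pow_bound {β : Type} [Fintype β] [DecidableEq β] (G : SimpleGraph β) [DecidableRel G.Adj] (k : ℕ) :
    ∀ i j, 0 ≤ (G.adjMatrix ℝ ^ (k + 1)) i j ∧ (G.adjMatrix ℝ ^ (k + 1)) i j ≤ (Fintype.card β : ℝ) ^ k := by
  have hA : ∀ i j, 0 ≤ G.adjMatrix ℝ i j ∧ G.adjMatrix ℝ i j ≤ 1 := by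
    intro i j; rw [SimpleGraph.adjMatrix_apply]; split_ifs <;> norm_num
  induction k with
  | zero => intro i j; simpa using hA i j
  | succ k ih =>
    intro i j
    rw [pow_succ, Matrix.mul_apply]
    constructor
    · exact sum_nonneg fun m _ => mul_nonneg (ih _ _).1 (hA _ _).1
    · calc _ ≤ ∑ m : β, (Fintype.card β : ℝ) ^ k := by
            refine sum_le_sum fun m _ => ?_
            calc _ ≤ (Fintype.card β : ℝ) ^ k * 1 :=
                  mul_le_mul (ih _ _).2 (hA _ _).2 (hA _ _).1 (by positivity)
              _ = _ := mul_one _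
        _ = _ := by simp [pow_succ']

lemma cycle_lower {β : Type} [Fintype β] [DecidableEq β] (G : SimpleGraph β) [DecidableRel G.Adj] (ρ d : ℝ)
    (hd0 : 0 ≤ d) (hd1 : d ≤ 1) (h : LocallyDense G ρ d) (hn : 0 < Fintype.card β) (r : ℕ) (hr : 0 < r) :
    d * (∑ i, ∑ j, (G.adjMatrix ℝ ^ (2 * r)) i j) - ρ ^ 2 * (Fintype.card β : ℝ) ^ (2 * r + 1) ≤
      ∑ i, ∑ j, (G.adjMatrix ℝ ^ (2 * r)) i j * G.adjMatrix ℝ j i := by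
  obtain ⟨k, rfl⟩ : ∃ k, r = k + 1 := ⟨r - 1, by omega⟩
  set M := G.adjMatrix ℝ ^ (k + 1) with hM
  have hsym : ∀ i j, M i j = M j i := by
    intro i j
    have : M.transpose = M := by rw [hM, Matrix.transpose_pow, SimpleGraph.transpose_adjMatrix]
    exact congrFun (congrFun this j) i
  set n : ℝ := (Fintype.card β : ℝ) with hndef
  have hn' : 0 < n := by rw [hndef]; exact_mod_cast hn
  have e2 : G.adjMatrix ℝ ^ (2 * (k + 1)) = M * M := by rw [two_mul, pow_add]
  have hv : ∀ v, d * (∑ x, M v x) ^ 2 - ρ ^ 2 * n ^ (2 * (k+1)) ≤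
      ∑ x, ∑ y, M v x * M v y * G.adjMatrix ℝ x y := by
    intro v
    have := dense_fun G ρ d hd0 hd1 h (fun x => M v x / n ^ k) (fun x =>
      ⟨div_nonneg (pow_bound G k v x).1 (by positivity),
        div_le_one_of_le₀ (pow_bound G k v x).2 (by positivity)⟩)
    rw [← sum_div] at this
    have e : ∑ x, ∑ y, M v x / n ^ k * (M v y / n ^ k) * G.adjMatrix ℝ x y =
        (∑ x, ∑ y, M v x * M v y * G.adjMatrix ℝ x y) / (n ^ k) ^ 2 := by
      simp only [sum_div]
      refine sum_congr rfl fun x _ => sum_congr rfl fun y _ => ?_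
      field_simp
    rw [e, le_div_iff₀ (by positivity)] at this
    refine le_trans (le_of_eq ?_) this
    rw [← hndef]
    field_simp
    ring
  have hs := sum_le_sum (s := univ) fun v _ => hv v
  refine le_trans (le_of_eq ?_) (hs.trans (le_of_eq ?_))
  · rw [sum_sub_distrib, ← mul_sum, sum_const, card_univ, nsmul_eq_mul, ← hndef]
    congr 1
    · congr 1
      rw [e2]
      simp only [Matrix.mul_apply]
      calc ∑ i, ∑ j, ∑ m, M i m * M m j = ∑ i, ∑ m, ∑ j, M i m * M m j :=
            sum_congr rfl fun i _ => sum_comm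
        _ = ∑ m, ∑ i, ∑ j, M i m * M m j := sum_comm
        _ = _ := by
            refine sum_congr rfl fun m _ => ?_
            rw [sq, sum_mul_sum]
            refine sum_congr rfl fun i _ => sum_congr rfl fun j _ => ?_
            rw [hsym i m]
    · ring
  · rw [e2]
    simp only [Matrix.mul_apply, sum_mul]
    calc ∑ v, ∑ x, ∑ y, M v x * M v y * G.adjMatrix ℝ x y
        = ∑ x, ∑ v, ∑ y, M v x * M v y * G.adjMatrix ℝ x y := sum_comm
      _ = ∑ x, ∑ y, ∑ v, M v x * M v y * G.adjMatrix ℝ x y := sum_congr rfl fun x _ => sum_comm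
      _ = _ := by
        refine sum_congr rfl fun x _ => sum_congr rfl fun y _ => sum_congr rfl fun v _ => ?_
        rw [hsym v x]
        congr 1
        simp only [SimpleGraph.adjMatrix_apply, G.adj_comm]

theorem stmt13 (δ : ℝ) (hδ : 0 < δ) (ℓ r : ℕ) (hℓ : 0 < ℓ) (hr : 0 < r)
    (hℓr : ℓ ≤ 2 * r) :
    ∃ (ρ : ℝ) (n₀ : ℕ), 0 < ρ ∧
      ∀ (d : ℝ), 0 < d → d ≤ 1 →
        ∀ (β : Type) [Fintype β] (G : SimpleGraph β),
          n₀ ≤ Fintype.card β → LocallyDense G ρ d →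
            homDensity (SimpleGraph.cycleGraph (2 * r + 1)) G
              ≥ (d - δ) *
                homDensity (SimpleGraph.pathGraph (ℓ + 1)) G ^ ((2 * r : ℝ) / (ℓ : ℝ)) := by
  classical
  refine ⟨(min 1 δ) ^ (r + 1), 1, by positivity, ?_⟩
  intro d hd0 hd1 β _ G hn hG
  have hnn : ∀ {k : ℕ} (H : SimpleGraph (Fin k)), 0 ≤ homDensity H G := by
    intro k H; unfold homDensity; positivity
  rcases le_or_gt d δ with hdδ | hdδ
  · have h1 := hnn (SimpleGraph.cycleGraph (2 * r + 1))
    have h2 := Real.rpow_nonneg (hnn (SimpleGraph.pathGraph (ℓ + 1))) ((2 * r : ℝ) / (ℓ : ℝ))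
    nlinarith
  have hδ1 : δ < 1 := lt_of_lt_of_le hdδ hd1
  rw [min_eq_right hδ1.le] at hG
  set n : ℝ := (Fintype.card β : ℝ) with hndef
  have hn' : 0 < n := by rw [hndef]; exact_mod_cast hn
  have hcyc := cycle_lower G _ d hd0.le hd1 hG hn r hr
  have hHerm : (G.adjMatrix ℝ).IsHermitian := by
    simp [Matrix.IsHermitian, Matrix.conjTranspose_eq_transpose_of_trivial]
  have hA0 : ∀ i j, 0 ≤ G.adjMatrix ℝ i j := by
    intro i j; rw [SimpleGraph.adjMatrix_apply]; split_ifs <;> norm_num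
  have hpm := powermean_aux _ hHerm hA0 hn ℓ r hℓ hℓr
  have hpm1 := powermean_aux _ hHerm hA0 hn 1 r one_pos (by omega)
  have hedge : d * n ^ 2 ≤ ∑ x, ∑ y, G.adjMatrix ℝ x y := by
    have := dense_set G _ d hG univ (by
      rw [card_univ]
      have : δ ^ (r + 1) ≤ 1 := pow_le_one₀ hδ.le hδ1.le
      nlinarith)
    simpa [hndef] using this
  rw [← hndef] at hcyc hpm hpm1
  set W := ∑ i, ∑ j, (G.adjMatrix ℝ ^ (2 * r)) i j
  have hW : δ ^ (2 * r) ≤ W / n ^ (2 * r + 1) := by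
    refine le_trans ?_ hpm1
    have : (2 * r : ℝ) / ((1 : ℕ) : ℝ) = ((2 * r : ℕ) : ℝ) := by push_cast; simp
    rw [this, Real.rpow_natCast, pow_one]
    refine pow_le_pow_left₀ hδ.le ?_ _
    rw [le_div_iff₀ (by positivity)]
    refine le_trans ?_ hedge
    exact mul_le_mul_of_nonneg_right hdδ.le (by positivity)
  have hpath : homDensity (SimpleGraph.pathGraph (ℓ + 1)) G =
      (∑ i, ∑ j, (G.adjMatrix ℝ ^ ℓ) i j) / n ^ (ℓ + 1) := by
    unfold homDensity; rw [path_count, Fintype.card_fin]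
  have hcycle : homDensity (SimpleGraph.cycleGraph (2 * r + 1)) G =
      (∑ i, ∑ j, (G.adjMatrix ℝ ^ (2 * r)) i j * G.adjMatrix ℝ j i) / n ^ (2 * r + 1) := by
    unfold homDensity; rw [cycle_count G (2 * r) (by omega), Fintype.card_fin]
  rw [hpath, hcycle, ge_iff_le]
  calc _ ≤ (d - δ) * (W / n ^ (2 * r + 1)) := mul_le_mul_of_nonneg_left hpm (by linarith)
    _ ≤ d * (W / n ^ (2 * r + 1)) - (δ ^ (r + 1)) ^ 2 := by
        have : (δ ^ (r + 1)) ^ 2 ≤ δ * δ ^ (2 * r) := by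
          rw [← pow_mul, ← pow_succ']
          exact pow_le_pow_of_le_one hδ.le hδ1.le (by omega)
        nlinarith [mul_le_mul_of_nonneg_left hW hδ.le]
    _ = (d * W - (δ ^ (r + 1)) ^ 2 * n ^ (2 * r + 1)) / n ^ (2 * r + 1) := by
        field_simp
    _ ≤ _ := by gcongr
end

section
/- For every finite simple graph G and all positive integers ℓ and r with ℓ < 2r, t_{P_ℓ}(G) ≤ t_{P_{2r}}(G)^{ℓ/(2r)}. -/
open MeasureTheory

theorem aux_count {β : Type*} [Fintype β] [DecidableEq β] (A : Matrix β β ℝ) (k : ℕ) :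
    ∀ g : β → ℝ, ∑ φ : Fin (k+1) → β, g (φ 0) * ∏ i : Fin k, A (φ i.castSucc) (φ i.succ)
      = g ⬝ᵥ ((A ^ k).mulVec 1) := by
  induction k with
  | zero =>
    intro g
    rw [← (Equiv.funUnique (Fin 1) β).symm.sum_comp]
    simp [dotProduct]
  | succ k ih =>
    intro g
    rw [← (Fin.consEquiv (fun _ : Fin (k+2) => β)).sum_comp, Fintype.sum_prod_type,
      Finset.sum_comm, pow_succ', ← Matrix.mulVec_mulVec, Matrix.dotProduct_mulVec, ← ih]
    refine Finset.sum_congr rfl fun φ _ => ?_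
    simp only [Matrix.vecMul, dotProduct, Finset.sum_mul]
    refine Finset.sum_congr rfl fun a _ => ?_
    rw [Fin.prod_univ_succ, mul_assoc]
    simp [Fin.consEquiv]

theorem aux_card {β : Type*} [Fintype β] [DecidableEq β] (G : SimpleGraph β)
    [DecidableRel G.Adj] (k : ℕ) :
    (Nat.card (SimpleGraph.pathGraph (k+1) →g G) : ℝ)
      = 1 ⬝ᵥ (((G.adjMatrix ℝ) ^ k).mulVec 1) := by
  rw [← aux_count]
  have e : (SimpleGraph.pathGraph (k+1) →g G) ≃
      {φ : Fin (k+1) → β // ∀ i : Fin k, G.Adj (φ i.castSucc) (φ i.succ)} :=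
    { toFun := fun f => ⟨f, fun i => f.map_adj (by
        rw [SimpleGraph.pathGraph_adj]; left; simp)⟩
      invFun := fun φ => ⟨φ.1, by
        intro a b h
        rw [SimpleGraph.pathGraph_adj] at h
        rcases h with h | h
        · have hb : b = (⟨a, by omega⟩ : Fin k).succ := Fin.ext (by simp [← h])
          rw [hb]
          exact φ.2 ⟨a, by omega⟩
        · have hb : a = (⟨b, by omega⟩ : Fin k).succ := Fin.ext (by simp [← h])
          rw [hb]
          exact (φ.2 ⟨b, by omega⟩).symm⟩
      left_inv := fun f => rfl
      right_inv := fun f => rfl }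
  rw [Nat.card_congr e, Nat.card_eq_fintype_card, Fintype.card_subtype, Finset.card_filter]
  push_cast
  refine Finset.sum_congr rfl fun φ _ => ?_
  simp only [Pi.one_apply, one_mul, SimpleGraph.adjMatrix_apply]
  rw [Finset.prod_ite_zero]
  simp

theorem aux_spec {β : Type*} [Fintype β] [DecidableEq β] (A : Matrix β β ℝ)
    (hA : A.IsHermitian) : ∃ c l : β → ℝ, ∀ k : ℕ,
      1 ⬝ᵥ ((A ^ k).mulVec 1) = ∑ i, c i ^ 2 * l i ^ k := by
  refine ⟨Matrix.vecMul 1 (hA.eigenvectorUnitary : Matrix β β ℝ), hA.eigenvalues, fun k => ?_⟩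
  conv_lhs => rw [hA.spectral_theorem]
  rw [← map_pow, Unitary.conjStarAlgAut_apply, Matrix.diagonal_pow, ← Matrix.mulVec_mulVec,
    ← Matrix.mulVec_mulVec, Matrix.dotProduct_mulVec, Matrix.star_eq_conjTranspose,
    Matrix.conjTranspose_eq_transpose_of_trivial, Matrix.mulVec_transpose]
  simp only [dotProduct, Matrix.mulVec_diagonal]
  refine Finset.sum_congr rfl fun i _ => ?_
  simp
  ring

theorem stmt14 {β : Type*} [Fintype β] (G : SimpleGraph β) (ℓ r : ℕ)
    (hℓ : 0 < ℓ) (hr : 0 < r) (hℓr : ℓ < 2 * r) :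
    homDensity (SimpleGraph.pathGraph (ℓ + 1)) G ≤
      homDensity (SimpleGraph.pathGraph (2 * r + 1)) G ^ ((ℓ : ℝ) / (2 * r : ℝ)) := by
  classical
  rcases isEmpty_or_nonempty β with hβ | hβ
  · have : homDensity (SimpleGraph.pathGraph (ℓ + 1)) G = 0 := by
      simp [homDensity]
    rw [this]
    refine Real.rpow_nonneg ?_ _
    unfold homDensity
    positivity
  have hn : (0 : ℝ) < Fintype.card β := by exact_mod_cast Fintype.card_pos
  obtain ⟨c, l, h⟩ := aux_spec (G.adjMatrix ℝ) (by
    rw [Matrix.IsHermitian, Matrix.conjTranspose_eq_transpose_of_trivial]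
    exact G.transpose_adjMatrix)
  have hd : ∀ k : ℕ, homDensity (SimpleGraph.pathGraph (k + 1)) G =
      ∑ i, (c i ^ 2 / Fintype.card β) * (l i / Fintype.card β) ^ k := by
    intro k
    rw [homDensity, aux_card, h, Finset.sum_div, Fintype.card_fin]
    refine Finset.sum_congr rfl fun i _ => ?_
    rw [div_pow, pow_succ]
    field_simp
    ring
  have h1 : ∑ i, c i ^ 2 / (Fintype.card β : ℝ) = 1 := by
    have := h 0
    simp at this
    rw [← Finset.sum_div, ← this]
    field_simp
  have hl0 : (0 : ℝ) < ℓ := by exact_mod_cast hℓ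
  have hr0 : (0 : ℝ) < r := by exact_mod_cast hr
  have hlr : (ℓ : ℝ) < 2 * r := by exact_mod_cast hℓr
  rw [hd, hd]
  calc _ ≤ ∑ i, (c i ^ 2 / Fintype.card β) * |l i / Fintype.card β| ^ ℓ := by
        refine Finset.sum_le_sum fun i _ => mul_le_mul_of_nonneg_left ?_ (by positivity)
        rw [← abs_pow]; exact le_abs_self _
    _ ≤ _ := Real.arith_mean_le_rpow_mean Finset.univ _ _ (fun i _ => by positivity) h1
          (fun i _ => by positivity) (p := (2 * r : ℝ) / ℓ) (by
            rw [le_div_iff₀ hl0]; linarith)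
    _ = _ := by
        rw [one_div_div]
        congr 1
        refine Finset.sum_congr rfl fun i _ => ?_
        rw [← Real.rpow_natCast _ ℓ, ← Real.rpow_mul (abs_nonneg _), mul_div_cancel₀ _ hl0.ne',
          ← (even_two_mul r).pow_abs, ← Real.rpow_natCast _ (2 * r)]
        push_cast
        rfl
end

section
/- For every finite simple graph G and all integers r and ℓ with 1 ≤ ℓ ≤ r, t_{P_{2ℓ}}(G) ≤ t_{P_2}(G)^{(r−ℓ)/(r−1)} · t_{P_{2r}}(G)^{(ℓ−1)/(r−1)} (for r ≥ 2; the case ℓ = r is trivial). -/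
open MeasureTheory

/-- Walk weight count from a given start vertex. -/
noncomputable def walkS {β : Type*} [Fintype β] (A : Matrix β β ℝ) (n : ℕ) (v : β) : ℝ :=
  ∑ f : Fin n → β, ∏ i : Fin n,
    A ((Fin.cons v f : Fin (n+1) → β) i.castSucc) ((Fin.cons v f : Fin (n+1) → β) i.succ)

theorem walkS_zero {β : Type*} [Fintype β] (A : Matrix β β ℝ) (v : β) : walkS A 0 v = 1 := by
  simp [walkS]

theorem walkS_succ {β : Type*} [Fintype β] (A : Matrix β β ℝ) (n : ℕ) (v : β) :
    walkS A (n+1) v = ∑ w, A v w * walkS A n w := by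
  unfold walkS
  rw [← (Fin.consEquiv (fun _ : Fin (n+1) => β)).sum_comp, Fintype.sum_prod_type]
  refine Finset.sum_congr rfl fun w _ => ?_
  rw [Finset.mul_sum]
  refine Finset.sum_congr rfl fun f _ => ?_
  rw [Fin.prod_univ_succ]
  simp [Fin.consEquiv]

theorem walkS_shift {β : Type*} [Fintype β] (A : Matrix β β ℝ) (hA : ∀ v w, A v w = A w v)
    (m n : ℕ) : ∑ v, walkS A (m+1) v * walkS A n v = ∑ v, walkS A m v * walkS A (n+1) v := by
  simp only [walkS_succ, Finset.sum_mul, Finset.mul_sum]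
  rw [Finset.sum_comm]
  refine Finset.sum_congr rfl fun v _ => Finset.sum_congr rfl fun w _ => ?_
  rw [hA w v]; ring

theorem walkS_total {β : Type*} [Fintype β] (A : Matrix β β ℝ) (hA : ∀ v w, A v w = A w v)
    (m n : ℕ) : ∑ v, walkS A m v * walkS A n v = ∑ v, walkS A (m+n) v := by
  induction n generalizing m with
  | zero => simp [walkS_zero]
  | succ n ih => rw [← walkS_shift A hA, ih]; congr! 2; omega

theorem card_hom_path {β : Type*} [Fintype β] (G : SimpleGraph β) (n : ℕ) [DecidableRel G.Adj] :
    (Nat.card (SimpleGraph.pathGraph (n+1) →g G) : ℝ) = ∑ v, walkS (G.adjMatrix ℝ) n v := by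
  classical
  have e : (SimpleGraph.pathGraph (n+1) →g G) ≃
      {f : Fin (n+1) → β // ∀ i : Fin n, G.Adj (f i.castSucc) (f i.succ)} :=
    { toFun := fun φ => ⟨φ, fun i => φ.map_rel (by
        simp [SimpleGraph.pathGraph_adj])⟩
      invFun := fun f => ⟨f.1, by
        intro a b hab
        rw [SimpleGraph.pathGraph_adj] at hab
        rcases hab with h | h
        · have := f.2 ⟨a, by omega⟩
          convert this using 2 <;> (ext; simp [← h])
        · have := (f.2 ⟨b, by omega⟩).symm
          convert this using 2 <;> (ext; simp [← h])⟩
      left_inv := fun φ => rfl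
      right_inv := fun f => rfl }
  rw [Nat.card_congr e, Nat.card_eq_fintype_card, Fintype.card_subtype]
  unfold walkS
  rw [← Fintype.sum_prod_type' (f := fun (v : β) (f : Fin n → β) => ∏ i : Fin n,
    G.adjMatrix ℝ ((Fin.cons v f : Fin (n+1) → β) i.castSucc)
      ((Fin.cons v f : Fin (n+1) → β) i.succ))]
  rw [← (Fin.consEquiv (fun _ : Fin (n+1) => β)).symm.sum_comp, Finset.card_filter]
  push_cast
  refine Finset.sum_congr rfl fun f _ => ?_
  have hf : (Fin.cons ((Fin.consEquiv (fun _ : Fin (n+1) => β)).symm f).1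
      ((Fin.consEquiv (fun _ : Fin (n+1) => β)).symm f).2 : Fin (n+1) → β) = f :=
    (Fin.consEquiv (fun _ : Fin (n+1) => β)).apply_symm_apply f
  rw [hf]
  simp only [SimpleGraph.adjMatrix_apply]
  rw [Finset.prod_ite_zero]
  simp

theorem conv_aux (f : ℕ → ℝ) (h : ∀ k, 1 ≤ k → 2 * f (k+1) ≤ f k + f (k+2)) (l r : ℕ)
    (hl : 1 ≤ l) (hlr : l ≤ r) :
    ((r:ℝ) - 1) * f l ≤ ((r:ℝ) - l) * f 1 + ((l:ℝ) - 1) * f r := by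
  have mono : ∀ a b, 1 ≤ a → a ≤ b → f (a+1) - f a ≤ f (b+1) - f b := by
    intro a b ha hab
    induction b, hab using Nat.le_induction with
    | base => exact le_rfl
    | succ b hb ih => have := h b (by omega); linarith
  have up : ∀ r, l ≤ r → ((r:ℝ) - l) * (f (l+1) - f l) ≤ f r - f l := by
    intro r hr
    induction r, hr using Nat.le_induction with
    | base => simp
    | succ b hb ih => have := mono l b hl hb; push_cast; linarith
  have dn : ∀ j, 1 ≤ j → j ≤ l → f j - f 1 ≤ ((j:ℝ) - 1) * (f (l+1) - f l) := by
    intro j hj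
    induction j, hj using Nat.le_induction with
    | base => simp
    | succ b hb ih =>
      intro hbl
      have := mono b l hb (by omega); have := ih (by omega); push_cast; linarith
  have h1 := up r hlr
  have h2 := dn l hl le_rfl
  have a1 : (1:ℝ) ≤ l := by exact_mod_cast hl
  have a2 : (l:ℝ) ≤ r := by exact_mod_cast hlr
  nlinarith [mul_le_mul_of_nonneg_left h1 (sub_nonneg.2 a1),
    mul_le_mul_of_nonneg_left h2 (sub_nonneg.2 a2)]

theorem seq_aux (b : ℕ → ℝ) (h0 : ∀ k, 0 ≤ b k) (h : ∀ k, b (k+1) ^ 2 ≤ b k * b (k+2)) (l r : ℕ)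
    (hl : 1 ≤ l) (hlr : l ≤ r) (hr : 2 ≤ r) :
    b l ≤ b 1 ^ (((r:ℝ) - l) / ((r:ℝ) - 1)) * b r ^ (((l:ℝ) - 1) / ((r:ℝ) - 1)) := by
  rcases (h0 1).eq_or_lt with h1 | h1
  · have hz : ∀ k, 1 ≤ k → b k = 0 := by
      intro k hk
      induction k, hk using Nat.le_induction with
      | base => exact h1.symm
      | succ k hk ih =>
        have := h k
        rw [ih, zero_mul] at this
        exact pow_eq_zero_iff (two_ne_zero) |>.1 (le_antisymm this (sq_nonneg _))
    rw [hz l hl]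
    exact mul_nonneg (Real.rpow_nonneg (h0 _) _) (Real.rpow_nonneg (h0 _) _)
  · have hp : ∀ k, 1 ≤ k → 0 < b k := by
      intro k hk
      induction k, hk using Nat.le_induction with
      | base => exact h1
      | succ k hk ih =>
        obtain ⟨k, rfl⟩ : ∃ j, k = j + 1 := ⟨k - 1, by omega⟩
        have h2 := h k
        refine (h0 _).lt_of_ne' fun hz => ?_
        rw [show k + 1 + 1 = k + 2 from rfl] at hz
        rw [hz, mul_zero] at h2
        nlinarith
    have hc := conv_aux (fun k => Real.log (b k)) (by
      intro k hk
      have p1 := hp k hk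
      have p3 := hp (k+2) (by omega)
      have := Real.log_le_log (pow_pos (hp (k+1) (by omega)) 2) (h k)
      rw [Real.log_pow, Real.log_mul p1.ne' p3.ne'] at this
      exact_mod_cast this) l r hl hlr
    have hr1 : (0:ℝ) < (r:ℝ) - 1 := by
      have : (2:ℝ) ≤ r := by exact_mod_cast hr
      linarith
    have pr := hp r (by omega)
    rw [← Real.log_le_log_iff (hp l hl) (by positivity), Real.log_mul (by positivity)
      (by positivity), Real.log_rpow h1, Real.log_rpow pr, div_mul_eq_mul_div, div_mul_eq_mul_div,
      ← add_div, le_div_iff₀ hr1]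
    linarith

theorem stmt15 {β : Type*} [Fintype β] (G : SimpleGraph β) (ℓ r : ℕ)
    (hℓ : 1 ≤ ℓ) (hℓr : ℓ ≤ r) (hr : 2 ≤ r) :
    homDensity (SimpleGraph.pathGraph (2 * ℓ + 1)) G ≤
      homDensity (SimpleGraph.pathGraph 3) G ^ (((r : ℝ) - ℓ) / ((r : ℝ) - 1)) *
        homDensity (SimpleGraph.pathGraph (2 * r + 1)) G ^ (((ℓ : ℝ) - 1) / ((r : ℝ) - 1)) := by
  classical
  set A := G.adjMatrix ℝ with hAdef
  have hA : ∀ v w, A v w = A w v := fun v w => by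
    simp [hAdef, SimpleGraph.adjMatrix_apply, G.adj_comm]
  have key := seq_aux (fun k => homDensity (SimpleGraph.pathGraph (2 * k + 1)) G)
    (fun k => by unfold homDensity; positivity) (fun k => by
      have hform : ∀ m, homDensity (SimpleGraph.pathGraph (m + 1)) G =
          (∑ v, walkS A m v) / (Fintype.card β : ℝ) ^ (m + 1) := by
        intro m
        unfold homDensity
        rw [card_hom_path, Fintype.card_fin]
      simp only [hform]
      have cs := Finset.sum_mul_sq_le_sq_mul_sq Finset.univ (walkS A k) (walkS A (k+2))
      simp only [pow_two (walkS A _ _), walkS_total A hA] at cs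
      rw [div_pow, div_mul_div_comm, ← pow_mul, ← pow_add,
        show (2 * (k + 1) + 1) * 2 = 2 * k + 1 + (2 * (k + 2) + 1) by ring]
      apply div_le_div_of_nonneg_right _ (by positivity)
      convert cs using 5 <;> ring) ℓ r hℓ hℓr hr
  exact key
end

section
/- Let H be a graph with m edges and tree-width t. Then for every η > 0 there exists ρ > 0 and n₀ such that for every d ∈ (0,1] and every (ρ,d)-dense graph G with at least n₀ vertices, t_H(G) ≥ d^{(t(t+1)/2 + 1)·m} − η. -/
open MeasureTheory

/-- `(bag, T)` is a tree decomposition of `H`. -/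
def IsTreeDecomp {α ι : Type*} [DecidableEq α] (H : SimpleGraph α) (bag : ι → Finset α)
    (T : SimpleGraph ι) : Prop :=
  T.IsTree ∧
  (∀ v : α, ∃ X, v ∈ bag X) ∧
  (∀ u v : α, H.Adj u v → ∃ X, u ∈ bag X ∧ v ∈ bag X) ∧
  (∀ X Y Z : ι, ∀ p : T.Walk X Y, p.IsPath → Z ∈ p.support →
    bag X ∩ bag Y ⊆ bag Z)

/-- The tree-width of `H`: the minimum width (`max |X| - 1`) over all tree
decompositions of `H`. -/
noncomputable def treewidth {α : Type*} [Fintype α] [DecidableEq α]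
    (H : SimpleGraph α) : ℕ :=
  sInf {w : ℕ | ∃ (ι : Type) (_ : Fintype ι) (bag : ι → Finset α) (T : SimpleGraph ι),
    IsTreeDecomp H bag T ∧ ∀ X : ι, (bag X).card ≤ w + 1}


/-! ### Elimination orders -/

namespace KNRS

/-- Eliminate `v`: delete its edges and make its neighbourhood a clique. -/
def fill {α : Type*} (H : SimpleGraph α) (v : α) : SimpleGraph α where
  Adj x y := x ≠ y ∧ x ≠ v ∧ y ≠ v ∧ (H.Adj x y ∨ (H.Adj v x ∧ H.Adj v y))
  symm := ⟨by
    rintro x y ⟨h1, h2, h3, h4⟩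
    exact ⟨h1.symm, h3, h2, h4.imp (fun h => h.symm) (fun h => h.symm)⟩⟩
  loopless := ⟨fun x h => h.1 rfl⟩

inductive Elim {α : Type*} (k : ℕ) : SimpleGraph α → Prop
  | nil : Elim k ⊥
  | step (H : SimpleGraph α) (v : α) (K : Finset α) (hK : ∀ u, u ∈ K ↔ H.Adj v u)
      (hne : K.Nonempty) (hk : K.card < k) (h : Elim k (fill H v)) : Elim k H

/-- the top node of a subtree separates it from the root -/
theorem top_on_path {ι : Type*} (T : SimpleGraph ι) (r X Y : ι)
    (p : T.Walk X Y) (hp : p.IsPath)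
    (hmin : ∀ Z ∈ p.support, T.dist r X ≤ T.dist r Z)
    (q : T.Walk r X) (hq : q.IsPath) (hql : q.length = T.dist r X) :
    (q.append p).IsPath := by
  classical
  rw [SimpleGraph.Walk.isPath_def, SimpleGraph.Walk.support_append, List.nodup_append]
  refine ⟨hq.support_nodup, hp.support_nodup.tail, ?_⟩
  intro a ha b hb hab
  subst hab
  have hbp : a ∈ p.support := List.mem_of_mem_tail hb
  have hne : a ≠ X := by
    rintro rfl
    have := hp.support_nodup
    rw [← SimpleGraph.Walk.cons_tail_support, List.nodup_cons] at this
    exact this.1 hb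
  have h1 := hmin a hbp
  have h2 : T.dist r a ≤ (q.takeUntil a ha).length := SimpleGraph.dist_le _
  have h3 := SimpleGraph.Walk.length_takeUntil_lt_length ha hne
  omega

theorem exists_simplicial {α ι : Type*} [Fintype α] [DecidableEq α] [Fintype ι]
    (H : SimpleGraph α) (bag : ι → Finset α) (T : SimpleGraph ι)
    (hT : T.IsTree)
    (hE : ∀ u v : α, H.Adj u v → ∃ X, u ∈ bag X ∧ v ∈ bag X)
    (hP : ∀ X Y Z : ι, ∀ p : T.Walk X Y, p.IsPath → Z ∈ p.support → bag X ∩ bag Y ⊆ bag Z)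
    (hH : H ≠ ⊥) :
    ∃ v u X, H.Adj v u ∧ v ∈ bag X ∧ ∀ w, H.Adj v w → w ∈ bag X := by
  classical
  obtain ⟨r⟩ := hT.connected.nonempty
  have htop : ∀ v : α, ∃ X : ι, (∃ u, H.Adj v u) →
      (v ∈ bag X ∧ ∀ Y, v ∈ bag Y → T.dist r X ≤ T.dist r Y) := by
    intro v
    by_cases hv : ∃ u, H.Adj v u
    · obtain ⟨u, hu⟩ := hv
      obtain ⟨X0, hX0, -⟩ := hE v u hu
      obtain ⟨X, hX, hm⟩ := Finset.exists_min_image (Finset.univ.filter (fun X => v ∈ bag X))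
        (fun X => T.dist r X) ⟨X0, by simp [hX0]⟩
      refine ⟨X, fun _ => ⟨by simpa using hX, fun Y hY => hm Y (by simpa using hY)⟩⟩
    · exact ⟨r, fun h => absurd h hv⟩
  choose top htop using htop
  obtain ⟨a, b, hab⟩ : ∃ a b, H.Adj a b := by
    by_contra hcon
    push Not at hcon
    apply hH
    ext x y
    simp [hcon x y]
  obtain ⟨v, hv, hmax⟩ := Finset.exists_max_image
    (Finset.univ.filter (fun v => ∃ u, H.Adj v u)) (fun v => T.dist r (top v))
    ⟨a, by simpa using ⟨b, hab⟩⟩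
  have hv' : ∃ u, H.Adj v u := by simpa using hv
  obtain ⟨u0, hu0⟩ := hv'
  refine ⟨v, u0, top v, hu0, (htop v ⟨u0, hu0⟩).1, ?_⟩
  intro w hw
  obtain ⟨hXv, hXmin⟩ := htop v ⟨u0, hu0⟩
  obtain ⟨hWw, hWmin⟩ := htop w ⟨v, hw.symm⟩
  have hle : T.dist r (top w) ≤ T.dist r (top v) := hmax w (by simpa using ⟨v, hw.symm⟩)
  obtain ⟨Y, hvY, hwY⟩ := hE v w hw
  obtain ⟨q1, hq1, hl1⟩ := hT.connected.exists_path_of_dist r (top v)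
  obtain ⟨q2, hq2, hl2⟩ := hT.connected.exists_path_of_dist r (top w)
  obtain ⟨p1, hp1, -⟩ := hT.connected.exists_path_of_dist (top v) Y
  obtain ⟨p2, hp2, -⟩ := hT.connected.exists_path_of_dist (top w) Y
  have A1 := top_on_path T r (top v) Y p1 hp1
    (fun Z hZ => hXmin Z (hP _ _ Z p1 hp1 hZ (by simp [hXv, hvY]))) q1 hq1 hl1
  have A2 := top_on_path T r (top w) Y p2 hp2
    (fun Z hZ => hWmin Z (hP _ _ Z p2 hp2 hZ (by simp [hWw, hwY]))) q2 hq2 hl2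
  have heq : q1.append p1 = q2.append p2 := by
    have := (hT.isAcyclic.subsingleton_path r Y).elim ⟨_, A1⟩ ⟨_, A2⟩
    exact congrArg Subtype.val this
  have hmem : top v ∈ (q2.append p2).support := by
    rw [← heq, SimpleGraph.Walk.mem_support_append_iff]
    exact Or.inl (SimpleGraph.Walk.end_mem_support _)
  rw [SimpleGraph.Walk.mem_support_append_iff] at hmem
  rcases hmem with h | h
  · by_cases hne : top v = top w
    · rw [hne]; exact hWw
    · have h2 : T.dist r (top v) ≤ (q2.takeUntil _ h).length := SimpleGraph.dist_le _
      have h3 := SimpleGraph.Walk.length_takeUntil_lt_length h hne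
      omega
  · exact hP _ _ _ p2 hp2 h (by simp [hWw, hwY])

theorem elim_of_decomp {α ι : Type*} [Fintype α] [DecidableEq α] [Fintype ι]
    (bag : ι → Finset α) (T : SimpleGraph ι)
    (hT : T.IsTree) (k : ℕ) (hk : ∀ X, (bag X).card ≤ k)
    (hP : ∀ X Y Z : ι, ∀ p : T.Walk X Y, p.IsPath → Z ∈ p.support → bag X ∩ bag Y ⊆ bag Z) :
    ∀ (n : ℕ) (H : SimpleGraph α) (S : Finset α), S.card = n →
      (∀ u v, H.Adj u v → u ∈ S) →
      (∀ u v : α, H.Adj u v → ∃ X, u ∈ bag X ∧ v ∈ bag X) → Elim k H := by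
  classical
  intro n
  induction n with
  | zero =>
    intro H S hS hsup hE
    have : H = ⊥ := by
      ext x y
      simp only [SimpleGraph.bot_adj, iff_false]
      intro h
      have := hsup x y h
      rw [Finset.card_eq_zero] at hS
      simp [hS] at this
    rw [this]; exact Elim.nil
  | succ n ih =>
    intro H S hS hsup hE
    by_cases hH : H = ⊥
    · rw [hH]; exact Elim.nil
    obtain ⟨v, u, X, hvu, hvX, hX⟩ := exists_simplicial H bag T hT hE hP hH
    refine Elim.step H v (Finset.univ.filter (fun w => H.Adj v w)) (by simp)
      ⟨u, by simpa using hvu⟩ ?_ ?_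
    · refine lt_of_lt_of_le ?_ (hk X)
      apply Finset.card_lt_card
      rw [Finset.ssubset_iff_of_subset]
      · exact ⟨v, hvX, by simp⟩
      · intro w hw
        exact hX w (by simpa using hw)
    · refine ih _ (S.erase v) ?_ ?_ ?_
      · rw [Finset.card_erase_of_mem (hsup v u hvu), hS]; rfl
      · rintro x y ⟨h1, h2, h3, h4⟩
        rw [Finset.mem_erase]
        refine ⟨h2, ?_⟩
        rcases h4 with h | ⟨h, -⟩
        · exact hsup x y h
        · exact hsup x v h.symm
      · rintro x y ⟨h1, h2, h3, h4⟩
        rcases h4 with h | ⟨h, h'⟩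
        · exact hE x y h
        · exact ⟨X, hX x h, hX y h'⟩

/-! ### Contracting an edge of a spanning edge set -/

theorem contract {α : Type*} [DecidableEq α] (H : SimpleGraph α) (v u : α) (hvu : H.Adj v u)
    (E : Finset (Sym2 α))
    (hE : ∀ x y, H.Adj x y → (SimpleGraph.fromEdgeSet (E : Set (Sym2 α))).Reachable x y) :
    ∃ E' : Finset (Sym2 α), E'.card + 1 ≤ E.card ∧
      ∀ x y, (fill H v).Adj x y →
        (SimpleGraph.fromEdgeSet (E' : Set (Sym2 α))).Reachable x y := by
  classical
  have hr := hE v u hvu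
  obtain ⟨w, hw⟩ : ∃ w, (SimpleGraph.fromEdgeSet (E : Set (Sym2 α))).Adj v w := by
    obtain ⟨p⟩ := hr
    cases p with
    | nil => exact absurd rfl hvu.ne
    | cons h _ => exact ⟨_, h⟩
  rw [SimpleGraph.fromEdgeSet_adj] at hw
  obtain ⟨hwE, hvw⟩ := hw
  let π : α → α := fun x => if x = v then w else x
  refine ⟨(E.erase s(v, w)).image (Sym2.map π), ?_, ?_⟩
  · have h1 : ((E.erase s(v, w)).image (Sym2.map π)).card ≤ (E.erase s(v, w)).card :=
      Finset.card_image_le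
    have h2 := Finset.card_erase_add_one (s := E) (a := s(v, w)) (by simpa using hwE)
    omega
  · set E' := (E.erase s(v, w)).image (Sym2.map π) with hE'
    have key : ∀ x y, (SimpleGraph.fromEdgeSet (E : Set (Sym2 α))).Reachable x y →
        (SimpleGraph.fromEdgeSet (E' : Set (Sym2 α))).Reachable (π x) (π y) := by
      rintro x y ⟨p⟩
      induction p with
      | nil => exact SimpleGraph.Reachable.refl _
      | @cons a b c h _ ih =>
        refine SimpleGraph.Reachable.trans ?_ ih
        rw [SimpleGraph.fromEdgeSet_adj] at h
        obtain ⟨hab, hne⟩ := h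
        by_cases heq : π a = π b
        · rw [heq]
        · apply SimpleGraph.Adj.reachable
          rw [SimpleGraph.fromEdgeSet_adj]
          refine ⟨?_, heq⟩
          rw [hE']
          simp only [Finset.coe_image, Set.mem_image]
          refine ⟨s(a, b), ?_, by simp⟩
          simp only [Finset.coe_erase, Set.mem_sdiff, Set.mem_singleton_iff]
          refine ⟨hab, ?_⟩
          intro h
          rw [Sym2.eq_iff] at h
          apply heq
          rcases h with ⟨rfl, rfl⟩ | ⟨rfl, rfl⟩ <;> simp [π]
    rintro x y ⟨h1, h2, h3, h4⟩
    have hxy : (SimpleGraph.fromEdgeSet (E : Set (Sym2 α))).Reachable x y := by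
      rcases h4 with h | ⟨h, h'⟩
      · exact hE x y h
      · exact (hE v x h).symm.trans (hE v y h')
    have := key x y hxy
    simpa [π, h2, h3] using this

/-! ### Counting good maps along an elimination order -/

/-- `φ` maps every clique of nonisolated vertices into the complex `S`. -/
def Good {α β : Type*} [DecidableEq β] (S : Finset β → Prop) (H : SimpleGraph α)
    (φ : α → β) : Prop :=
  (∀ C : Finset α, (∀ x ∈ C, ∀ y ∈ C, x ≠ y → H.Adj x y) → (∀ x ∈ C, ∃ y, H.Adj x y) →
    S (C.image φ)) ∧ ∀ x y, H.Adj x y → φ x ≠ φ y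

theorem good_update {α β : Type*} [DecidableEq α] [DecidableEq β]
    (S : Finset β → Prop) (hdown : ∀ A B, B ⊆ A → S A → S B)
    (H : SimpleGraph α) (v : α) (K : Finset α) (hK : ∀ u, u ∈ K ↔ H.Adj v u)
    (hsup : ∀ u ∈ K, ∃ y, (fill H v).Adj u y)
    (φ : α → β) (hφ : Good S (fill H v) φ) (x : β) (hx : x ∉ K.image φ)
    (hxS : S (insert x (K.image φ))) : Good S H (Function.update φ v x) := by
  refine ⟨?_, ?_⟩
  · intro C hC hCs
    by_cases hv : v ∈ C
    · refine hdown _ _ ?_ hxS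
      intro b hb
      rw [Finset.mem_image] at hb
      obtain ⟨a, ha, rfl⟩ := hb
      by_cases hav : a = v
      · subst hav; simp
      · rw [Function.update_of_ne hav]
        apply Finset.mem_insert_of_mem
        exact Finset.mem_image_of_mem _ ((hK a).2 (hC v hv a ha (Ne.symm hav)))
    · have : C.image (Function.update φ v x) = C.image φ := by
        apply Finset.image_congr
        intro a ha
        exact Function.update_of_ne (by rintro rfl; exact hv ha) _ _
      rw [this]
      have hne : ∀ a ∈ C, a ≠ v := by rintro a ha rfl; exact hv ha
      apply hφ.1
      · intro a ha b hb hab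
        exact ⟨hab, hne a ha, hne b hb, Or.inl (hC a ha b hb hab)⟩
      · intro a ha
        obtain ⟨z, hz⟩ := hCs a ha
        by_cases hzv : z = v
        · subst hzv
          exact hsup a ((hK a).2 hz.symm)
        · exact ⟨z, hz.ne, hne a ha, hzv, Or.inl hz⟩
  · intro a b hab
    by_cases hav : a = v
    · subst hav
      rw [Function.update_self, Function.update_of_ne hab.ne']
      rintro rfl
      exact hx (Finset.mem_image_of_mem _ ((hK b).2 hab))
    · by_cases hbv : b = v
      · subst hbv
        rw [Function.update_self, Function.update_of_ne hab.ne]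
        rintro rfl
        exact hx (Finset.mem_image_of_mem _ ((hK a).2 hab.symm))
      · rw [Function.update_of_ne hav, Function.update_of_ne hbv]
        exact hφ.2 a b ⟨hab.ne, hav, hbv, Or.inl hab⟩

theorem good_update_pair {α β : Type*} [DecidableEq α] [DecidableEq β]
    (S : Finset β → Prop) (hdown : ∀ A B, B ⊆ A → S A → S B)
    (H : SimpleGraph α) (v u : α) (hK : ∀ w, H.Adj v w ↔ w = u)
    (hsup : ∀ y, ¬ (fill H v).Adj u y)
    (φ : α → β) (hφ : Good S (fill H v) φ) (x y : β) (hxy : x ≠ y)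
    (hxS : S {x, y}) : Good S H (Function.update (Function.update φ u x) v y) := by
  have huv : H.Adj v u := (hK u).2 rfl
  have hu : ∀ z, H.Adj u z → z = v := by
    intro z hz
    by_contra hzv
    exact hsup z ⟨hz.ne, huv.ne', hzv, Or.inl hz⟩
  refine ⟨?_, ?_⟩
  · intro C hC hCs
    by_cases hv : v ∈ C ∨ u ∈ C
    · have hsub : ∀ a ∈ C, a = u ∨ a = v := by
        intro a ha
        by_contra hcon
        push Not at hcon
        rcases hv with hv | hv
        · exact hcon.1 ((hK a).1 (hC v hv a ha hcon.2.symm))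
        · exact hcon.2 (hu a (hC u hv a ha hcon.1.symm))
      refine hdown _ _ ?_ hxS
      intro b hb
      rw [Finset.mem_image] at hb
      obtain ⟨a, ha, rfl⟩ := hb
      rcases hsub a ha with rfl | rfl
      · rw [Function.update_of_ne huv.ne', Function.update_self]; simp
      · rw [Function.update_self]; simp
    · push Not at hv
      have hne : ∀ a ∈ C, a ≠ v ∧ a ≠ u := by
        intro a ha
        constructor
        · rintro rfl; exact hv.1 ha
        · rintro rfl; exact hv.2 ha
      have : C.image (Function.update (Function.update φ u x) v y) = C.image φ := by
        apply Finset.image_congr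
        intro a ha
        rw [Function.update_of_ne (hne a ha).1, Function.update_of_ne (hne a ha).2]
      rw [this]
      apply hφ.1
      · intro a ha b hb hab
        exact ⟨hab, (hne a ha).1, (hne b hb).1, Or.inl (hC a ha b hb hab)⟩
      · intro a ha
        obtain ⟨z, hz⟩ := hCs a ha
        by_cases hzv : z = v
        · subst hzv
          exact absurd ((hK a).1 hz.symm) (hne a ha).2
        · exact ⟨z, hz.ne, (hne a ha).1, hzv, Or.inl hz⟩
  · intro a b hab
    by_cases hav : a = v
    · subst hav
      have hb := (hK b).1 hab
      subst hb
      rw [Function.update_self, Function.update_of_ne hab.ne', Function.update_self]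
      exact hxy.symm
    · by_cases hbv : b = v
      · subst hbv
        have ha := (hK a).1 hab.symm
        subst ha
        rw [Function.update_self, Function.update_of_ne hab.ne, Function.update_self]
        exact hxy
      · have hau : a ≠ u := by rintro rfl; exact hbv (hu b hab)
        have hbu : b ≠ u := by rintro rfl; exact hav (hu a hab.symm)
        rw [Function.update_of_ne hav, Function.update_of_ne hbv,
          Function.update_of_ne hau, Function.update_of_ne hbu]
        exact hφ.2 a b ⟨hab.ne, hav, hbv, Or.inl hab⟩

open Classical in
theorem count_step {α β γ : Type*} [Fintype α] [Fintype β] [Fintype γ]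
    (P Q : (α → β) → Prop) (ext : (α → β) → γ → (α → β)) (rest : (α → β) → γ)
    (R : (α → β) → γ → Prop)
    (hinj : ∀ φ φ' c c', ext φ c = ext φ' c' → rest φ = rest φ' → φ = φ' ∧ c = c')
    (hQ : ∀ φ c, P φ → R φ c → Q (ext φ c)) (L : ℝ)
    (hL : ∀ φ, P φ → L ≤ ((Finset.univ.filter (R φ)).card : ℝ)) :
    ((Finset.univ.filter P).card : ℝ) * L ≤
      ((Finset.univ.filter Q).card : ℝ) * (Fintype.card γ : ℝ) := by
  have h1 : ((Finset.univ.filter P).card : ℝ) * L ≤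
      ∑ φ ∈ Finset.univ.filter P, ((Finset.univ.filter (R φ)).card : ℝ) := by
    rw [← nsmul_eq_mul]
    apply Finset.card_nsmul_le_sum
    intro φ hφ
    exact hL φ (by simpa using hφ)
  have h2 : ((Finset.univ.filter P).sigma (fun φ => Finset.univ.filter (R φ))).card ≤
      ((Finset.univ.filter Q) ×ˢ (Finset.univ : Finset γ)).card := by
    apply Finset.card_le_card_of_injOn (fun p => (ext p.1 p.2, rest p.1))
    · rintro ⟨φ, c⟩ h
      simp only [Finset.coe_sigma, Finset.mem_coe, Set.mem_sigma_iff, Finset.mem_filter,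
        Finset.mem_univ, true_and] at h
      simp only [Finset.coe_product, Set.mem_prod, Finset.mem_coe, Finset.mem_filter,
        Finset.mem_univ, true_and, and_true]
      exact hQ φ c h.1 h.2
    · rintro ⟨φ, c⟩ _ ⟨φ', c'⟩ _ h
      simp only [Prod.mk.injEq] at h
      obtain ⟨rfl, rfl⟩ := hinj _ _ _ _ h.1 h.2
      rfl
  rw [Finset.card_sigma, Finset.card_product, Finset.card_univ] at h2
  refine h1.trans ?_
  exact_mod_cast h2

open Classical in
theorem count_good {α β : Type*} [Fintype α] [Fintype β] [Nonempty β]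
    (S : Finset β → Prop) (hdown : ∀ A B, B ⊆ A → S A → S B) (hS0 : S ∅)
    (k : ℕ) (δ : ℝ) (hδ0 : 0 ≤ δ) (hδ1 : δ ≤ 1)
    (hext : ∀ A, S A → A.card < k →
      δ * (Fintype.card β : ℝ) ≤
        ((Finset.univ.filter (fun x => x ∉ A ∧ S (insert x A))).card : ℝ))
    (hpair : 2 ≤ k → δ * (Fintype.card β : ℝ) ^ 2 ≤
        ((Finset.univ.filter (fun p : β × β => p.1 ≠ p.2 ∧ S {p.1, p.2})).card : ℝ))
    (H : SimpleGraph α) (hH : Elim k H) :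
    ∀ E : Finset (Sym2 α),
    (∀ x y, H.Adj x y → (SimpleGraph.fromEdgeSet (E : Set (Sym2 α))).Reachable x y) →
    δ ^ E.card * (Fintype.card β : ℝ) ^ (Fintype.card α) ≤
      ((Finset.univ.filter (fun φ : α → β => Good S H φ)).card : ℝ) := by
  have hn : (0 : ℝ) < (Fintype.card β : ℝ) := by exact_mod_cast Fintype.card_pos
  induction hH with
  | nil =>
    intro E _
    have : (Finset.univ.filter (fun φ : α → β => Good S (⊥ : SimpleGraph α) φ)) =
        Finset.univ := by
      apply Finset.filter_true_of_mem
      intro φ _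
      refine ⟨?_, by simp⟩
      intro C _ hC
      have : C = ∅ := by
        apply Finset.eq_empty_of_forall_notMem
        intro x hx
        obtain ⟨y, hy⟩ := hC x hx
        simp at hy
      rw [this]; simpa using hS0
    rw [this, Finset.card_univ, Fintype.card_fun]
    push_cast
    exact mul_le_of_le_one_left (by positivity) (pow_le_one₀ hδ0 hδ1)
  | step H v K hK hne hk _ ih =>
    intro E hE
    obtain ⟨u, hu⟩ := hne
    have hvu := (hK u).1 hu
    obtain ⟨E', hE'c, hE'⟩ := contract H v u hvu E hE
    have ih' := ih E' hE'
    have hpow : δ ^ E.card ≤ δ ^ E'.card * δ := by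
      rw [← pow_succ]
      exact pow_le_pow_of_le_one hδ0 hδ1 hE'c
    set N := ((Finset.univ.filter (fun φ : α → β => Good S (fill H v) φ)).card : ℝ) with hN
    set M := ((Finset.univ.filter (fun φ : α → β => Good S H φ)).card : ℝ) with hM
    suffices hs : N * δ ≤ M by
      calc δ ^ E.card * (Fintype.card β : ℝ) ^ (Fintype.card α)
          ≤ δ ^ E'.card * δ * (Fintype.card β : ℝ) ^ (Fintype.card α) := by gcongr
        _ = (δ ^ E'.card * (Fintype.card β : ℝ) ^ (Fintype.card α)) * δ := by ring
        _ ≤ N * δ := by gcongr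
        _ ≤ M := hs
    by_cases hsup : ∀ u ∈ K, ∃ y, (fill H v).Adj u y
    · have := count_step (Good S (fill H v)) (Good S H)
        (fun φ (x : β) => Function.update φ v x) (fun φ => φ v)
        (fun φ x => x ∉ K.image φ ∧ S (insert x (K.image φ)))
        (by
          intro φ φ' c c' h1 h2
          constructor
          · funext a
            by_cases ha : a = v
            · rw [ha]; exact h2
            · have := congrFun h1 a
              simpa [ha] using this
          · simpa using congrFun h1 v)
        (fun φ c hφ hR => good_update S hdown H v K hK hsup φ hφ c hR.1 hR.2)
        (δ * (Fintype.card β : ℝ))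
        (by
          intro φ hφ
          refine (hext (K.image φ) ?_ ?_).trans (le_of_eq ?_)
          · apply hφ.1
            · intro x hx y hy hxy
              have h1 := (hK x).1 hx
              have h2 := (hK y).1 hy
              exact ⟨hxy, h1.ne', h2.ne', Or.inr ⟨h1, h2⟩⟩
            · exact hsup
          · exact lt_of_le_of_lt Finset.card_image_le hk
          · congr)
      have this : N * (δ * (Fintype.card β : ℝ)) ≤ M * (Fintype.card β : ℝ) := this
      rw [← mul_assoc] at this
      exact le_of_mul_le_mul_right this hn
    · push Not at hsup
      obtain ⟨u, huK, hsup⟩ := hsup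
      have hvu := (hK u).1 huK
      have hKu : ∀ w, H.Adj v w ↔ w = u := by
        intro w
        constructor
        · intro hw
          by_contra hwu
          exact hsup w ⟨Ne.symm hwu, hvu.ne', hw.ne', Or.inr ⟨hvu, hw⟩⟩
        · rintro rfl; exact hvu
      have hk2 : 2 ≤ k := by
        have : 0 < K.card := Finset.card_pos.2 ⟨u, huK⟩
        omega
      have := count_step (Good S (fill H v)) (Good S H)
        (fun φ (p : β × β) => Function.update (Function.update φ u p.1) v p.2)
        (fun φ => (φ u, φ v))
        (fun φ p => p.1 ≠ p.2 ∧ S {p.1, p.2})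
        (by
          intro φ φ' c c' h1 h2
          simp only [Prod.mk.injEq] at h2
          constructor
          · funext a
            by_cases ha : a = v
            · rw [ha]; exact h2.2
            · by_cases hau : a = u
              · rw [hau]; exact h2.1
              · have := congrFun h1 a
                simpa [ha, hau] using this
          · have e1 := congrFun h1 v
            have e2 := congrFun h1 u
            simp [hvu.ne'] at e1 e2
            exact Prod.ext e2 e1)
        (fun φ c hφ hR => good_update_pair S hdown H v u hKu hsup φ hφ c.1 c.2 hR.1 hR.2)
        (δ * (Fintype.card β : ℝ) ^ 2) 
        (fun φ _ => (hpair hk2).trans (le_of_eq (by congr)))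
      have this : N * (δ * (Fintype.card β : ℝ) ^ 2) ≤ M * (Fintype.card (β × β) : ℝ) := this
      rw [← mul_assoc, Fintype.card_prod] at this
      push_cast at this
      rw [← sq] at this
      exact le_of_mul_le_mul_right this (by positivity)

/-! ### Pruning a uniform family -/

/-- `A` is contained in a member of `F`. -/
def Shadow {β : Type*} (F : Finset (Finset β)) (A : Finset β) : Prop := ∃ C ∈ F, A ⊆ C

open Classical in
theorem deg_le {β : Type*} [Fintype β] (k : ℕ) (F : Finset (Finset β))
    (hF : ∀ C ∈ F, C.card = k) (A : Finset β) :
    (F.filter (fun C => A ⊆ C)).card ≤ (Fintype.card β) ^ (k - A.card) := by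
  have h1 : (F.filter (fun C => A ⊆ C)).card ≤
      (Finset.powersetCard (k - A.card) (Finset.univ : Finset β)).card := by
    apply Finset.card_le_card_of_injOn (fun C => C \ A)
    · intro C hC
      have hC := Finset.mem_filter.1 (Finset.mem_coe.1 hC)
      simp only [Finset.mem_coe, Finset.mem_powersetCard, Finset.subset_univ, true_and]
      rw [Finset.card_sdiff_of_subset hC.2, hF C hC.1]
    · intro C hC D hD h
      have hC := Finset.mem_filter.1 (Finset.mem_coe.1 hC)
      have hD := Finset.mem_filter.1 (Finset.mem_coe.1 hD)
      dsimp only at h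
      rw [← Finset.sdiff_union_of_subset hC.2, h, Finset.sdiff_union_of_subset hD.2]
  refine h1.trans ?_
  rw [Finset.card_powersetCard, Finset.card_univ]
  exact Nat.choose_le_pow _ _

open Classical in
theorem prune {β : Type*} [Fintype β] (k : ℕ) (F0 : Finset (Finset β)) (δ : ℝ) (hδ : 0 ≤ δ)
    (hbig : k * (δ * (Fintype.card β : ℝ) ^ k) < (F0.card : ℝ)) :
    ∃ F ⊆ F0, F.Nonempty ∧ ∀ A : Finset β, A.card < k → Shadow F A →
      δ * (Fintype.card β : ℝ) ^ (k - A.card) ≤ ((F.filter (fun C => A ⊆ C)).card : ℝ) := by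
  let w : Finset β → ℝ := fun A => δ * (Fintype.card β : ℝ) ^ (k - A.card)
  have hw : ∀ A, 0 ≤ w A := fun A => by positivity
  let sh : Finset (Finset β) → Finset (Finset β) := fun F =>
    Finset.univ.filter (fun A => A.card < k ∧ Shadow F A)
  let Φ : Finset (Finset β) → ℝ := fun F => (F.card : ℝ) - ∑ A ∈ sh F, w A
  obtain ⟨F, hF, hmax⟩ := Finset.exists_max_image F0.powerset Φ ⟨F0, by simp⟩
  have hF' : F ⊆ F0 := by simpa using hF
  have hsum : ∑ A ∈ sh F0, w A ≤ k * (δ * (Fintype.card β : ℝ) ^ k) := by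
    calc ∑ A ∈ sh F0, w A
        ≤ ∑ A ∈ Finset.univ.filter (fun A : Finset β => A.card < k), w A := by
          apply Finset.sum_le_sum_of_subset_of_nonneg
          · intro A hA
            simp only [sh, Finset.mem_filter, Finset.mem_univ, true_and] at hA ⊢
            exact hA.1
          · intro A _ _; exact hw A
      _ = ∑ s ∈ Finset.range k, ∑ A ∈ (Finset.univ.filter
            (fun A : Finset β => A.card < k)).filter (fun A => A.card = s), w A := by
          rw [Finset.sum_fiberwise_of_maps_to]
          intro A hA
          simpa using hA
      _ ≤ ∑ s ∈ Finset.range k, (δ * (Fintype.card β : ℝ) ^ k) := by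
          apply Finset.sum_le_sum
          intro s hs
          have hs' : s < k := by simpa using hs
          have hc : ((Finset.univ.filter
            (fun A : Finset β => A.card < k)).filter (fun A => A.card = s)).card ≤
              (Fintype.card β) ^ s := by
            calc _ ≤ (Finset.powersetCard s (Finset.univ : Finset β)).card := by
                  apply Finset.card_le_card
                  intro A hA
                  simp only [Finset.mem_filter] at hA
                  simp [hA.2]
              _ ≤ _ := by
                  rw [Finset.card_powersetCard, Finset.card_univ]
                  exact Nat.choose_le_pow _ _
          calc _ = ∑ A ∈ (Finset.univ.filter
            (fun A : Finset β => A.card < k)).filter (fun A => A.card = s),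
              δ * (Fintype.card β : ℝ) ^ (k - s) := by
                apply Finset.sum_congr rfl
                intro A hA
                simp only [Finset.mem_filter] at hA
                simp only [w, hA.2]
            _ = (((Finset.univ.filter
            (fun A : Finset β => A.card < k)).filter (fun A => A.card = s)).card : ℝ) *
              (δ * (Fintype.card β : ℝ) ^ (k - s)) := by
                rw [Finset.sum_const, nsmul_eq_mul]
            _ ≤ (Fintype.card β : ℝ) ^ s * (δ * (Fintype.card β : ℝ) ^ (k - s)) := by
                gcongr
                exact_mod_cast hc
            _ = δ * (Fintype.card β : ℝ) ^ k := by
                rw [mul_left_comm, ← pow_add, Nat.add_sub_cancel' hs'.le]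
      _ = _ := by rw [Finset.sum_const, nsmul_eq_mul, Finset.card_range]
  refine ⟨F, hF', ?_, ?_⟩
  · rw [Finset.nonempty_iff_ne_empty]
    rintro rfl
    have h0 := hmax F0 (by simp)
    have : Φ ∅ ≤ 0 := by
      simp only [Φ, Finset.card_empty, Nat.cast_zero, zero_sub, neg_nonpos]
      exact Finset.sum_nonneg (fun A _ => hw A)
    simp only [Φ] at h0 this
    linarith
  · intro A hA hSA
    have h1 := hmax (F.filter (fun C => ¬ A ⊆ C))
      (by simpa using (Finset.filter_subset _ _).trans hF')
    have hcard : ((F.filter (fun C => A ⊆ C)).card : ℝ) +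
        ((F.filter (fun C => ¬ A ⊆ C)).card : ℝ) = (F.card : ℝ) := by
      exact_mod_cast Finset.card_filter_add_card_filter_not _
    have hmemA : A ∈ sh F := by simp [sh, hA, hSA]
    have h2 : ∑ B ∈ sh (F.filter (fun C => ¬ A ⊆ C)), w B ≤ ∑ B ∈ (sh F).erase A, w B := by
      apply Finset.sum_le_sum_of_subset_of_nonneg
      · intro B hB
        simp only [sh, Finset.mem_filter, Finset.mem_univ, true_and] at hB
        obtain ⟨hBk, C, hC, hBC⟩ := hB
        rw [Finset.mem_filter] at hC
        simp only [sh, Finset.mem_erase, Finset.mem_filter, Finset.mem_univ, true_and]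
        refine ⟨?_, hBk, C, hC.1, hBC⟩
        rintro rfl
        exact hC.2 hBC
      · intro B _ _; exact hw B
    have h3 := Finset.sum_erase_add (sh F) w hmemA
    simp only [Φ] at h1
    change w A ≤ _
    linarith

open Classical in
theorem shadow_ext {β : Type*} [Fintype β] [Nonempty β] (k : ℕ) (F : Finset (Finset β))
    (hF : ∀ C ∈ F, C.card = k) (δ : ℝ)
    (h : ∀ A : Finset β, A.card < k → Shadow F A →
      δ * (Fintype.card β : ℝ) ^ (k - A.card) ≤ ((F.filter (fun C => A ⊆ C)).card : ℝ))
    (A : Finset β) (hA : Shadow F A) (hAk : A.card < k) :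
    δ * (Fintype.card β : ℝ) ≤
        ((Finset.univ.filter (fun x => x ∉ A ∧ Shadow F (insert x A))).card : ℝ) := by
  have hn : (0 : ℝ) < (Fintype.card β : ℝ) := by exact_mod_cast Fintype.card_pos
  have h1 : (F.filter (fun C => A ⊆ C)).card ≤
      (Finset.univ.filter (fun x => x ∉ A ∧ Shadow F (insert x A))).card *
        (Fintype.card β) ^ (k - A.card - 1) := by
    refine le_trans (Finset.card_le_card ?_) (Finset.card_biUnion_le_card_mul
      (Finset.univ.filter (fun x => x ∉ A ∧ Shadow F (insert x A)))
      (fun x => F.filter (fun C => insert x A ⊆ C)) _ ?_)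
    · intro C hC
      rw [Finset.mem_filter] at hC
      obtain ⟨x, hxC, hxA⟩ : ∃ x ∈ C, x ∉ A := by
        by_contra hcon
        push Not at hcon
        have := Finset.card_le_card (show C ⊆ A from hcon)
        rw [hF C hC.1] at this
        omega
      have hins : insert x A ⊆ C := Finset.insert_subset hxC hC.2
      rw [Finset.mem_biUnion]
      exact ⟨x, by simp only [Finset.mem_filter, Finset.mem_univ, true_and]; exact ⟨hxA, C, hC.1, hins⟩,
        Finset.mem_filter.2 ⟨hC.1, hins⟩⟩
    · intro x hx
      simp only [Finset.mem_filter, Finset.mem_univ, true_and] at hx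
      have := deg_le k F hF (insert x A)
      rwa [Finset.card_insert_of_notMem hx.1, Nat.sub_add_eq] at this
  have h2 := h A hAk hA
  have h3 : ((F.filter (fun C => A ⊆ C)).card : ℝ) ≤
      ((Finset.univ.filter (fun x => x ∉ A ∧ Shadow F (insert x A))).card : ℝ) *
        (Fintype.card β : ℝ) ^ (k - A.card - 1) := by exact_mod_cast h1
  have h4 : (Fintype.card β : ℝ) ^ (k - A.card) =
      (Fintype.card β : ℝ) * (Fintype.card β : ℝ) ^ (k - A.card - 1) := by
    rw [← pow_succ']; congr 1; omega
  rw [h4, ← mul_assoc] at h2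
  exact le_of_mul_le_mul_right (h2.trans h3) (by positivity)

open Classical in
theorem shadow_pair {β : Type*} [Fintype β] [Nonempty β] (k : ℕ) (F : Finset (Finset β))
    (hF : ∀ C ∈ F, C.card = k) (δ : ℝ) (hFn : F.Nonempty)
    (h : ∀ A : Finset β, A.card < k → Shadow F A →
      δ * (Fintype.card β : ℝ) ^ (k - A.card) ≤ ((F.filter (fun C => A ⊆ C)).card : ℝ))
    (hk : 2 ≤ k) :
    δ * (Fintype.card β : ℝ) ^ 2 ≤
        ((Finset.univ.filter
          (fun p : β × β => p.1 ≠ p.2 ∧ Shadow F {p.1, p.2})).card : ℝ) := by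
  have hn : (0 : ℝ) < (Fintype.card β : ℝ) := by exact_mod_cast Fintype.card_pos
  have h1 : F.card ≤
      (Finset.univ.filter (fun p : β × β => p.1 ≠ p.2 ∧ Shadow F {p.1, p.2})).card *
        (Fintype.card β) ^ (k - 2) := by
    refine le_trans (Finset.card_le_card ?_) (Finset.card_biUnion_le_card_mul
      (Finset.univ.filter (fun p : β × β => p.1 ≠ p.2 ∧ Shadow F {p.1, p.2}))
      (fun p => F.filter (fun C => {p.1, p.2} ⊆ C)) _ ?_)
    · intro C hC
      obtain ⟨x, hx, y, hy, hxy⟩ := Finset.one_lt_card.1 (show 1 < C.card by rw [hF C hC]; omega)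
      have hins : ({x, y} : Finset β) ⊆ C :=
        Finset.insert_subset hx (Finset.singleton_subset_iff.2 hy)
      rw [Finset.mem_biUnion]
      exact ⟨(x, y), by simp only [Finset.mem_filter, Finset.mem_univ, true_and]; exact ⟨hxy, C, hC, hins⟩,
        Finset.mem_filter.2 ⟨hC, hins⟩⟩
    · intro p hp
      simp only [Finset.mem_filter, Finset.mem_univ, true_and] at hp
      have := deg_le k F hF {p.1, p.2}
      rwa [Finset.card_pair hp.1] at this
  obtain ⟨C, hC⟩ := hFn
  have h2 := h ∅ (by simp; omega) ⟨C, hC, by simp⟩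
  simp only [Finset.card_empty, Nat.sub_zero, Finset.empty_subset, Finset.filter_true] at h2
  have h3 : (F.card : ℝ) ≤
      ((Finset.univ.filter (fun p : β × β => p.1 ≠ p.2 ∧ Shadow F {p.1, p.2})).card : ℝ) *
        (Fintype.card β : ℝ) ^ (k - 2) := by exact_mod_cast h1
  have h4 : (Fintype.card β : ℝ) ^ k =
      (Fintype.card β : ℝ) ^ 2 * (Fintype.card β : ℝ) ^ (k - 2) := by
    rw [← pow_add]; congr 1; omega
  rw [h4, ← mul_assoc] at h2
  exact le_of_mul_le_mul_right (h2.trans h3) (by positivity)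

/-! ### Homomorphism counts -/

open Classical in
theorem card_hom {α β : Type*} [Fintype α] [Fintype β] (H : SimpleGraph α) (G : SimpleGraph β) :
    Nat.card (H →g G) =
      (Finset.univ.filter (fun φ : α → β => ∀ x y, H.Adj x y → G.Adj (φ x) (φ y))).card := by
  rw [← Fintype.card_subtype, ← Nat.card_eq_fintype_card]
  exact Nat.card_congr
    { toFun := fun f => ⟨f, fun x y h => f.map_adj h⟩
      invFun := fun f => ⟨f.1, fun {x y} h => f.2 x y h⟩
      left_inv := fun f => rfl
      right_inv := fun f => rfl }

theorem homDensity_nonneg {α β : Type*} [Fintype α] [Fintype β]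
    (H : SimpleGraph α) (G : SimpleGraph β) : 0 ≤ homDensity H G := by
  unfold homDensity; positivity

theorem homDensity_le_one {α β : Type*} [Fintype α] [Fintype β]
    (H : SimpleGraph α) (G : SimpleGraph β) : homDensity H G ≤ 1 := by
  classical
  unfold homDensity
  apply div_le_one_of_le₀ _ (by positivity)
  rw [card_hom]
  have := Finset.card_filter_le (Finset.univ : Finset (α → β))
    (fun φ : α → β => ∀ x y, H.Adj x y → G.Adj (φ x) (φ y))
  rw [Finset.card_univ, Fintype.card_fun] at this
  exact_mod_cast this

/-- Weak form with a constant. -/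
theorem weak_bound {α β : Type*} [Fintype α] [Fintype β] [Nonempty β]
    (H : SimpleGraph α) (G : SimpleGraph β) (k : ℕ) (hH : Elim k H)
    (hpos : 0 < homDensity (⊤ : SimpleGraph (Fin k)) G) :
    (homDensity (⊤ : SimpleGraph (Fin k)) G / ((k + 1) * (k : ℝ) ^ k)) ^ (edgeCount H) ≤
      homDensity H G := by
  classical
  have hn : (0 : ℝ) < (Fintype.card β : ℝ) := by exact_mod_cast Fintype.card_pos
  set τ := homDensity (⊤ : SimpleGraph (Fin k)) G with hτ
  have hτ1 : τ ≤ 1 := homDensity_le_one _ _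
  set T := Finset.univ.filter
    (fun φ : Fin k → β => ∀ x y, (⊤ : SimpleGraph (Fin k)).Adj x y → G.Adj (φ x) (φ y)) with hT
  have hTc : (T.card : ℝ) = τ * (Fintype.card β : ℝ) ^ k := by
    rw [hτ, homDensity, card_hom, Fintype.card_fin, div_mul_cancel₀ _ (by positivity)]
    refine congrArg _ ?_
    rw [hT]
    congr
    exact Subsingleton.elim _ _
  have hkk : (0 : ℝ) < (k : ℝ) ^ k := by
    rcases Nat.eq_zero_or_pos k with rfl | hk
    · simp
    · positivity
  have hkk1 : (1 : ℝ) ≤ (k : ℝ) ^ k := by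
    rcases Nat.eq_zero_or_pos k with rfl | hk
    · simp
    · exact one_le_pow₀ (by exact_mod_cast hk)
  set F0 : Finset (Finset β) := T.image (fun f => Finset.univ.image f) with hF0
  have hTinj : ∀ f ∈ T, Function.Injective f := by
    intro f hf x y hxy
    by_contra hne
    have := (Finset.mem_filter.1 hf).2 x y (by simpa using hne)
    exact this.ne hxy
  have hF0k : ∀ C ∈ F0, C.card = k := by
    intro C hC
    obtain ⟨f, hf, rfl⟩ := Finset.mem_image.1 hC
    rw [Finset.card_image_of_injective _ (hTinj f hf)]
    simp
  have hF0c : ∀ C ∈ F0, ∀ x ∈ C, ∀ y ∈ C, x ≠ y → G.Adj x y := by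
    intro C hC x hx y hy hxy
    obtain ⟨f, hf, rfl⟩ := Finset.mem_image.1 hC
    obtain ⟨i, -, rfl⟩ := Finset.mem_image.1 hx
    obtain ⟨j, -, rfl⟩ := Finset.mem_image.1 hy
    refine (Finset.mem_filter.1 hf).2 i j ?_
    simp only [SimpleGraph.top_adj]
    rintro rfl
    exact hxy rfl
  have hTF : T.card ≤ k ^ k * F0.card := by
    apply Finset.card_le_mul_card_image_of_maps_to (f := fun f : Fin k → β => Finset.univ.image f)
    · intro f hf
      exact Finset.mem_image_of_mem _ hf
    · intro C hC
      calc _ ≤ (Fintype.piFinset (fun _ : Fin k => C)).card := by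
            apply Finset.card_le_card
            intro f hf
            rw [Finset.mem_filter] at hf
            rw [Fintype.mem_piFinset]
            intro i
            rw [← hf.2]
            exact Finset.mem_image_of_mem _ (Finset.mem_univ _)
        _ = k ^ k := by
            rw [Fintype.card_piFinset]; simp [hF0k C hC]
  set δ := τ / ((k + 1) * (k : ℝ) ^ k) with hδ
  have hδ0 : 0 < δ := by positivity
  have hδ1 : δ ≤ 1 := by
    apply div_le_one_of_le₀ _ (by positivity)
    refine hτ1.trans ?_
    have : (1 : ℝ) ≤ k + 1 := by
      have : (0 : ℝ) ≤ k := by positivity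
      linarith
    nlinarith
  have hbig : k * (δ * (Fintype.card β : ℝ) ^ k) < (F0.card : ℝ) := by
    have e1 : (T.card : ℝ) ≤ (k : ℝ) ^ k * (F0.card : ℝ) := by exact_mod_cast hTF
    rw [hTc] at e1
    have e2 : τ = δ * ((k + 1) * (k : ℝ) ^ k) := by rw [hδ]; field_simp
    have e3 : (k : ℝ) ^ k * (((k : ℝ) + 1) * (δ * (Fintype.card β : ℝ) ^ k)) ≤
        (k : ℝ) ^ k * (F0.card : ℝ) := by
      refine le_trans (le_of_eq ?_) e1
      rw [e2]; ring
    have e4 := le_of_mul_le_mul_left e3 hkk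
    have e5 : 0 < δ * (Fintype.card β : ℝ) ^ k := by positivity
    linarith
  obtain ⟨F, hFF0, hFn, hdeg⟩ := prune k F0 δ hδ0.le hbig
  have hFk : ∀ C ∈ F, C.card = k := fun C hC => hF0k C (hFF0 hC)
  obtain ⟨C0, hC0⟩ := hFn
  have main := count_good (Shadow F)
    (by rintro A B hBA ⟨C, hC, hAC⟩; exact ⟨C, hC, hBA.trans hAC⟩)
    ⟨C0, hC0, by simp⟩ k δ hδ0.le hδ1
    (fun A hA hAk => shadow_ext k F hFk δ hdeg A hA hAk)
    (fun hk => shadow_pair k F hFk δ ⟨C0, hC0⟩ hdeg hk)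
    H hH H.edgeFinset
    (by
      intro x y hxy
      apply SimpleGraph.Adj.reachable
      simpa [SimpleGraph.fromEdgeSet_adj] using hxy)
  have hec : H.edgeFinset.card = edgeCount H := by
    rw [edgeCount, Nat.card_eq_fintype_card, SimpleGraph.edgeFinset_card]
  rw [hec] at main
  rw [homDensity, le_div_iff₀ (by positivity)]
  refine main.trans ?_
  rw [card_hom]
  norm_cast
  apply Finset.card_le_card
  intro φ hφ
  simp only [Finset.mem_filter, Finset.mem_univ, true_and] at hφ ⊢
  intro x y hxy
  obtain ⟨C, hC, hsub⟩ := hφ.1 {x, y}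
    (by
      intro a ha b hb hab
      simp only [Finset.mem_insert, Finset.mem_singleton] at ha hb
      rcases ha with rfl | rfl <;> rcases hb with rfl | rfl
      · exact absurd rfl hab
      · exact hxy
      · exact hxy.symm
      · exact absurd rfl hab)
    (by
      intro a ha
      simp only [Finset.mem_insert, Finset.mem_singleton] at ha
      rcases ha with rfl | rfl
      · exact ⟨_, hxy⟩
      · exact ⟨_, hxy.symm⟩)
  exact hF0c C (hFF0 hC) _ (hsub (by simp)) _ (hsub (by simp)) (hφ.2 x y hxy)

/-! ### The tensor power trick -/

/-- Tensor (categorical) power. -/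
def pw {β : Type*} (G : SimpleGraph β) (j : ℕ) : SimpleGraph (Fin (j + 1) → β) where
  Adj f g := ∀ i, G.Adj (f i) (g i)
  symm := ⟨fun _ _ h i => (h i).symm⟩
  loopless := ⟨fun _ h => (h 0).ne rfl⟩

theorem homDensity_pw {α β : Type*} [Fintype α] [Fintype β]
    (H : SimpleGraph α) (G : SimpleGraph β) (j : ℕ) :
    homDensity H (pw G j) = homDensity H G ^ (j + 1) := by
  have h : Nat.card (H →g pw G j) = Nat.card (H →g G) ^ (j + 1) := by
    have e : (H →g pw G j) ≃ (Fin (j + 1) → (H →g G)) :=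
      { toFun := fun f i => ⟨fun x => f x i, fun {x y} h => f.map_adj h i⟩
        invFun := fun f => ⟨fun x i => f i x, fun {x y} h i => (f i).map_adj h⟩
        left_inv := fun f => rfl
        right_inv := fun f => rfl }
    rw [Nat.card_congr e, Nat.card_fun]
    simp
  unfold homDensity
  rw [h, div_pow]
  congr 1
  · push_cast; rfl
  · simp only [Fintype.card_fun, Fintype.card_fin]
    push_cast
    rw [← pow_mul, ← pow_mul, mul_comm]

theorem strong_bound {α β : Type*} [Fintype α] [Fintype β] [Nonempty β]
    (H : SimpleGraph α) (G : SimpleGraph β) (k : ℕ) (hH : Elim k H)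
    (hpos : 0 < homDensity (⊤ : SimpleGraph (Fin k)) G) :
    homDensity (⊤ : SimpleGraph (Fin k)) G ^ (edgeCount H) ≤ homDensity H G := by
  set τ := homDensity (⊤ : SimpleGraph (Fin k)) G with hτ
  set h := homDensity H G with hh
  set m := edgeCount H
  set D : ℝ := (k + 1) * (k : ℝ) ^ k with hD
  have hD0 : 0 < D := by
    rcases Nat.eq_zero_or_pos k with rfl | hk
    · simp [hD]
    · positivity
  have hh0 : 0 ≤ h := homDensity_nonneg _ _
  have key : ∀ j : ℕ, (τ ^ (j + 1) / D) ^ m ≤ h ^ (j + 1) := by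
    intro j
    have := weak_bound H (pw G j) k hH (by rw [homDensity_pw]; positivity)
    rwa [homDensity_pw, homDensity_pw] at this
  by_contra hcon
  push Not at hcon
  have hτm : 0 < τ ^ m := by positivity
  have hr : h / τ ^ m < 1 := (div_lt_one hτm).2 hcon
  obtain ⟨j, hj⟩ := exists_pow_lt_of_lt_one (show (0 : ℝ) < (1 / D) ^ m by positivity) hr
  have h1 : (h / τ ^ m) ^ (j + 1) ≤ (h / τ ^ m) ^ j :=
    pow_le_pow_of_le_one (by positivity) hr.le (Nat.le_succ j)
  have h2 := key j
  have h3 : (1 / D) ^ m ≤ (h / τ ^ m) ^ (j + 1) := by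
    rw [div_pow h, le_div_iff₀ (by positivity)]
    refine le_trans (le_of_eq ?_) h2
    rw [div_pow, div_pow, one_pow, ← pow_mul, ← pow_mul, mul_comm m]
    ring
  linarith

/-! ### Cliques in locally dense graphs -/

open Classical in
/-- number of ordered cliques of size `r` inside `X` -/
noncomputable def cl {β : Type*} [Fintype β] (G : SimpleGraph β) (r : ℕ) (X : Finset β) : ℕ :=
  (Finset.univ.filter (fun f : Fin r → β => (∀ i, f i ∈ X) ∧
    ∀ i j, i ≠ j → G.Adj (f i) (f j))).card

open Classical in
theorem cl_succ {β : Type*} [Fintype β] (G : SimpleGraph β) (r : ℕ) (X : Finset β) :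
    ∑ v ∈ X, cl G r (X.filter (fun w => G.Adj v w)) ≤ cl G (r + 1) X := by
  unfold cl
  rw [← Finset.card_sigma]
  apply Finset.card_le_card_of_injOn (fun p => (Fin.cons p.1 p.2 : Fin (r + 1) → β))
  · rintro ⟨v, f⟩ h
    simp only [Finset.mem_coe, Finset.mem_sigma, Finset.mem_filter, Finset.mem_univ,
      true_and] at h
    obtain ⟨hv, hf, hadj⟩ := h
    simp only [Finset.mem_coe, Finset.mem_filter, Finset.mem_univ, true_and]
    constructor
    · intro i
      refine Fin.cases ?_ (fun i => ?_) i
      · simpa using hv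
      · simpa using (hf i).1
    · intro i j
      refine Fin.cases ?_ (fun i => ?_) i <;> refine Fin.cases ?_ (fun j => ?_) j
      · intro h; exact absurd rfl h
      · intro _; simpa using (hf j).2
      · intro _; simpa using (hf i).2.symm
      · intro h
        simpa using hadj i j (fun e => h (by rw [e]))
  · rintro ⟨v, f⟩ _ ⟨v', f'⟩ _ h
    have h0 := Fin.cons_inj.1 h
    obtain ⟨h1, h2⟩ := h0
    dsimp only at h1 h2
    subst h1 h2
    rfl

open Classical in
theorem sum_deg {β : Type*} [Fintype β] (G : SimpleGraph β) (X : Finset β) :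
    2 * Nat.card {e : Sym2 β // e ∈ G.edgeSet ∧ ∀ v ∈ e, v ∈ X} ≤
      ∑ v ∈ X, (X.filter (fun w => G.Adj v w)).card := by
  rw [Nat.card_eq_fintype_card, Fintype.card_subtype, ← Finset.card_sigma]
  apply Finset.mul_card_image_le_card_of_maps_to
    (f := fun p : (_ : β) × β => s(p.1, p.2))
  · rintro ⟨a, b⟩ h
    simp only [Finset.mem_sigma, Finset.mem_filter] at h
    simp only [Finset.mem_filter, Finset.mem_univ, true_and, SimpleGraph.mem_edgeSet]
    refine ⟨h.2.2, ?_⟩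
    intro v hv
    rcases Sym2.mem_iff.1 hv with rfl | rfl
    · exact h.1
    · exact h.2.1
  · intro e
    induction e using Sym2.inductionOn with
    | hf a b =>
      intro h
      simp only [Finset.mem_filter, Finset.mem_univ, true_and, SimpleGraph.mem_edgeSet] at h
      obtain ⟨hab, hX⟩ := h
      have ha := hX a (by simp)
      have hb := hX b (by simp)
      have hsub : ({⟨a, b⟩, ⟨b, a⟩} : Finset ((_ : β) × β)) ⊆
          (X.sigma (fun v => X.filter (fun w => G.Adj v w))).filter
            (fun p => s(p.1, p.2) = s(a, b)) := by
        intro p hp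
        simp only [Finset.mem_insert, Finset.mem_singleton] at hp
        rcases hp with rfl | rfl
        · simp [ha, hb, hab]
        · simp [ha, hb, hab.symm]
      have := Finset.card_le_card hsub
      rw [Finset.card_pair (by
        intro h
        simp only [Sigma.mk.injEq] at h
        exact hab.ne h.1)] at this
      exact this

theorem cl_bound {β : Type*} [Fintype β] (G : SimpleGraph β) (ρ d : ℝ) (hρ : 0 < ρ)
    (hd : 0 < d) (hd1 : d ≤ 1) (hG : LocallyDense G ρ d) (r : ℕ) : ∀ X : Finset β,
    d ^ (r * (r + 1) / 2) * (X.card : ℝ) ^ (r + 1) -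
      ρ * (Fintype.card β : ℝ) ^ (r + 1) ≤ (cl G (r + 1) X : ℝ) := by
  classical
  induction r with
  | zero =>
    intro X
    have : X.card ≤ cl G 1 X := by
      unfold cl
      apply Finset.card_le_card_of_injOn (fun v => (fun _ => v : Fin 1 → β))
      · intro v hv
        simp only [Finset.mem_coe, Finset.mem_filter, Finset.mem_univ, true_and]
        refine ⟨fun _ => hv, fun i j hij => absurd (Subsingleton.elim i j) hij⟩
      · intro v _ w _ h
        exact congrFun h 0
    have h2 : (X.card : ℝ) ≤ (cl G 1 X : ℝ) := by exact_mod_cast this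
    have h3 : 0 ≤ ρ * (Fintype.card β : ℝ) := by positivity
    simp
    linarith
  | succ r ih =>
    intro X
    set n : ℝ := (Fintype.card β : ℝ) with hn
    have hXn : (X.card : ℝ) ≤ n := by
      rw [hn]; exact_mod_cast Finset.card_le_univ X
    have hx0 : (0 : ℝ) ≤ (X.card : ℝ) := by positivity
    have hexp : (r + 1) * (r + 1 + 1) / 2 = r * (r + 1) / 2 + (r + 1) := by
      have : (r + 1) * (r + 1 + 1) = r * (r + 1) + (r + 1) * 2 := by ring
      rw [this, Nat.add_mul_div_right _ _ (by norm_num)]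
    by_cases hX : ρ * n ≤ (X.card : ℝ)
    · have h1 := hG X hX
      have h2 : (2 : ℝ) * (Nat.card {e : Sym2 β // e ∈ G.edgeSet ∧ ∀ v ∈ e, v ∈ X} : ℝ) ≤
          ∑ v ∈ X, ((X.filter (fun w => G.Adj v w)).card : ℝ) := by
        exact_mod_cast sum_deg G X
      have h3 : d * (X.card : ℝ) ^ 2 ≤ ∑ v ∈ X, ((X.filter (fun w => G.Adj v w)).card : ℝ) := by
        linarith
      have h4 : ∑ v ∈ X, (cl G (r + 1) (X.filter (fun w => G.Adj v w)) : ℝ) ≤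
          (cl G (r + 1 + 1) X : ℝ) := by exact_mod_cast cl_succ G (r + 1) X
      have h5 : (d * (X.card : ℝ) ^ 2) ^ (r + 1) ≤ (X.card : ℝ) ^ r *
          ∑ v ∈ X, ((X.filter (fun w => G.Adj v w)).card : ℝ) ^ (r + 1) :=
        (pow_le_pow_left₀ (by positivity) h3 _).trans
          (pow_sum_le_card_mul_sum_pow (fun i _ => Nat.cast_nonneg _) r)
      have h6 : d ^ (r + 1) * (X.card : ℝ) ^ (r + 1 + 1) ≤
          ∑ v ∈ X, ((X.filter (fun w => G.Adj v w)).card : ℝ) ^ (r + 1) := by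
        rcases hx0.eq_or_lt with h0 | h0
        · rw [← h0]
          simp only [ne_eq, Nat.add_eq_zero_iff, one_ne_zero, and_false, not_false_eq_true,
            zero_pow, mul_zero]
          exact Finset.sum_nonneg (fun v _ => pow_nonneg (Nat.cast_nonneg _) _)
        · refine le_of_mul_le_mul_left (le_trans (le_of_eq ?_) h5)
            (show (0 : ℝ) < (X.card : ℝ) ^ r by positivity)
          ring
      have h7 : ∑ v ∈ X, (d ^ (r * (r + 1) / 2) *
          ((X.filter (fun w => G.Adj v w)).card : ℝ) ^ (r + 1) - ρ * n ^ (r + 1)) ≤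
          ∑ v ∈ X, (cl G (r + 1) (X.filter (fun w => G.Adj v w)) : ℝ) :=
        Finset.sum_le_sum (fun v _ => ih _)
      rw [Finset.sum_sub_distrib, ← Finset.mul_sum, Finset.sum_const, nsmul_eq_mul] at h7
      have h8 : (X.card : ℝ) * (ρ * n ^ (r + 1)) ≤ ρ * n ^ (r + 1 + 1) := by
        calc (X.card : ℝ) * (ρ * n ^ (r + 1)) ≤ n * (ρ * n ^ (r + 1)) := by gcongr
          _ = _ := by ring
      have h9 := mul_le_mul_of_nonneg_left h6 (show 0 ≤ d ^ (r * (r + 1) / 2) by positivity)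
      rw [hexp, pow_add d, mul_assoc]
      linarith
    · push Not at hX
      have h1 : d ^ ((r + 1) * (r + 1 + 1) / 2) * (X.card : ℝ) ^ (r + 1 + 1) ≤
          ρ * n ^ (r + 1 + 1) := by
        calc d ^ ((r + 1) * (r + 1 + 1) / 2) * (X.card : ℝ) ^ (r + 1 + 1)
            ≤ 1 * (X.card : ℝ) ^ (r + 1 + 1) := by
              gcongr; exact pow_le_one₀ hd.le hd1
          _ = (X.card : ℝ) ^ (r + 1) * (X.card : ℝ) := by ring
          _ ≤ n ^ (r + 1) * (ρ * n) := by gcongr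
          _ = _ := by ring
      have h2 : (0 : ℝ) ≤ (cl G (r + 1 + 1) X : ℝ) := by positivity
      linarith

theorem clique_density {β : Type*} [Fintype β] [Nonempty β] (G : SimpleGraph β) (ρ d : ℝ)
    (hρ : 0 < ρ) (hd : 0 < d) (hd1 : d ≤ 1) (hG : LocallyDense G ρ d) (r : ℕ) :
    d ^ (r * (r + 1) / 2) - ρ ≤ homDensity (⊤ : SimpleGraph (Fin (r + 1))) G := by
  classical
  have hn : (0 : ℝ) < (Fintype.card β : ℝ) := by exact_mod_cast Fintype.card_pos
  have h := cl_bound G ρ d hρ hd hd1 hG r Finset.univ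
  rw [Finset.card_univ, ← sub_mul] at h
  rw [homDensity, Fintype.card_fin, le_div_iff₀ (by positivity), card_hom]
  refine h.trans (le_of_eq ?_)
  unfold cl
  congr 2
  ext f
  simp

theorem pow_bound (x a ρ : ℝ) (hx : 0 ≤ x) (hx1 : x ≤ 1) (ha : 0 ≤ a) (ha1 : a ≤ 1)
    (hρ : 0 ≤ ρ) (h : a - ρ ≤ x) (m : ℕ) : a ^ m - m * ρ ≤ x ^ m := by
  induction m with
  | zero => simp
  | succ m ih =>
    have e1 : x * (a ^ m - m * ρ) ≤ x * x ^ m := mul_le_mul_of_nonneg_left ih hx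
    have e2 : (a - ρ) * a ^ m ≤ x * a ^ m := mul_le_mul_of_nonneg_right h (by positivity)
    have e3 : ρ * a ^ m ≤ ρ * 1 := mul_le_mul_of_nonneg_left (pow_le_one₀ ha ha1) hρ
    have e4 : x * (m * ρ) ≤ 1 * (m * ρ) := mul_le_mul_of_nonneg_right hx1 (by positivity)
    rw [pow_succ', pow_succ']
    push_cast
    nlinarith

theorem exists_decomp {α : Type*} [Fintype α] [DecidableEq α] (H : SimpleGraph α) :
    Elim (treewidth H + 1) H := by
  have hne : {w : ℕ | ∃ (ι : Type) (_ : Fintype ι) (bag : ι → Finset α) (T : SimpleGraph ι),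
    IsTreeDecomp H bag T ∧ ∀ X : ι, (bag X).card ≤ w + 1}.Nonempty := by
    refine ⟨Fintype.card α, Unit, inferInstance, fun _ => Finset.univ, ⊥, ⟨?_, ?_, ?_, ?_⟩, ?_⟩
    · exact SimpleGraph.IsTree.of_subsingleton
    · intro v; exact ⟨(), by simp⟩
    · intro u v _; exact ⟨(), by simp⟩
    · intros; simp
    · intro _; rw [Finset.card_univ]; omega
  obtain ⟨ι, _, bag, T, ⟨hT, -, hE, hP⟩, hcard⟩ := Nat.sInf_mem hne
  exact elim_of_decomp bag T hT _ hcard hP _ H Finset.univ rfl (by simp) hE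

theorem edgeless {α β : Type*} [Fintype α] [Fintype β] [Nonempty β] (H : SimpleGraph α)
    (G : SimpleGraph β) (h : edgeCount H = 0) : homDensity H G = 1 := by
  classical
  have hn : (0 : ℝ) < (Fintype.card β : ℝ) := by exact_mod_cast Fintype.card_pos
  have hno : ∀ x y, ¬ H.Adj x y := by
    intro x y hxy
    rw [edgeCount, Nat.card_eq_fintype_card, Fintype.card_eq_zero_iff] at h
    exact h.false ⟨s(x, y), hxy⟩
  rw [homDensity, card_hom, Finset.filter_true_of_mem (by intro φ _ x y hxy; exact absurd hxy (hno x y)),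
    Finset.card_univ, Fintype.card_fun]
  push_cast
  exact div_self (by positivity)

end KNRS

theorem stmt16 {α : Type*} [Fintype α] [DecidableEq α] (H : SimpleGraph α)
    (m t : ℕ) (hm : edgeCount H = m) (ht : treewidth H = t)
    (η : ℝ) (hη : 0 < η) :
    ∃ (ρ : ℝ) (n₀ : ℕ), 0 < ρ ∧
      ∀ (d : ℝ), 0 < d → d ≤ 1 →
        ∀ (β : Type) [Fintype β] (G : SimpleGraph β),
          n₀ ≤ Fintype.card β → LocallyDense G ρ d →
            homDensity H G ≥ d ^ ((t * (t + 1) / 2 + 1) * m) - η := by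
  have hm1 : (0 : ℝ) < (m : ℝ) + 1 := by positivity
  refine ⟨η / (m + 1), 1, by positivity, ?_⟩
  intro d hd hd1 β _ G hcard hG
  have : Nonempty β := Fintype.card_pos_iff.1 hcard
  set ρ := η / ((m : ℝ) + 1) with hρdef
  have hρ : 0 < ρ := by positivity
  have hE := KNRS.exists_decomp H
  rw [ht] at hE
  have hc := KNRS.clique_density G ρ d hρ hd hd1 hG t
  set τ := homDensity (⊤ : SimpleGraph (Fin (t + 1))) G with hτ
  have hτ0 : 0 ≤ τ := KNRS.homDensity_nonneg _ _
  have hτ1 : τ ≤ 1 := KNRS.homDensity_le_one _ _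
  have hle : τ ^ m ≤ homDensity H G := by
    rcases Nat.eq_zero_or_pos m with h0 | hmpos
    · rw [KNRS.edgeless H G (hm.trans h0), h0, pow_zero]
    · rcases hτ0.eq_or_lt with h0 | hpos
      · rw [← h0, zero_pow hmpos.ne']
        exact KNRS.homDensity_nonneg _ _
      · have := KNRS.strong_bound H G (t + 1) hE hpos
        rwa [hm] at this
  have hp := KNRS.pow_bound τ (d ^ (t * (t + 1) / 2)) ρ hτ0 hτ1 (by positivity)
    (pow_le_one₀ hd.le hd1) hρ.le hc m
  have hmρ : (m : ℝ) * ρ ≤ η := by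
    have : ((m : ℝ) + 1) * ρ = η := by rw [hρdef]; field_simp
    nlinarith
  have hd' : d ^ ((t * (t + 1) / 2 + 1) * m) ≤ (d ^ (t * (t + 1) / 2)) ^ m := by
    rw [← pow_mul]
    apply pow_le_pow_of_le_one hd.le hd1
    exact Nat.mul_le_mul_right _ (Nat.le_succ _)
  linarith
end

section
/- Let ρ, d ∈ (0,1] and let G be a (ρ,d)-dense graph on n vertices. Let f: V(G) → [0,1] be a function with Σ_{v∈V(G)} f(v) ≥ ρn. Then Σ_{uv∈E(G)} f(u)f(v) ≥ (d/2)·(Σ_{v∈V(G)} f(v))² − n, where the sum on the left is over unordered edges uv of G. -/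
open Finset Matrix in
lemma two_sum_edges {β : Type*} [Fintype β] [DecidableEq β]
    (G : SimpleGraph β) [DecidableRel G.Adj] (f : β → ℝ) :
    2 * ∑ e ∈ G.edgeFinset,
        Sym2.lift ⟨fun u v => f u * f v, fun u v => mul_comm (f u) (f v)⟩ e
      = f ⬝ᵥ G.adjMatrix ℝ *ᵥ f := by
  set F : Sym2 β → ℝ := Sym2.lift ⟨fun u v => f u * f v, fun u v => mul_comm (f u) (f v)⟩ with hF
  rw [SimpleGraph.dotProduct_mulVec_adjMatrix]
  have h1 : ∑ d : G.Dart, F d.edge = 2 * ∑ e ∈ G.edgeFinset, F e := by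
    rw [← Finset.sum_fiberwise_of_maps_to (s := univ) (t := G.edgeFinset)
      (g := SimpleGraph.Dart.edge) (fun d _ => by
        rw [SimpleGraph.mem_edgeFinset]; exact d.edge_mem), mul_sum]
    refine sum_congr rfl fun e he => ?_
    rw [sum_congr rfl (g := fun _ => F e), sum_const, G.dart_edge_fiber_card e
      (SimpleGraph.mem_edgeFinset.1 he)]
    · simp
    · intro d hd
      rw [(mem_filter.1 hd).2]
  rw [← h1, ← Fintype.sum_prod_type' (f := fun i j => if G.Adj i j then f i * f j else 0),
    ← sum_filter]
  refine sum_bij' (fun d _ => (d.fst, d.snd)) (fun xy h => ⟨xy, (mem_filter.1 h).2⟩) ?_ ?_ ?_ ?_ ?_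
    <;> simp [hF, SimpleGraph.Dart.edge]

open Finset Matrix in
lemma card_edges_eq {β : Type*} [Fintype β] [DecidableEq β]
    (G : SimpleGraph β) [DecidableRel G.Adj] (X : Finset β) :
    (Nat.card {e : Sym2 β // e ∈ G.edgeSet ∧ ∀ v ∈ e, v ∈ X} : ℝ) =
     ∑ e ∈ G.edgeFinset,
        Sym2.lift ⟨fun u v => (if u ∈ X then (1:ℝ) else 0) * (if v ∈ X then (1:ℝ) else 0),
          fun u v => mul_comm _ _⟩ e := by
  classical
  have : ∀ e : Sym2 β, Sym2.lift ⟨fun u v => (if u ∈ X then (1:ℝ) else 0) *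
      (if v ∈ X then (1:ℝ) else 0), fun u v => mul_comm _ _⟩ e =
      if (∀ v ∈ e, v ∈ X) then 1 else 0 := by
    intro e
    induction e with
    | h x y => by_cases hx : x ∈ X <;> by_cases hy : y ∈ X <;> simp [hx, hy]
  rw [sum_congr rfl fun e _ => this e, ← sum_filter, sum_const, nsmul_eq_mul, mul_one,
    Nat.card_eq_fintype_card, Fintype.card_subtype]
  congr 2
  ext e
  simp

open Finset Matrix in
lemma form_symm {β : Type*} [Fintype β] [DecidableEq β]
    (G : SimpleGraph β) [DecidableRel G.Adj] (x y : β → ℝ) :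
    x ⬝ᵥ G.adjMatrix ℝ *ᵥ y = y ⬝ᵥ G.adjMatrix ℝ *ᵥ x := by
  rw [dotProduct_mulVec, ← mulVec_transpose, SimpleGraph.transpose_adjMatrix, dotProduct_comm]

open Finset Matrix in
lemma form_base {β : Type*} [Fintype β] [DecidableEq β]
    (G : SimpleGraph β) [DecidableRel G.Adj] (ρ d : ℝ) (hd : 0 < d)
    (hG : LocallyDense G ρ d)
    (f : β → ℝ) (hf0 : ∀ v, 0 ≤ f v) (hf1 : ∀ v, f v ≤ 1)
    (hsum : ρ * (Fintype.card β : ℝ) ≤ ∑ v, f v)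
    (hc : (univ.filter fun v => f v ≠ 0 ∧ f v ≠ 1).card ≤ 1) :
    d * (∑ v, f v) ^ 2 - 2 * (Fintype.card β : ℝ) ≤ f ⬝ᵥ G.adjMatrix ℝ *ᵥ f := by
  set X : Finset β := univ.filter fun v => f v ≠ 0 with hX
  set h : β → ℝ := fun v => if v ∈ X then (1:ℝ) else 0 with hh
  have hfh : ∀ v, f v ≤ h v := by
    intro v
    by_cases hv : f v = 0 <;> simp [hh, hX, hv, hf1]
  have hh1 : ∀ v, h v ≤ 1 := by
    intro v
    by_cases hv : f v = 0 <;> simp [hh, hX, hv]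
  have hcard : ∑ v, h v = X.card := by simp [hh]
  have hle : ∑ v, f v ≤ X.card := hcard ▸ sum_le_sum fun v _ => hfh v
  have h1 := hG X (hsum.trans hle)
  rw [card_edges_eq] at h1
  have h2 := two_sum_edges G h
  have h3 : h ⬝ᵥ G.adjMatrix ℝ *ᵥ h - f ⬝ᵥ G.adjMatrix ℝ *ᵥ f
      = (h - f) ⬝ᵥ G.adjMatrix ℝ *ᵥ (h + f) := by
    rw [mulVec_add, dotProduct_add, sub_dotProduct, sub_dotProduct, form_symm G f h]
    ring
  have h4 : (h - f) ⬝ᵥ G.adjMatrix ℝ *ᵥ (h + f) ≤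
      ∑ v, (if f v ≠ 0 ∧ f v ≠ 1 then 1 else 0) * (2 * (Fintype.card β : ℝ)) := by
    refine sum_le_sum fun v _ => ?_
    have ha : (G.adjMatrix ℝ *ᵥ (h + f)) v ≤ 2 * (Fintype.card β : ℝ) := by
      rw [SimpleGraph.adjMatrix_mulVec_apply]
      calc ∑ u ∈ G.neighborFinset v, (h + f) u ≤ ∑ u ∈ G.neighborFinset v, (2:ℝ) :=
            sum_le_sum fun u _ => by
              have := hh1 u; have := hf1 u; simp only [Pi.add_apply]; linarith
        _ ≤ 2 * (Fintype.card β : ℝ) := by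
            rw [sum_const, nsmul_eq_mul, mul_comm]
            gcongr
            exact card_le_univ _
    have hb : (h - f) v ≤ if f v ≠ 0 ∧ f v ≠ 1 then 1 else 0 := by
      have := hf0 v
      by_cases h0 : f v = 0
      · simp [hh, hX, h0]
      · by_cases h1 : f v = 1
        · simp [hh, hX, h1]
        · simp [hh, hX, h0, h1, this]
    have hb0 : 0 ≤ (h - f) v := sub_nonneg.2 (hfh v)
    calc _ ≤ (h - f) v * (2 * (Fintype.card β : ℝ)) := mul_le_mul_of_nonneg_left ha hb0
      _ ≤ _ := mul_le_mul_of_nonneg_right hb (by positivity)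
  rw [← sum_mul, ← sum_filter, sum_const, nsmul_eq_mul, mul_one] at h4
  have h5 : ((univ.filter fun v => f v ≠ 0 ∧ f v ≠ 1).card : ℝ) ≤ 1 := by exact_mod_cast hc
  have h6 := mul_le_mul_of_nonneg_right h5 (by positivity : 0 ≤ 2 * (Fintype.card β : ℝ))
  have h7 : d * (∑ v, f v) ^ 2 ≤ d * (X.card : ℝ) ^ 2 := by
    have : 0 ≤ ∑ v, f v := sum_nonneg fun v _ => hf0 v
    gcongr
  linarith

open Finset Matrix in
lemma form_step {β : Type*} [Fintype β] [DecidableEq β]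
    (G : SimpleGraph β) [DecidableRel G.Adj]
    (f : β → ℝ) (hf0 : ∀ v, 0 ≤ f v) (hf1 : ∀ v, f v ≤ 1) (u v : β) (huv : u ≠ v)
    (hu : f u ≠ 0 ∧ f u ≠ 1) (hv : f v ≠ 0 ∧ f v ≠ 1)
    (hB : f ⬝ᵥ G.adjMatrix ℝ *ᵥ (Pi.single v 1 - Pi.single u 1) ≤ 0) :
    ∃ f' : β → ℝ, (∀ v, 0 ≤ f' v) ∧ (∀ v, f' v ≤ 1) ∧ ∑ v, f' v = ∑ v, f v ∧
      f' ⬝ᵥ G.adjMatrix ℝ *ᵥ f' ≤ f ⬝ᵥ G.adjMatrix ℝ *ᵥ f ∧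
      (univ.filter fun v => f' v ≠ 0 ∧ f' v ≠ 1).card <
        (univ.filter fun v => f v ≠ 0 ∧ f v ≠ 1).card := by
  set g : β → ℝ := Pi.single v 1 - Pi.single u 1 with hg
  set s : ℝ := min (f u) (1 - f v) with hs
  have hs0 : 0 ≤ s := le_min (hf0 u) (sub_nonneg.2 (hf1 v))
  have hsu : s ≤ f u := min_le_left _ _
  have hsv : s ≤ 1 - f v := min_le_right _ _
  have hgu : g u = -1 := by simp [hg, huv]
  have hgv : g v = 1 := by simp [hg, huv.symm]
  have hgw : ∀ w, w ≠ u → w ≠ v → g w = 0 := by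
    intro w h1 h2; simp [hg, h1, h2]
  have hgg : g ⬝ᵥ G.adjMatrix ℝ *ᵥ g ≤ 0 := by
    have : g ⬝ᵥ G.adjMatrix ℝ *ᵥ g = -2 * G.adjMatrix ℝ u v := by
      simp only [hg, mulVec_sub, dotProduct_sub, sub_dotProduct, single_one_dotProduct,
        mulVec_single_one, col_apply, SimpleGraph.adjMatrix_apply, G.adj_comm v u,
        SimpleGraph.irrefl, if_false]
      ring
    rw [this, SimpleGraph.adjMatrix_apply]
    split_ifs <;> norm_num
  have hu' : (f + s • g) u = f u - s := by simp [hgu]; ring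
  have hv' : (f + s • g) v = f v + s := by simp [hgv]
  have hw' : ∀ w, w ≠ u → w ≠ v → (f + s • g) w = f w := by
    intro w h1 h2; simp [hgw w h1 h2]
  refine ⟨f + s • g, ?_, ?_, ?_, ?_, ?_⟩
  · intro w
    by_cases h1 : w = u
    · rw [h1, hu']; linarith
    by_cases h2 : w = v
    · rw [h2, hv']; have := hf0 v; linarith
    rw [hw' w h1 h2]; exact hf0 w
  · intro w
    by_cases h1 : w = u
    · rw [h1, hu']; have := hf1 u; linarith
    by_cases h2 : w = v
    · rw [h2, hv']; linarith
    rw [hw' w h1 h2]; exact hf1 w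
  · have : ∑ w, g w = 0 := by simp [hg]
    simp [sum_add_distrib, ← mul_sum, this]
  · have : (f + s • g) ⬝ᵥ G.adjMatrix ℝ *ᵥ (f + s • g) = f ⬝ᵥ G.adjMatrix ℝ *ᵥ f
        + 2 * s * (f ⬝ᵥ G.adjMatrix ℝ *ᵥ g) + s ^ 2 * (g ⬝ᵥ G.adjMatrix ℝ *ᵥ g) := by
      simp only [mulVec_add, dotProduct_add, add_dotProduct, mulVec_smul, dotProduct_smul,
        smul_dotProduct, smul_eq_mul, form_symm G g f]
      ring
    rw [this]
    have := mul_nonneg hs0 (neg_nonneg.2 hB)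
    have := mul_nonneg (sq_nonneg s) (neg_nonneg.2 hgg)
    linarith
  · apply card_lt_card
    rw [ssubset_iff_of_subset]
    · rcases min_choice (f u) (1 - f v) with h | h
      · refine ⟨u, by simp [hu], ?_⟩
        have : (f + s • g) u = 0 := by rw [hu', hs, h]; ring
        simp only [mem_filter, this]; simp
      · refine ⟨v, by simp [hv], ?_⟩
        have : (f + s • g) v = 1 := by rw [hv', hs, h]; ring
        simp only [mem_filter, this]; simp
    · intro w hw
      by_cases h1 : w = u
      · simp [h1, hu]
      by_cases h2 : w = v
      · simp [h2, hv]
      simpa only [mem_filter, hw' w h1 h2] using hw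

open Finset Matrix in
lemma form_main {β : Type*} [Fintype β] [DecidableEq β]
    (G : SimpleGraph β) [DecidableRel G.Adj] (ρ d : ℝ) (hd : 0 < d)
    (hG : LocallyDense G ρ d) (k : ℕ) :
    ∀ (f : β → ℝ) (_ : ∀ v, 0 ≤ f v) (_ : ∀ v, f v ≤ 1)
    (_ : ρ * (Fintype.card β : ℝ) ≤ ∑ v, f v)
    (_ : (univ.filter fun v => f v ≠ 0 ∧ f v ≠ 1).card = k),
    d * (∑ v, f v) ^ 2 - 2 * (Fintype.card β : ℝ) ≤ f ⬝ᵥ G.adjMatrix ℝ *ᵥ f := by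
  induction k using Nat.strong_induction_on with
  | _ k ih =>
  intro f hf0 hf1 hsum hk
  by_cases hc : (univ.filter fun v => f v ≠ 0 ∧ f v ≠ 1).card ≤ 1
  · exact form_base G ρ d hd hG f hf0 hf1 hsum hc
  obtain ⟨u, hu, v, hv, huv⟩ := one_lt_card.1 (not_le.1 hc)
  replace hu := (mem_filter.1 hu).2
  replace hv := (mem_filter.1 hv).2
  have key : ∃ f' : β → ℝ, (∀ v, 0 ≤ f' v) ∧ (∀ v, f' v ≤ 1) ∧ ∑ v, f' v = ∑ v, f v ∧
      f' ⬝ᵥ G.adjMatrix ℝ *ᵥ f' ≤ f ⬝ᵥ G.adjMatrix ℝ *ᵥ f ∧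
      (univ.filter fun v => f' v ≠ 0 ∧ f' v ≠ 1).card <
        (univ.filter fun v => f v ≠ 0 ∧ f v ≠ 1).card := by
    rcases le_total (f ⬝ᵥ G.adjMatrix ℝ *ᵥ (Pi.single v 1 - Pi.single u 1)) 0 with h | h
    · exact form_step G f hf0 hf1 u v huv hu hv h
    · refine form_step G f hf0 hf1 v u huv.symm hv hu ?_
      rw [mulVec_sub, dotProduct_sub] at h ⊢
      linarith
  obtain ⟨f', h0, h1, hs, hq, hlt⟩ := key
  have := ih _ (hk ▸ hlt) f' h0 h1 (hs ▸ hsum) rfl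
  rw [hs] at this
  exact this.trans hq

theorem stmt17 {β : Type*} [Fintype β] [DecidableEq β]
    (G : SimpleGraph β) [DecidableRel G.Adj] (ρ d : ℝ)
    (hρ : 0 < ρ) (hρ1 : ρ ≤ 1) (hd : 0 < d) (hd1 : d ≤ 1)
    (hG : LocallyDense G ρ d)
    (f : β → ℝ) (hf0 : ∀ v, 0 ≤ f v) (hf1 : ∀ v, f v ≤ 1)
    (hsum : ρ * (Fintype.card β : ℝ) ≤ ∑ v, f v) :
    ∑ e ∈ G.edgeFinset,
        Sym2.lift ⟨fun u v => f u * f v, fun u v => mul_comm (f u) (f v)⟩ e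
      ≥ d / 2 * (∑ v, f v) ^ 2 - (Fintype.card β : ℝ) := by
  have h1 := form_main G ρ d hd hG _ f hf0 hf1 hsum rfl
  rw [← two_sum_edges] at h1
  linarith
end

section
/- Every triangle-vertex tree is common. That is, if H admits a K₃-decomposition (F, T) with |X ∩ Y| = 1 for every edge XY of T, then for every ε > 0 there exists n₀ such that for all n ≥ n₀, every red/blue colouring of the edges of the complete graph K_n contains at least (2^{1−|E(H)|} − ε)·n^{|V(H)|} monochromatic homomorphic labelled copies of H (i.e., maps V(H) → V(K_n) sending every edge of H to a red edge, plus those sending every edge of H to a blue edge, counted together). -/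
open MeasureTheory

/-- `(bag, T)` is a `J`-decomposition of `H`: a tree decomposition in which every
bag induces a copy of `J`, and for adjacent bags there is an isomorphism between the
induced copies of `J` fixing the intersection pointwise. -/
def IsJDecomp {α ι γ : Type*} [DecidableEq α] (H : SimpleGraph α) (J : SimpleGraph γ)
    (bag : ι → Finset α) (T : SimpleGraph ι) : Prop :=
  IsTreeDecomp H bag T ∧
  (∀ X : ι, Nonempty (H.induce ↑(bag X) ≃g J)) ∧
  (∀ X Y : ι, T.Adj X Y → ∃ e : H.induce ↑(bag X) ≃g H.induce ↑(bag Y),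
      ∀ (v : α) (h1 : v ∈ bag X) (h2 : v ∈ bag Y),
        ((e ⟨v, h1⟩ : ↑(bag Y)) : α) = v)

/-- `H` is `J`-decomposable. -/
def JDecomposable {α γ : Type*} [DecidableEq α] (H : SimpleGraph α) (J : SimpleGraph γ) : Prop :=
  ∃ (ι : Type) (_ : Fintype ι) (bag : ι → Finset α) (T : SimpleGraph ι),
    IsJDecomp H J bag T

section
set_option linter.unusedSectionVars false
set_option linter.unusedVariables false
variable {V : Type*} [Fintype V] [DecidableEq V]

open Classical in
noncomputable def triSet (G : SimpleGraph V) : Finset (V × V × V) :=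
  Finset.univ.filter (fun t => G.Adj t.1 t.2.1 ∧ G.Adj t.1 t.2.2 ∧ G.Adj t.2.1 t.2.2)

noncomputable def triGM (G : SimpleGraph V) (g : V → ℝ) : ℝ :=
  ∏ t ∈ triSet G, (g t.1) ^ (1 / ((triSet G).card : ℝ))

theorem mem_triSet (G : SimpleGraph V) (x y z : V) :
    (x, y, z) ∈ triSet G ↔ G.Adj x y ∧ G.Adj x z ∧ G.Adj y z := by
  simp [triSet]

theorem triGM_nonneg (G : SimpleGraph V) (g : V → ℝ) (hg : ∀ x, 0 ≤ g x) : 0 ≤ triGM G g :=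
  Finset.prod_nonneg fun t _ => Real.rpow_nonneg (hg _) _

theorem triGM_mul (G : SimpleGraph V) (g h : V → ℝ) (hg : ∀ x, 0 ≤ g x) (hh : ∀ x, 0 ≤ h x) :
    triGM G (fun x => g x * h x) = triGM G g * triGM G h := by
  unfold triGM
  rw [← Finset.prod_mul_distrib]
  exact Finset.prod_congr rfl fun t _ => Real.mul_rpow (hg _) (hh _)

theorem triGM_snd (G : SimpleGraph V) (g : V → ℝ) :
    ∏ t ∈ triSet G, (g t.2.1) ^ (1 / ((triSet G).card : ℝ)) = triGM G g := by
  unfold triGM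
  refine Finset.prod_bij' (fun t _ => (t.2.1, t.1, t.2.2)) (fun t _ => (t.2.1, t.1, t.2.2))
    ?_ ?_ ?_ ?_ ?_
  · rintro ⟨x, y, z⟩ h
    rw [mem_triSet] at h ⊢
    exact ⟨h.1.symm, h.2.2, h.2.1⟩
  · rintro ⟨x, y, z⟩ h
    rw [mem_triSet] at h ⊢
    exact ⟨h.1.symm, h.2.2, h.2.1⟩
  all_goals simp

theorem triGM_trd (G : SimpleGraph V) (g : V → ℝ) :
    ∏ t ∈ triSet G, (g t.2.2) ^ (1 / ((triSet G).card : ℝ)) = triGM G g := by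
  unfold triGM
  refine Finset.prod_bij' (fun t _ => (t.2.2, t.2.1, t.1)) (fun t _ => (t.2.2, t.2.1, t.1))
    ?_ ?_ ?_ ?_ ?_
  · rintro ⟨x, y, z⟩ h
    rw [mem_triSet] at h ⊢
    exact ⟨h.2.2.symm, h.2.1.symm, h.1.symm⟩
  · rintro ⟨x, y, z⟩ h
    rw [mem_triSet] at h ⊢
    exact ⟨h.2.2.symm, h.2.1.symm, h.1.symm⟩
  all_goals simp

theorem amgm_tri (G : SimpleGraph V) (hN : 0 < (triSet G).card) (h : V × V × V → ℝ)
    (hh : ∀ t, 0 ≤ h t) :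
    ((triSet G).card : ℝ) * ∏ t ∈ triSet G, (h t) ^ (1 / ((triSet G).card : ℝ)) ≤
      ∑ t ∈ triSet G, h t := by
  have hN' : (0 : ℝ) < (triSet G).card := by exact_mod_cast hN
  have := Real.geom_mean_le_arith_mean_weighted (triSet G)
    (fun _ => 1 / ((triSet G).card : ℝ)) h (fun _ _ => by positivity)
    (by simp; field_simp) (fun t _ => hh t)
  rw [← Finset.mul_sum, one_div_mul_eq_div, le_div_iff₀ hN'] at this
  linarith

/-- sum over triangle pairs at x -/
noncomputable def triS (G : SimpleGraph V) (ga gb : V → ℝ) (x : V) : ℝ :=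
  ∑ y, ∑ z, if (x, y, z) ∈ triSet G then ga y * gb z else 0

theorem triS_nonneg (G : SimpleGraph V) (ga gb : V → ℝ) (ha : ∀ x, 0 ≤ ga x)
    (hb : ∀ x, 0 ≤ gb x) (x : V) : 0 ≤ triS G ga gb x := by
  refine Finset.sum_nonneg fun y _ => Finset.sum_nonneg fun z _ => ?_
  split_ifs
  · exact mul_nonneg (ha _) (hb _)
  · exact le_rfl

theorem le_triS (G : SimpleGraph V) (ga gb : V → ℝ) (ha : ∀ x, 0 ≤ ga x)
    (hb : ∀ x, 0 ≤ gb x) (x y z : V) (h : (x, y, z) ∈ triSet G) :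
    ga y * gb z ≤ triS G ga gb x := by
  have nn : ∀ y z, 0 ≤ if (x, y, z) ∈ triSet G then ga y * gb z else 0 := by
    intro y z
    split_ifs
    · exact mul_nonneg (ha _) (hb _)
    · exact le_rfl
  calc ga y * gb z = if (x, y, z) ∈ triSet G then ga y * gb z else 0 := by simp [h]
    _ ≤ ∑ z, if (x, y, z) ∈ triSet G then ga y * gb z else 0 :=
      Finset.single_le_sum (f := fun z => if (x, y, z) ∈ triSet G then ga y * gb z else 0)
        (fun z _ => nn y z) (Finset.mem_univ z)
    _ ≤ _ := Finset.single_le_sum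
        (f := fun y => ∑ z, if (x, y, z) ∈ triSet G then ga y * gb z else 0)
        (fun y _ => Finset.sum_nonneg fun z _ => nn y z) (Finset.mem_univ y)

theorem sum_triSet (G : SimpleGraph V) (F : V → V → V → ℝ) :
    ∑ t ∈ triSet G, F t.1 t.2.1 t.2.2 =
      ∑ x, ∑ y, ∑ z, if (x, y, z) ∈ triSet G then F x y z else 0 := by
  have h : triSet G = Finset.univ.filter (fun t => t ∈ triSet G) := by ext; simp
  conv_lhs => rw [h]
  rw [Finset.sum_filter, Fintype.sum_prod_type]
  refine Finset.sum_congr rfl fun x _ => ?_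
  rw [Fintype.sum_prod_type]

theorem triS_GM (G : SimpleGraph V) (hN : 0 < (triSet G).card) (ga gb : V → ℝ)
    (ha : ∀ x, 0 ≤ ga x) (hb : ∀ x, 0 ≤ gb x) :
    ((triSet G).card : ℝ) * (triGM G ga * triGM G gb) ≤
      (Fintype.card V : ℝ) * triGM G (triS G ga gb) := by
  have h1 := amgm_tri G hN (fun t => ga t.2.1 * gb t.2.2 / triS G ga gb t.1)
    (fun t => div_nonneg (mul_nonneg (ha _) (hb _)) (triS_nonneg G ga gb ha hb _))
  have h2 : ∑ t ∈ triSet G, ga t.2.1 * gb t.2.2 / triS G ga gb t.1 ≤ Fintype.card V := by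
    rw [sum_triSet G (fun x y z => ga y * gb z / triS G ga gb x)]
    calc _ ≤ ∑ x : V, (1 : ℝ) := by
          refine Finset.sum_le_sum fun x _ => ?_
          have : ∑ y, ∑ z, (if (x, y, z) ∈ triSet G then ga y * gb z / triS G ga gb x else 0)
              = triS G ga gb x / triS G ga gb x := by
            conv_rhs => rw [triS]
            simp only [Finset.sum_div, ite_div, zero_div]
            rfl
          rw [this]
          exact div_self_le_one _
      _ = _ := by simp
  have h3 : triGM G ga * triGM G gb = (∏ t ∈ triSet G,
      (ga t.2.1 * gb t.2.2 / triS G ga gb t.1) ^ (1 / ((triSet G).card : ℝ))) *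
        triGM G (triS G ga gb) := by
    rw [← triGM_snd G ga, ← triGM_trd G gb, triGM, ← Finset.prod_mul_distrib,
      ← Finset.prod_mul_distrib]
    refine Finset.prod_congr rfl ?_
    rintro ⟨x, y, z⟩ ht
    have hS := triS_nonneg G ga gb ha hb x
    rw [← Real.mul_rpow (ha _) (hb _), ← Real.mul_rpow
      (div_nonneg (mul_nonneg (ha _) (hb _)) hS) hS]
    congr 1
    by_cases h0 : triS G ga gb x = 0
    · have := le_triS G ga gb ha hb x y z ht
      have h' := mul_nonneg (ha y) (hb z)
      simp only [h0] at this ⊢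
      simp; simpa using le_antisymm this h'
    · simp only
      field_simp
  rw [h3, ← mul_assoc]
  exact mul_le_mul_of_nonneg_right (h1.trans h2)
    (triGM_nonneg _ _ (triS_nonneg G ga gb ha hb))

variable {α : Type*} [Fintype α] [DecidableEq α]

theorem sum_update (a : α) (Ψ : (α → V) → ℝ) :
    (Fintype.card V : ℝ) * ∑ φ, Ψ φ = ∑ φ : α → V, ∑ y, Ψ (Function.update φ a y) := by
  have h : ∑ φ : α → V, ∑ y : V, Ψ (Function.update φ a y) = ∑ φ : α → V, ∑ _y : V, Ψ φ := by
    rw [← Fintype.sum_prod_type', ← Fintype.sum_prod_type']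
    refine Finset.sum_bij' (fun p _ => (Function.update p.1 a p.2, p.1 a))
      (fun p _ => (Function.update p.1 a p.2, p.1 a)) ?_ ?_ ?_ ?_ ?_ <;> simp
  rw [h]
  simp [Finset.mul_sum]

theorem sum_update2 (a b : α) (Ψ : (α → V) → ℝ) :
    (Fintype.card V : ℝ) * ((Fintype.card V : ℝ) * ∑ φ, Ψ φ) =
      ∑ φ : α → V, ∑ y, ∑ z, Ψ (Function.update (Function.update φ a y) b z) := by
  rw [sum_update b, sum_update a]

theorem sum_update3 (a b c : α) (Ψ : (α → V) → ℝ) :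
    (Fintype.card V : ℝ) * ((Fintype.card V : ℝ) * ((Fintype.card V : ℝ) * ∑ φ, Ψ φ)) =
      ∑ φ : α → V, ∑ x, ∑ y, ∑ z,
        Ψ (Function.update (Function.update (Function.update φ a x) b y) c z) := by
  rw [sum_update c, sum_update b, sum_update a]

inductive TriTree : List (α × α × α) → Finset α → Prop
  | base (a b c : α) : a ≠ b → a ≠ c → b ≠ c → TriTree [(a, b, c)] {a, b, c}
  | step (L : List (α × α × α)) (A : Finset α) (w a b : α) : TriTree L A → w ∈ A → a ∉ A →
      b ∉ A → a ≠ b → TriTree ((w, a, b) :: L) (insert a (insert b A))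

theorem TriTree.card_eq {L : List (α × α × α)} {A : Finset α} (h : TriTree L A) :
    A.card = 2 * L.length + 1 := by
  induction h with
  | base a b c h1 h2 h3 => exact Finset.card_eq_three.2 ⟨a, b, c, h1, h2, h3, rfl⟩
  | step L A w a b _ hw ha hb hab ih =>
    rw [Finset.card_insert_of_notMem, Finset.card_insert_of_notMem hb, ih, List.length_cons]
    · ring
    · simp [hab, ha]

theorem TriTree.mem {L : List (α × α × α)} {A : Finset α} (h : TriTree L A) :
    ∀ t ∈ L, t.1 ∈ A ∧ t.2.1 ∈ A ∧ t.2.2 ∈ A := by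
  induction h with
  | base a b c h1 h2 h3 => simp
  | step L A w a b _ hw ha hb hab ih =>
    intro t ht
    rcases List.mem_cons.1 ht with rfl | ht
    · simp [hw]
    · have := ih t ht
      simp [this]

theorem TriTree.edges {L : List (α × α × α)} {A : Finset α} (h : TriTree L A)
    (H : SimpleGraph α)
    (hL : ∀ t ∈ L, H.Adj t.1 t.2.1 ∧ H.Adj t.1 t.2.2 ∧ H.Adj t.2.1 t.2.2) :
    ∃ E : Finset (Sym2 α), E.card = 3 * L.length ∧ (∀ e ∈ E, e ∈ H.edgeSet) ∧
      ∀ e ∈ E, ∀ v ∈ e, v ∈ A := by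
  induction h with
  | base a b c h1 h2 h3 =>
    have := hL (a, b, c) (by simp)
    refine ⟨{s(a, b), s(a, c), s(b, c)}, ?_, ?_, ?_⟩
    · rw [List.length_singleton]
      refine Finset.card_eq_three.2 ⟨_, _, _, ?_, ?_, ?_, rfl⟩ <;> simp <;> grind
    · simp; exact this
    · simp
  | step L A w a b _ hw ha hb hab ih =>
    obtain ⟨E, h1, h2, h3⟩ := ih (fun t ht => hL t (List.mem_cons_of_mem _ ht))
    have := hL (w, a, b) (by simp)
    have n1 : s(w, a) ∉ E := fun h => ha (h3 _ h a (by simp))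
    have n2 : s(w, b) ∉ E := fun h => hb (h3 _ h b (by simp))
    have n3 : s(a, b) ∉ E := fun h => hb (h3 _ h b (by simp))
    refine ⟨insert s(w, a) (insert s(w, b) (insert s(a, b) E)), ?_, ?_, ?_⟩
    · rw [Finset.card_insert_of_notMem, Finset.card_insert_of_notMem,
        Finset.card_insert_of_notMem n3, h1, List.length_cons]
      · ring
      · simp [n2]; grind
      · simp [n1]; grind
    · intro e he
      simp only [Finset.mem_insert] at he
      rcases he with rfl | rfl | rfl | he
      · exact this.1
      · exact this.2.1
      · exact this.2.2
      · exact h2 e he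
    · intro e he v hv
      simp only [Finset.mem_insert] at he
      rcases he with rfl | rfl | rfl | he
      · simp at hv; grind
      · simp at hv; grind
      · simp at hv; grind
      · have := h3 e he v hv; simp [this]

noncomputable def triInd (G : SimpleGraph V) (φ : α → V) (t : α × α × α) : ℝ :=
  if (φ t.1, φ t.2.1, φ t.2.2) ∈ triSet G then 1 else 0

theorem TriTree.main (G : SimpleGraph V) (hN : 0 < (triSet G).card)
    {L : List (α × α × α)} {A : Finset α} (h : TriTree L A) :
    ∀ g : α → V → ℝ, (∀ v x, 0 ≤ g v x) →
    ((triSet G).card : ℝ) ^ L.length * (Fintype.card V : ℝ) ^ (Fintype.card α) *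
      ∏ v ∈ A, triGM G (g v) ≤ (Fintype.card V : ℝ) ^ (3 * L.length) *
        ∑ φ : α → V, (L.map (triInd G φ)).prod * ∏ v ∈ A, g v (φ v) := by
  induction h with
  | base a b c h1 h2 h3 =>
    intro g hg
    have e1 : (Fintype.card V : ℝ) ^ (3 * [(a, b, c)].length) *
        ∑ φ : α → V, ([(a, b, c)].map (triInd G φ)).prod * ∏ v ∈ ({a, b, c} : Finset α), g v (φ v)
        = (Fintype.card V : ℝ) ^ (Fintype.card α) *
          ∑ t ∈ triSet G, g a t.1 * g b t.2.1 * g c t.2.2 := by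
      rw [sum_triSet G (fun x y z => g a x * g b y * g c z)]
      simp only [List.length_singleton, mul_one, pow_succ, pow_zero, one_mul]
      rw [mul_assoc, mul_assoc, sum_update3 a b c]
      have : ∀ φ : α → V, ∀ x y z, ([(a, b, c)].map (triInd G
          (Function.update (Function.update (Function.update φ a x) b y) c z))).prod *
          ∏ v ∈ ({a, b, c} : Finset α), g v
            ((Function.update (Function.update (Function.update φ a x) b y) c z) v) =
          if (x, y, z) ∈ triSet G then g a x * g b y * g c z else 0 := by
        intro φ x y z
        rw [Finset.prod_insert (by simp [h1, h2]), Finset.prod_insert (by simp [h3]),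
          Finset.prod_singleton]
        simp [triInd, h1, h2, h3]
        split_ifs <;> ring
      simp only [this]
      simp
    rw [e1]
    have := amgm_tri G hN (fun t => g a t.1 * g b t.2.1 * g c t.2.2)
      (fun t => mul_nonneg (mul_nonneg (hg _ _) (hg _ _)) (hg _ _))
    have e2 : ∏ t ∈ triSet G, (g a t.1 * g b t.2.1 * g c t.2.2) ^ (1 / ((triSet G).card : ℝ))
        = ∏ v ∈ ({a, b, c} : Finset α), triGM G (g v) := by
      rw [Finset.prod_insert (by simp [h1, h2]), Finset.prod_insert (by simp [h3]),
        Finset.prod_singleton]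
      rw [← triGM_snd G (g b), ← triGM_trd G (g c), triGM, ← Finset.prod_mul_distrib,
        ← Finset.prod_mul_distrib]
      refine Finset.prod_congr rfl fun t _ => ?_
      rw [Real.mul_rpow (mul_nonneg (hg _ _) (hg _ _)) (hg _ _), Real.mul_rpow (hg _ _) (hg _ _)]
      ring
    rw [e2] at this
    have := mul_le_mul_of_nonneg_left this (pow_nonneg (Nat.cast_nonneg (α := ℝ) (Fintype.card V)) (Fintype.card α))
    rw [List.length_singleton, pow_one]
    linarith
  | step L A w a b hT hw ha hb hab ih =>
    intro g hg
    have hS := triS_nonneg G (g a) (g b) (hg a) (hg b)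
    have hmem := hT.mem
    have h1 := ih (fun v x => if v = w then g v x * triS G (g a) (g b) x else g v x) (by
      intro v x
      split_ifs
      · exact mul_nonneg (hg _ _) (hS _)
      · exact hg _ _)
    have e1 : ∏ v ∈ A, triGM G (fun x => if v = w then g v x * triS G (g a) (g b) x else g v x)
        = (∏ v ∈ A, triGM G (g v)) * triGM G (triS G (g a) (g b)) := by
      rw [← Finset.mul_prod_erase A _ hw, ← Finset.mul_prod_erase A _ hw]
      simp only [if_true]
      rw [triGM_mul G _ _ (hg w) hS]
      rw [Finset.prod_congr rfl (g := fun v => triGM G (g v))]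
      · ring
      · intro v hv
        simp [(Finset.mem_erase.1 hv).1]
    have e2 : ∀ φ : α → V, ∏ v ∈ A, (if v = w then g v (φ v) * triS G (g a) (g b) (φ v)
        else g v (φ v)) = (∏ v ∈ A, g v (φ v)) * triS G (g a) (g b) (φ w) := by
      intro φ
      rw [← Finset.mul_prod_erase A _ hw, ← Finset.mul_prod_erase A _ hw]
      simp only [if_true]
      rw [Finset.prod_congr rfl (g := fun v => g v (φ v))]
      · ring
      · intro v hv
        simp [(Finset.mem_erase.1 hv).1]
    have e3 : (Fintype.card V : ℝ) * ((Fintype.card V : ℝ) *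
        ∑ φ : α → V, (((w, a, b) :: L).map (triInd G φ)).prod *
          ∏ v ∈ insert a (insert b A), g v (φ v)) =
        ∑ φ : α → V, (L.map (triInd G φ)).prod *
          ((∏ v ∈ A, g v (φ v)) * triS G (g a) (g b) (φ w)) := by
      rw [sum_update2 a b]
      refine Finset.sum_congr rfl fun φ _ => ?_
      rw [triS, Finset.mul_sum, Finset.mul_sum]
      refine Finset.sum_congr rfl fun y _ => ?_
      rw [Finset.mul_sum, Finset.mul_sum]
      refine Finset.sum_congr rfl fun z _ => ?_
      have hwa : w ≠ a := fun h => ha (h ▸ hw)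
      have hwb : w ≠ b := fun h => hb (h ▸ hw)
      have u : ∀ v ∈ A, Function.update (Function.update φ a y) b z v = φ v := by
        intro v hv
        have hva : v ≠ a := fun h => ha (h ▸ hv)
        have hvb : v ≠ b := fun h => hb (h ▸ hv)
        simp [hva, hvb]
      have k1 : L.map (triInd G (Function.update (Function.update φ a y) b z)) =
          L.map (triInd G φ) := by
        refine List.map_congr_left fun t ht => ?_
        obtain ⟨m1, m2, m3⟩ := hmem t ht
        simp only [triInd, u _ m1, u _ m2, u _ m3]
      have k2 : ∏ v ∈ A, g v (Function.update (Function.update φ a y) b z v) =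
          ∏ v ∈ A, g v (φ v) := Finset.prod_congr rfl fun v hv => by rw [u v hv]
      rw [Finset.prod_insert (by simp [hab, ha]), Finset.prod_insert hb, k2, List.map_cons,
        List.prod_cons, k1]
      simp only [triInd, u w hw]
      simp [hab]
      split_ifs <;> ring
    rw [e1] at h1
    simp only [e2] at h1
    rw [← e3] at h1
    have h2 := triS_GM G hN (g a) (g b) (hg a) (hg b)
    rw [Finset.prod_insert (by simp [hab, ha]), Finset.prod_insert hb, List.length_cons]
    have hP : 0 ≤ ∏ v ∈ A, triGM G (g v) :=
      Finset.prod_nonneg fun v _ => triGM_nonneg G _ (hg v)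
    have hC : 0 ≤ ((triSet G).card : ℝ) ^ L.length * (Fintype.card V : ℝ) ^ (Fintype.card α) *
        ∏ v ∈ A, triGM G (g v) := mul_nonneg (by positivity) hP
    have h3 := mul_le_mul_of_nonneg_left h2 hC
    have h4 := mul_le_mul_of_nonneg_left h1 (Nat.cast_nonneg (α := ℝ) (Fintype.card V))
    calc _ = ((triSet G).card : ℝ) ^ L.length * (Fintype.card V : ℝ) ^ (Fintype.card α) *
        (∏ v ∈ A, triGM G (g v)) * (((triSet G).card : ℝ) *
          (triGM G (g a) * triGM G (g b))) := by ring
      _ ≤ _ := h3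
      _ = _ := by ring
      _ ≤ _ := h4
      _ = _ := by ring

/-- The counting bound. -/
theorem TriTree.count (G : SimpleGraph V) (H : SimpleGraph α) {L : List (α × α × α)}
    (h : TriTree L Finset.univ)
    (hH : ∀ u v, H.Adj u v → ∃ t ∈ L, (u = t.1 ∨ u = t.2.1 ∨ u = t.2.2) ∧
      (v = t.1 ∨ v = t.2.1 ∨ v = t.2.2)) (hL : L ≠ []) :
    ((triSet G).card : ℝ) ^ L.length * (Fintype.card V : ℝ) ^ (Fintype.card α) ≤
      (Fintype.card V : ℝ) ^ (3 * L.length) * (Nat.card (H →g G) : ℝ) := by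
  rcases Nat.eq_zero_or_pos (triSet G).card with h0 | hN
  · rw [h0, Nat.cast_zero, zero_pow (by simpa using hL), zero_mul]
    positivity
  have h1 := h.main G hN (fun _ _ => 1) (by simp)
  have e : triGM G (fun _ => (1 : ℝ)) = 1 := by simp [triGM]
  simp only [e, Finset.prod_const_one, mul_one] at h1
  refine h1.trans (mul_le_mul_of_nonneg_left ?_ (by positivity))
  classical
  have hi : ∀ φ : α → V, (L.map (triInd G φ)).prod =
      if ∀ t ∈ L, (φ t.1, φ t.2.1, φ t.2.2) ∈ triSet G then 1 else 0 := by
    intro φ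
    clear * -
    induction L with
    | nil => simp
    | cons t L ih =>
      rw [List.map_cons, List.prod_cons, ih]
      simp only [triInd, List.forall_mem_cons, ite_and]
      split_ifs <;> simp
  simp only [hi]
  rw [Finset.sum_boole, Nat.cast_le, ← Fintype.card_subtype, ← Nat.card_eq_fintype_card]
  refine Nat.card_le_card_of_injective (fun φ => (⟨φ.1, ?_⟩ : H →g G)) ?_
  · intro u v huv
    obtain ⟨t, ht, hu, hv⟩ := hH u v huv
    have := φ.2 t ht
    rw [mem_triSet] at this
    obtain ⟨a1, a2, a3⟩ := this
    have hne := huv.ne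
    rcases hu with rfl | rfl | rfl <;> rcases hv with rfl | rfl | rfl <;>
      first
        | exact absurd rfl hne
        | assumption
        | (apply SimpleGraph.Adj.symm; assumption)
  · intro φ ψ hφ
    exact Subtype.ext (congrArg (fun f : H →g G => (f : α → V)) hφ)

theorem sum_sq_form (s : V → V → ℝ) (hs : ∀ x y, s x y = s y x) :
    0 ≤ ∑ x, ∑ y, ∑ z, (s x y * s y z + s y z * s x z + s x z * s x y) := by
  have h1 : 0 ≤ ∑ x, ∑ y, ∑ z, s x z * s x y := by
    refine Finset.sum_nonneg fun x _ => ?_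
    have : ∑ y, ∑ z, s x z * s x y = (∑ y, s x y) * ∑ z, s x z := by
      rw [Finset.sum_mul_sum]
      refine Finset.sum_congr rfl fun y _ => Finset.sum_congr rfl fun z _ => mul_comm _ _
    rw [this]
    exact mul_self_nonneg _
  have h2 : ∑ x, ∑ y, ∑ z, s x y * s y z = ∑ x, ∑ y, ∑ z, s x z * s x y := by
    rw [Finset.sum_comm]
    refine Finset.sum_congr rfl fun x _ => Finset.sum_congr rfl fun y _ =>
      Finset.sum_congr rfl fun z _ => ?_
    rw [hs y x, mul_comm]
  have h3 : ∑ x, ∑ y, ∑ z, s y z * s x z = ∑ x, ∑ y, ∑ z, s x z * s x y := by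
    rw [← h2]
    refine Finset.sum_congr rfl fun x _ => ?_
    rw [Finset.sum_comm]
    refine Finset.sum_congr rfl fun y _ => Finset.sum_congr rfl fun z _ => ?_
    rw [hs z y, mul_comm]
  simp only [Finset.sum_add_distrib]
  rw [h2, h3]
  linarith

theorem goodman (R : SimpleGraph V) :
    (Fintype.card V : ℝ) ^ 3 / 4 - 3 * (Fintype.card V : ℝ) ^ 2 ≤
      ((triSet R).card : ℝ) + ((triSet Rᶜ).card : ℝ) := by
  classical
  have hc : ∀ G : SimpleGraph V, ((triSet G).card : ℝ) =
      ∑ x, ∑ y, ∑ z, if (x, y, z) ∈ triSet G then (1 : ℝ) else 0 := by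
    intro G
    rw [← sum_triSet G (fun _ _ _ => 1)]
    simp
  let s : V → V → ℝ := fun x y => if x = y then 0 else if R.Adj x y then 1 else -1
  have hs : ∀ x y, s x y = s y x := by
    intro x y
    simp only [s, R.adj_comm x y, eq_comm (a := x)]
  have hq := sum_sq_form s hs
  have key : ∀ x y z : V, 1 / 4 + 1 / 4 * (s x y * s y z + s y z * s x z + s x z * s x y) -
      ((if x = y then 1 else 0) + (if y = z then 1 else 0) + (if x = z then 1 else 0)) ≤
      (if (x, y, z) ∈ triSet R then (1 : ℝ) else 0) +
        (if (x, y, z) ∈ triSet Rᶜ then (1 : ℝ) else 0) := by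
    intro x y z
    simp only [mem_triSet, s, SimpleGraph.compl_adj]
    by_cases hxy : x = y <;> by_cases hyz : y = z <;> by_cases hxz : x = z <;>
      by_cases r1 : R.Adj x y <;> by_cases r2 : R.Adj y z <;> by_cases r3 : R.Adj x z <;>
      simp [*] <;> (try split_ifs) <;> norm_num
  have hsum := Finset.sum_le_sum fun x (_ : x ∈ Finset.univ) =>
    Finset.sum_le_sum fun y (_ : y ∈ Finset.univ) =>
      Finset.sum_le_sum fun z (_ : z ∈ Finset.univ) => key x y z
  simp only [Finset.sum_add_distrib, Finset.sum_sub_distrib, ← Finset.mul_sum] at hsum hq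
  rw [← hc R, ← hc Rᶜ] at hsum
  simp at hsum
  nlinarith
end

theorem bag_struct {α : Type*} [DecidableEq α] (H : SimpleGraph α) (B : Finset α)
    (h : Nonempty (H.induce (B : Set α) ≃g (⊤ : SimpleGraph (Fin 3)))) :
    B.card = 3 ∧ ∀ u ∈ B, ∀ v ∈ B, u ≠ v → H.Adj u v := by
  obtain ⟨e⟩ := h
  constructor
  · have := Nat.card_congr e.toEquiv
    simpa using this
  · intro u hu v hv huv
    have : (H.induce (B : Set α)).Adj ⟨u, hu⟩ ⟨v, hv⟩ := by
      rw [← e.map_adj_iff, SimpleGraph.top_adj]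
      intro h
      have := e.injective h
      exact huv (congrArg Subtype.val this)
    simpa using this

set_option maxHeartbeats 1000000 in
theorem exists_triTree {α : Type*} [Fintype α] [DecidableEq α] (H : SimpleGraph α)
    (ι : Type) [Fintype ι] (bag : ι → Finset α) (T : SimpleGraph ι)
    (hdec : IsJDecomp H (⊤ : SimpleGraph (Fin 3)) bag T)
    (hint : ∀ X Y : ι, T.Adj X Y → (bag X ∩ bag Y).card = 1) :
    ∃ L : List (α × α × α), TriTree L Finset.univ ∧ L ≠ [] ∧
      (∀ t ∈ L, H.Adj t.1 t.2.1 ∧ H.Adj t.1 t.2.2 ∧ H.Adj t.2.1 t.2.2) ∧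
      (∀ u v, H.Adj u v → ∃ t ∈ L, (u = t.1 ∨ u = t.2.1 ∨ u = t.2.2) ∧
      (v = t.1 ∨ v = t.2.1 ∨ v = t.2.2)) := by
  classical
  obtain ⟨⟨hT, hcov, hedge, hpath⟩, hiso, -⟩ := hdec
  have hB := fun X => bag_struct H (bag X) (hiso X)
  have hne : Nonempty ι := hT.1.nonempty
  have key : ∀ k : ℕ, k + 1 ≤ Fintype.card ι → ∃ S : Finset ι, S.card = k + 1 ∧
      (∀ Y ∈ S, ∀ Z ∈ S, ∃ p : T.Walk Y Z, p.IsPath ∧ ∀ W ∈ p.support, W ∈ S) ∧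
      ∃ L : List (α × α × α), TriTree L (S.biUnion bag) ∧ L ≠ [] ∧
        (∀ t ∈ L, H.Adj t.1 t.2.1 ∧ H.Adj t.1 t.2.2 ∧ H.Adj t.2.1 t.2.2) ∧
        ∀ X ∈ S, ∃ t ∈ L, bag X = {t.1, t.2.1, t.2.2} := by
    intro k
    induction k with
    | zero =>
      intro _
      obtain ⟨X⟩ := hne
      obtain ⟨hc, hadj⟩ := hB X
      obtain ⟨a, b, c, h1, h2, h3, hX⟩ := Finset.card_eq_three.1 hc
      refine ⟨{X}, by simp, ?_, [(a, b, c)], ?_, by simp, ?_, ?_⟩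
      · intro Y hY Z hZ
        rw [Finset.mem_singleton] at hY hZ
        subst hY
        subst hZ
        exact ⟨SimpleGraph.Walk.nil, by simp, by simp⟩
      · rw [Finset.singleton_biUnion, hX]
        exact TriTree.base a b c h1 h2 h3
      · intro t ht
        rw [List.mem_singleton] at ht
        subst ht
        refine ⟨hadj _ ?_ _ ?_ h1, hadj _ ?_ _ ?_ h2, hadj _ ?_ _ ?_ h3⟩ <;> simp [hX]
      · intro Y hY
        rw [Finset.mem_singleton] at hY
        subst hY
        exact ⟨(a, b, c), by simp, hX⟩
    | succ k ih =>
      intro hk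
      obtain ⟨S, hS, hconn, L, hL, hLne, hLadj, hLbag⟩ := ih (by omega)
      obtain ⟨Y0, hY0⟩ : S.Nonempty := Finset.card_pos.1 (by omega)
      obtain ⟨X0, hX0⟩ : ∃ X, X ∉ S := by
        by_contra! hall
        have : S = Finset.univ := Finset.eq_univ_iff_forall.2 hall
        rw [this, Finset.card_univ] at hS
        omega
      obtain ⟨p⟩ := hT.1.preconnected Y0 X0
      obtain ⟨d, -, hd1, hd2⟩ := p.exists_boundary_dart (S : Set ι) hY0 hX0
      obtain ⟨⟨Y, X⟩, hYX⟩ := d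
      simp only [Finset.mem_coe] at hd1 hd2
      have hXp : ∀ Z ∈ S, ∃ p : T.Walk X Z, p.IsPath ∧ Y ∈ p.support ∧
          ∀ W ∈ p.support, W ∈ insert X S := by
        intro Z hZ
        obtain ⟨q, hq, hqs⟩ := hconn Y hd1 Z hZ
        refine ⟨SimpleGraph.Walk.cons (SimpleGraph.Adj.symm hYX) q, ?_, ?_, ?_⟩
        · rw [SimpleGraph.Walk.cons_isPath_iff]
          exact ⟨hq, fun h => hd2 (hqs _ h)⟩
        · simp
        · intro W hW
          rw [SimpleGraph.Walk.support_cons, List.mem_cons] at hW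
          rcases hW with rfl | hW
          · simp
          · simp [hqs W hW]
      have hI := hint X Y (SimpleGraph.Adj.symm hYX)
      obtain ⟨w, hw⟩ := Finset.card_eq_one.1 hI
      obtain ⟨hc, hadj⟩ := hB X
      have hwX : w ∈ bag X ∧ w ∈ bag Y := by
        rw [← Finset.mem_inter, hw]; simp
      have hnew : ∀ v ∈ bag X, v ∈ S.biUnion bag → v = w := by
        intro v hv hvS
        obtain ⟨Z, hZ, hvZ⟩ := Finset.mem_biUnion.1 hvS
        obtain ⟨q, hq, hYq, -⟩ := hXp Z hZ
        have hvY := hpath X Z Y q hq hYq (Finset.mem_inter.2 ⟨hv, hvZ⟩)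
        have : v ∈ bag X ∩ bag Y := Finset.mem_inter.2 ⟨hv, hvY⟩
        rw [hw] at this
        simpa using this
      have hc2 : ((bag X).erase w).card = 2 := by
        rw [Finset.card_erase_of_mem hwX.1, hc]
      obtain ⟨a, b, hab, he⟩ := Finset.card_eq_two.1 hc2
      have hXe : bag X = {w, a, b} := by
        rw [← Finset.insert_erase hwX.1, he]
      have haw : a ≠ w ∧ a ∈ bag X := by
        rw [← Finset.mem_erase, he]; simp
      have hbw : b ≠ w ∧ b ∈ bag X := by
        rw [← Finset.mem_erase, he]; simp
      refine ⟨insert X S, by rw [Finset.card_insert_of_notMem hd2, hS], ?_,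
        (w, a, b) :: L, ?_, by simp, ?_, ?_⟩
      · intro P hP Q hQ
        rw [Finset.mem_insert] at hP hQ
        rcases hP with rfl | hP
        · rcases hQ with rfl | hQ
          · exact ⟨SimpleGraph.Walk.nil, by simp, by simp⟩
          · obtain ⟨q, h1, -, h2⟩ := hXp Q hQ
            exact ⟨q, h1, h2⟩
        · rcases hQ with rfl | hQ
          · obtain ⟨q, h1, -, h2⟩ := hXp P hP
            exact ⟨q.reverse, h1.reverse, by simpa using h2⟩
          · obtain ⟨q, h1, h2⟩ := hconn P hP Q hQ
            exact ⟨q, h1, fun W hW => Finset.mem_insert_of_mem (h2 W hW)⟩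
      · have hwS : w ∈ S.biUnion bag := Finset.mem_biUnion.2 ⟨Y, hd1, hwX.2⟩
        have : (insert X S).biUnion bag = insert a (insert b (S.biUnion bag)) := by
          rw [Finset.biUnion_insert, hXe]
          ext v
          simp only [Finset.mem_union, Finset.mem_insert, Finset.mem_singleton]
          constructor
          · rintro ((h | h | h) | h)
            · exact Or.inr (Or.inr (h ▸ hwS))
            · exact Or.inl h
            · exact Or.inr (Or.inl h)
            · exact Or.inr (Or.inr h)
          · rintro (h | h | h)
            · exact Or.inl (Or.inr (Or.inl h))
            · exact Or.inl (Or.inr (Or.inr h))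
            · exact Or.inr h
        rw [this]
        exact TriTree.step L _ w a b hL hwS (fun h => haw.1 (hnew a haw.2 h))
          (fun h => hbw.1 (hnew b hbw.2 h)) hab
      · intro t ht
        rcases List.mem_cons.1 ht with rfl | ht
        · exact ⟨hadj _ hwX.1 _ haw.2 haw.1.symm, hadj _ hwX.1 _ hbw.2 hbw.1.symm,
            hadj _ haw.2 _ hbw.2 hab⟩
        · exact hLadj t ht
      · intro Z hZ
        rcases Finset.mem_insert.1 hZ with rfl | hZ
        · exact ⟨(w, a, b), by simp, hXe⟩
        · obtain ⟨t, ht, h⟩ := hLbag Z hZ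
          exact ⟨t, List.mem_cons_of_mem _ ht, h⟩
  have hpos : 0 < Fintype.card ι := Fintype.card_pos
  obtain ⟨S, hS, -, L, hL, hLne, hLadj, hLbag⟩ := key (Fintype.card ι - 1) (by omega)
  have hSu : S = Finset.univ := by
    rw [← Finset.card_eq_iff_eq_univ]; omega
  subst hSu
  have hA : Finset.univ.biUnion bag = Finset.univ := by
    rw [Finset.eq_univ_iff_forall]
    intro v
    obtain ⟨X, hX⟩ := hcov v
    exact Finset.mem_biUnion.2 ⟨X, Finset.mem_univ _, hX⟩
  rw [hA] at hL
  refine ⟨L, hL, hLne, hLadj, ?_⟩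
  intro u v huv
  obtain ⟨X, hu, hv⟩ := hedge u v huv
  obtain ⟨t, ht, hX⟩ := hLbag X (Finset.mem_univ _)
  rw [hX] at hu hv
  exact ⟨t, ht, by simpa using hu, by simpa using hv⟩

theorem stmt18 {α : Type*} [Fintype α] [DecidableEq α] (H : SimpleGraph α)
    (ι : Type) [Fintype ι] (bag : ι → Finset α) (T : SimpleGraph ι)
    (hdec : IsJDecomp H (⊤ : SimpleGraph (Fin 3)) bag T)
    (hint : ∀ X Y : ι, T.Adj X Y → (bag X ∩ bag Y).card = 1)
    (ε : ℝ) (hε : 0 < ε) :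
    ∃ n₀ : ℕ, ∀ n : ℕ, n₀ ≤ n →
      -- a red/blue colouring of the edges of Kₙ is given by the graph R of red edges;
      -- the blue edges form its complement Rᶜ
      ∀ R : SimpleGraph (Fin n),
        ((Nat.card (H →g R) + Nat.card (H →g Rᶜ) : ℕ) : ℝ) ≥
          ((2 : ℝ) ^ (1 - (edgeCount H : ℤ)) - ε) * (n : ℝ) ^ (Fintype.card α) := by
  obtain ⟨L, hL, hLne, hLadj, hLH⟩ := exists_triTree H ι bag T hdec hint
  set m := L.length with hm
  have hE : 3 * m ≤ edgeCount H := by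
    obtain ⟨E, h1, h2, -⟩ := hL.edges H hLadj
    rw [edgeCount, ← h1, ← Nat.card_eq_finsetCard E]
    exact Nat.card_le_card_of_injective (fun e : E => (⟨e.1, h2 e.1 e.2⟩ : H.edgeSet))
      (fun e f h => Subtype.ext (congrArg (fun x : H.edgeSet => (x : Sym2 α)) h))
  have hpow : (2 : ℝ) ^ (1 - (edgeCount H : ℤ)) ≤ 2 * (1 / 8 : ℝ) ^ m := by
    calc (2 : ℝ) ^ (1 - (edgeCount H : ℤ)) ≤ (2 : ℝ) ^ (1 - ((3 * m : ℕ) : ℤ)) := by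
          apply zpow_le_zpow_right₀ (by norm_num)
          omega
      _ = 2 * (1 / 8 : ℝ) ^ m := by
          rw [zpow_sub₀ (by norm_num), zpow_natCast, pow_mul, zpow_one, one_div, inv_pow]
          norm_num
          rfl
  have hlim : Filter.Tendsto (fun n : ℕ => 2 * (1 / 8 - 3 / 2 * (1 / (n : ℝ))) ^ m) Filter.atTop
      (nhds (2 * (1 / 8 - 3 / 2 * 0) ^ m)) :=
    ((((tendsto_one_div_atTop_nhds_zero_nat (𝕜 := ℝ)).const_mul _).const_sub _).pow m).const_mul _
  have hev := hlim.eventually_const_lt (u := 2 * (1 / 8 : ℝ) ^ m - ε) (by simp; linarith)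
  obtain ⟨n₁, hn₁⟩ := Filter.eventually_atTop.1 hev
  refine ⟨max n₁ 12, fun n hn R => ?_⟩
  have hn1 := hn₁ n (le_trans (le_max_left _ _) hn)
  have hn2 : (12 : ℝ) ≤ n := by exact_mod_cast le_trans (le_max_right _ _) hn
  have hn0 : (0 : ℝ) < n := by linarith
  have c1 := hL.count R H hLH hLne
  have c2 := hL.count Rᶜ H hLH hLne
  have hg := goodman R
  simp only [Fintype.card_fin, ← hm] at c1 c2 hg
  set a : ℝ := ((triSet R).card : ℝ) / (n : ℝ) ^ 3 with ha
  set b : ℝ := ((triSet Rᶜ).card : ℝ) / (n : ℝ) ^ 3 with hb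
  have ha0 : 0 ≤ a := by positivity
  have hb0 : 0 ≤ b := by positivity
  have c1' : a ^ m * (n : ℝ) ^ Fintype.card α ≤ Nat.card (H →g R) := by
    rw [ha, div_pow, ← pow_mul, div_mul_eq_mul_div, div_le_iff₀ (by positivity)]
    linarith
  have c2' : b ^ m * (n : ℝ) ^ Fintype.card α ≤ Nat.card (H →g Rᶜ) := by
    rw [hb, div_pow, ← pow_mul, div_mul_eq_mul_div, div_le_iff₀ (by positivity)]
    linarith
  have hab : 1 / 8 - 3 / 2 * (1 / (n : ℝ)) ≤ (a + b) / 2 := by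
    have : (n : ℝ) ^ 3 / 4 - 3 * (n : ℝ) ^ 2 = (n : ℝ) ^ 3 * (1 / 4 - 3 * (1 / (n : ℝ))) := by
      field_simp
    rw [this] at hg
    have h2 : 1 / 4 - 3 * (1 / (n : ℝ)) ≤ a + b := by
      rw [ha, hb, ← add_div, le_div_iff₀ (by positivity)]
      linarith
    linarith
  have h0 : 0 ≤ 1 / 8 - 3 / 2 * (1 / (n : ℝ)) := by
    have : 1 / (n : ℝ) ≤ 1 / 12 := one_div_le_one_div_of_le (by norm_num) hn2
    linarith
  have hconv : 2 * ((a + b) / 2) ^ m ≤ a ^ m + b ^ m := by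
    have := (convexOn_pow (𝕜 := ℝ) m).2 (Set.mem_Ici.2 ha0) (Set.mem_Ici.2 hb0)
      (show (0 : ℝ) ≤ 1 / 2 by norm_num) (show (0 : ℝ) ≤ 1 / 2 by norm_num) (by norm_num)
    simp only [smul_eq_mul] at this
    have e : 1 / 2 * a + 1 / 2 * b = (a + b) / 2 := by ring
    rw [e] at this
    linarith
  have hmono := pow_le_pow_left₀ h0 hab m
  have hfin : (2 : ℝ) ^ (1 - (edgeCount H : ℤ)) - ε ≤ a ^ m + b ^ m := by linarith
  have := mul_le_mul_of_nonneg_right hfin (pow_nonneg hn0.le (Fintype.card α))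
  push_cast
  linarith
end
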